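/- Let N and s be integers with 1 ≤ s ≤ N - 2 and set n = N - s. For a subset S ⊆ {0,...,N} with |S| = n + 1, let x_0^S > x_1^S > ... > x_n^S denote the points cos(kπ/N), k ∈ S, in decreasing order, and let Λ(S) = sup { (Σ_{i=0}^n 1/|x - x_i^S|) / |Σ_{j=0}^n (-1)^j/(x - x_j^S)| : x_n^S < x < x_0^S, x ≠ x_i^S for all i }. Then for every such subset S there exists an integer k̄ with 0 ≤ k̄ ≤ N - s - 1 such that Λ(S) ≤ Λ(S_{k̄}), where S_{k̄} = {0,...,k̄} ∪ {k̄+s+1,...,N}; that is, the Lebesgue constant of Berrut's interpolant over (n+1)-element subsets of the Chebyshev points of the second kind is maximized when the s removed points are consecutive. -/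

import Mathlib

open Finset Real

/-- The `i`-th node (in decreasing order) among the Chebyshev points of the second
kind `cos(kπ/N)` with indices in `S`: sorting the indices of `S` increasingly gives
the points in decreasing order since `cos` is decreasing on `[0, π]`. -/
noncomputable def chebNode (N : ℕ) (S : Finset ℕ) (i : ℕ) : ℝ :=
  Real.cos (((S.sort (· ≤ ·)).getD i 0 : ℕ) * Real.pi / N)

/-- The Lebesgue constant of Berrut's rational interpolant at the nodes
`cos(kπ/N), k ∈ S`, taken as the supremum of the Lebesgue function over the
open interval between the extreme nodes. -/
noncomputable def berrutLebesgueConst (N n : ℕ) (S : Finset ℕ) : ℝ :=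
  sSup {L : ℝ | ∃ x : ℝ, chebNode N S n < x ∧ x < chebNode N S 0 ∧
    (∀ i ≤ n, x ≠ chebNode N S i) ∧
    L = (∑ i ∈ Finset.range (n + 1), 1 / |x - chebNode N S i|) /
        |∑ j ∈ Finset.range (n + 1), (-1 : ℝ) ^ j / (x - chebNode N S j)|}

namespace Berrut

open scoped Topology

section

/-- If the ratios `g i / f i` increase and the multipliers `l 0 < k 0 ≤ l 1 < k 1 ≤ ⋯` increase,
a nonpositive total `∑ (f i - ρ g i)` forces every multiplied tail to be negative. -/
theorem tail_neg_of_sum_nonpos {m : ℕ} {ρ : ℝ} (hρ : 0 < ρ) {f g l k : ℕ → ℝ}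
    (hf : ∀ i < m, 0 < f i) (hg : ∀ i < m, 0 < g i)
    (hfg : ∀ i j, i < j → j < m → g i * f j ≤ g j * f i)
    (hl : ∀ i < m, 0 ≤ l i) (hlk : ∀ i < m, l i < k i) (hkl : ∀ i j, i < j → j < m → k i ≤ l j)
    (hsum : ∑ i ∈ range m, (f i - ρ * g i) ≤ 0) {j : ℕ} (hj : j < m) :
    ∑ i ∈ Ico j m, (l i * f i - ρ * (k i * g i)) < 0 := by
  classical
  have hex : ∃ t, t < m ∧ f t - ρ * g t ≤ 0 := by
    by_contra! h
    have : 0 < ∑ i ∈ range m, (f i - ρ * g i) :=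
      Finset.sum_pos (fun i hi => h i (mem_range.1 hi)) ⟨j, mem_range.2 hj⟩
    linarith
  set t := Nat.find hex with ht
  obtain ⟨htm, hte⟩ := Nat.find_spec hex
  have hlt : ∀ i < t, 0 < f i - ρ * g i := by
    intro i hi
    have := Nat.find_min hex hi
    by_contra h
    exact this ⟨hi.trans htm, not_lt.1 h⟩
  have hge : ∀ i, t ≤ i → i < m → f i - ρ * g i ≤ 0 := by
    intro i hti him
    rcases hti.eq_or_lt with rfl | hti
    · exact hte
    · have h1 := hfg t i hti him
      have h2 := hf t htm
      have h3 := hf i him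
      have h4 : f t ≤ ρ * g t := by linarith
      have h5 : f t * f i ≤ ρ * (g i * f t) := by
        calc f t * f i ≤ ρ * g t * f i := by gcongr
          _ = ρ * (g t * f i) := by ring
          _ ≤ _ := by gcongr
      have : f i ≤ ρ * g i := by
        by_contra! h
        nlinarith
      linarith
  have htail : ∑ i ∈ Ico j m, (f i - ρ * g i) ≤ 0 := by
    rcases le_total t j with h | h
    · exact Finset.sum_nonpos fun i hi => hge i (h.trans (mem_Ico.1 hi).1) (mem_Ico.1 hi).2
    · have h1 := Finset.sum_range_add_sum_Ico (fun i => f i - ρ * g i) hj.le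
      have h2 : 0 ≤ ∑ i ∈ range j, (f i - ρ * g i) :=
        Finset.sum_nonneg fun i hi => (hlt i ((mem_range.1 hi).trans_le h)).le
      linarith
  have hmul : ∑ i ∈ Ico j m, (l i * f i - ρ * (k i * g i)) <
      ∑ i ∈ Ico j m, l t * (f i - ρ * g i) := by
    apply Finset.sum_lt_sum_of_nonempty ⟨j, by simp [hj]⟩
    intro i hi
    have him := (mem_Ico.1 hi).2
    have h1 := hf i him
    have h2 := hg i him
    have h3 := hlk i him
    have h6 : 0 < ρ * g i := by positivity
    rcases lt_or_ge i t with h | h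
    · have h4 := hkl i t h htm
      have h5 := hlt i h
      nlinarith
    · have h5 := hge i h him
      have h4 : l t ≤ l i := by
        rcases h.eq_or_lt with h | h
        · rw [← h]
        · exact (hlk t htm).le.trans (hkl t i h him)
      nlinarith
  rw [← Finset.mul_sum] at hmul
  exact hmul.trans_le (mul_nonpos_of_nonneg_of_nonpos (hl t htm) htail)

/-- Nonpositive tails stay nonpositive in total after applying a nonnegative nondecreasing
multiplier. -/
theorem sum_mul_nonpos_of_tails_nonpos {m : ℕ} {e l : ℕ → ℝ}
    (hl : ∀ i < m, 0 ≤ l i) (hmono : ∀ i, i + 1 < m → l i ≤ l (i + 1))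
    (htail : ∀ j < m, ∑ i ∈ Ico j m, e i ≤ 0) : ∑ i ∈ range m, l i * e i ≤ 0 := by
  have key : ∀ d j, j + d + 1 = m →
      ∑ i ∈ Ico j m, l i * e i ≤ l j * ∑ i ∈ Ico j m, e i := by
    intro d
    induction d with
    | zero =>
      intro j hj
      have : m = j + 1 := by omega
      subst this
      simp
    | succ d ih =>
      intro j hj
      have h1 := ih (j + 1) (by omega)
      have hjm : j < m := by omega
      rw [Finset.sum_eq_sum_Ico_succ_bot hjm, Finset.sum_eq_sum_Ico_succ_bot hjm]
      have h2 := hmono j (by omega)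
      have h3 := htail (j + 1) (by omega)
      nlinarith
  rcases Nat.eq_zero_or_pos m with rfl | hm
  · simp
  · have h1 := key (m - 1) 0 (by omega)
    have h2 := htail 0 hm
    rw [Finset.range_eq_Ico]
    exact h1.trans (mul_nonpos_of_nonneg_of_nonpos (hl 0 hm) h2)

/-- A positive function with nondecreasing logarithmic derivative `g` has nondecreasing
ratios over a fixed step. -/
theorem ratio_mono {w g : ℝ → ℝ} {B : ℝ} (hw : ∀ t ∈ Set.Icc 0 B, 0 < w t)
    (hd : ∀ t ∈ Set.Icc 0 B, HasDerivAt w (g t * w t) t)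
    (hg : ∀ s t, 0 ≤ s → s ≤ t → t ≤ B → g s ≤ g t)
    {α α' h : ℝ} (h0 : 0 ≤ α) (hαα : α ≤ α') (hh : 0 ≤ h) (hB : α' + h ≤ B) :
    w (α + h) * w α' ≤ w (α' + h) * w α := by
  have hmono : MonotoneOn (fun t => log (w (t + h)) - log (w t)) (Set.Icc α α') := by
    have hder : ∀ t ∈ Set.Icc α α', HasDerivAt (fun t => log (w (t + h)) - log (w t))
        (g (t + h) - g t) t := by
      intro t ht
      have m1 : t ∈ Set.Icc 0 B := ⟨by linarith [ht.1], by linarith [ht.2]⟩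
      have m2 : t + h ∈ Set.Icc 0 B := ⟨by linarith [ht.1], by linarith [ht.2]⟩
      have p1 := hw _ m1
      have p2 := hw _ m2
      have d1 := (hd _ m1).log p1.ne'
      have d2 : HasDerivAt (fun t => w (t + h)) (g (t + h) * w (t + h)) t :=
        (hd _ m2).comp_add_const t h
      have d3 := d2.log p2.ne'
      refine (d3.sub d1).congr_deriv ?_
      rw [mul_div_cancel_right₀ _ p2.ne', mul_div_cancel_right₀ _ p1.ne']
    apply monotoneOn_of_deriv_nonneg (convex_Icc _ _)
    · exact fun t ht => (hder t ht).continuousAt.continuousWithinAt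
    · rw [interior_Icc]
      exact fun t ht => (hder t ⟨ht.1.le, ht.2.le⟩).differentiableAt.differentiableWithinAt
    · rw [interior_Icc]
      intro t ht
      rw [(hder t ⟨ht.1.le, ht.2.le⟩).deriv]
      have := hg t (t + h) (by linarith [ht.1]) (by linarith) (by linarith [ht.2])
      linarith
  have h1 := hmono ⟨le_rfl, hαα⟩ ⟨hαα, le_rfl⟩ hαα
  have p1 := hw α ⟨h0, by linarith⟩
  have p2 := hw α' ⟨by linarith, by linarith⟩
  have p3 := hw (α + h) ⟨by linarith, by linarith⟩
  have p4 := hw (α' + h) ⟨by linarith, by linarith⟩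
  simp only at h1
  rw [← log_le_log_iff (by positivity) (by positivity), log_mul p3.ne' p2.ne',
    log_mul p4.ne' p1.ne']
  linarith

/-- The weight `1 / (cos α - x)` of a node at angle `α`. -/
noncomputable def wU (x α : ℝ) : ℝ := (cos α - x)⁻¹
/-- The weight `(1 - x cos α) / (cos α - x) ^ 2`. -/
noncomputable def wT (x α : ℝ) : ℝ := (1 - x * cos α) / (cos α - x) ^ 2
/-- The weight `(1 + cos α) / (cos α - x) ^ 2`. -/
noncomputable def wC (x α : ℝ) : ℝ := (1 + cos α) / (cos α - x) ^ 2
/-- The derivative `sin α / (cos α - x) ^ 2` of `wU x`. -/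
noncomputable def wS (x α : ℝ) : ℝ := sin α / (cos α - x) ^ 2

theorem cos_gt_of_le {x B t : ℝ} (hBπ : B ≤ π) (hB : x < cos B) (h0 : 0 ≤ t) (ht : t ≤ B) :
    x < cos t :=
  hB.trans_le (cos_le_cos_of_nonneg_of_le_pi h0 hBπ ht)

theorem one_sub_mul_pos {x c : ℝ} (hx : -1 < x) (hc : x < c) (hc1 : c ≤ 1) :
    0 < 1 - x * c := by
  nlinarith

theorem le_of_deriv_nonneg {g g' : ℝ → ℝ} {B : ℝ}
    (hd : ∀ t, 0 ≤ t → t ≤ B → HasDerivAt g (g' t) t) (hg : ∀ t, 0 ≤ t → t ≤ B → 0 ≤ g' t) :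
    ∀ s t, 0 ≤ s → s ≤ t → t ≤ B → g s ≤ g t := by
  have : MonotoneOn g (Set.Icc 0 B) := by
    apply monotoneOn_of_deriv_nonneg (convex_Icc _ _)
    · exact fun t ht => (hd t ht.1 ht.2).continuousAt.continuousWithinAt
    · rw [interior_Icc]
      exact fun t ht => (hd t ht.1.le ht.2.le).differentiableAt.differentiableWithinAt
    · rw [interior_Icc]
      intro t ht
      rw [(hd t ht.1.le ht.2.le).deriv]
      exact hg t ht.1.le ht.2.le
  exact fun s t h0 hst ht => this ⟨h0, hst.trans ht⟩ ⟨h0.trans hst, ht⟩ hst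

section Visible
variable {x B : ℝ}

theorem hasDerivAt_cos_sub (x t : ℝ) : HasDerivAt (fun t => cos t - x) (-sin t) t :=
  (hasDerivAt_cos t).sub_const x

theorem hasDerivAt_wU {t : ℝ} (h : x < cos t) : HasDerivAt (wU x) (wS x t) t := by
  have h1 : cos t - x ≠ 0 := by linarith
  refine HasDerivAt.congr_deriv (f := wU x) ((hasDerivAt_cos_sub x t).inv h1) ?_
  rw [neg_neg, wS]

/-- Logarithmic derivative of `wU`. -/
theorem wU_ratio_mono (hx : -1 < x) (hBπ : B ≤ π) (hB : x < cos B)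
    {α α' h : ℝ} (h0 : 0 ≤ α) (hαα : α ≤ α') (hh : 0 ≤ h) (hBh : α' + h ≤ B) :
    wU x (α + h) * wU x α' ≤ wU x (α' + h) * wU x α := by
  have hv := fun t h0 ht => cos_gt_of_le (t := t) hBπ hB h0 ht
  refine ratio_mono (g := fun t => sin t / (cos t - x)) (B := B) ?_ ?_ ?_ h0 hαα hh hBh
  · intro t ht
    have := hv t ht.1 ht.2
    exact inv_pos.2 (by linarith)
  · intro t ht
    have h1 := hv t ht.1 ht.2
    have h2 : cos t - x ≠ 0 := by linarith
    convert hasDerivAt_wU h1 using 1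
    simp only [wU, wS]; field_simp
  · refine le_of_deriv_nonneg (g' := fun t => (1 - x * cos t) / (cos t - x) ^ 2) ?_ ?_
    · intro t h0 ht
      have h1 := hv t h0 ht
      have h2 : cos t - x ≠ 0 := by linarith
      refine ((hasDerivAt_sin t).div (hasDerivAt_cos_sub x t) h2).congr_deriv ?_
      congr 1
      linear_combination sin_sq_add_cos_sq t
    · intro t h0 ht
      have h1 := hv t h0 ht
      have := one_sub_mul_pos hx h1 (cos_le_one t)
      positivity

theorem wT_ratio_mono (hx : -1 < x) (hBπ : B ≤ π) (hB : x < cos B)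
    {α α' h : ℝ} (h0 : 0 ≤ α) (hαα : α ≤ α') (hh : 0 ≤ h) (hBh : α' + h ≤ B) :
    wT x (α + h) * wT x α' ≤ wT x (α' + h) * wT x α := by
  have hv := fun t h0 ht => cos_gt_of_le (t := t) hBπ hB h0 ht
  have hT := fun t h0 ht => one_sub_mul_pos hx (hv t h0 ht) (cos_le_one t)
  have hdT : ∀ t, HasDerivAt (fun t => 1 - x * cos t) (x * sin t) t := by
    intro t
    exact (((hasDerivAt_cos t).const_mul x).const_sub 1).congr_deriv (by ring)
  refine ratio_mono (g := fun t => x * (sin t / (1 - x * cos t)) + 2 * (sin t / (cos t - x)))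
    (B := B) ?_ ?_ ?_ h0 hαα hh hBh
  · intro t ht
    have h1 := hv t ht.1 ht.2
    have h2 := hT t ht.1 ht.2
    have h3 : 0 < cos t - x := by linarith
    unfold wT; positivity
  · intro t ht
    have h1 := hv t ht.1 ht.2
    have h2 := (hT t ht.1 ht.2).ne'
    have h3 : cos t - x ≠ 0 := by linarith
    refine HasDerivAt.congr_deriv (f := wT x)
      ((hdT t).div ((hasDerivAt_cos_sub x t).pow 2) (pow_ne_zero 2 h3)) ?_
    simp only [wT]; field_simp; push_cast; ring
  · refine le_of_deriv_nonneg (g' := fun t => x * ((cos t - x) / (1 - x * cos t) ^ 2)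
      + 2 * ((1 - x * cos t) / (cos t - x) ^ 2)) ?_ ?_
    · intro t h0 ht
      have h1 := hv t h0 ht
      have h2 : cos t - x ≠ 0 := by linarith
      have h3 := (hT t h0 ht).ne'
      refine ((((hasDerivAt_sin t).div (hdT t) h3).const_mul x).add
        (((hasDerivAt_sin t).div (hasDerivAt_cos_sub x t) h2).const_mul 2)).congr_deriv ?_
      have e1 : cos t * (1 - x * cos t) - sin t * (x * sin t) = cos t - x := by
        linear_combination -x * sin_sq_add_cos_sq t
      have e2 : cos t * (cos t - x) - sin t * -sin t = 1 - x * cos t := by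
        linear_combination sin_sq_add_cos_sq t
      rw [e1, e2]
    · intro t h0 ht
      have h1 := hv t h0 ht
      have h2 : 0 < cos t - x := by linarith
      have h3 := hT t h0 ht
      have h5 : cos t - x ≤ 1 - x * cos t := by nlinarith [cos_le_one t]
      have h4 : (cos t - x) / (1 - x * cos t) ^ 2 ≤ (1 - x * cos t) / (cos t - x) ^ 2 := by
        gcongr
      have h6 : 0 ≤ (cos t - x) / (1 - x * cos t) ^ 2 := by positivity
      nlinarith

theorem wC_ratio_mono (hx : -1 < x) (hBπ : B ≤ π) (hB : x < cos B)
    {α α' h : ℝ} (h0 : 0 ≤ α) (hαα : α ≤ α') (hh : 0 ≤ h) (hBh : α' + h ≤ B) :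
    wC x (α + h) * wC x α' ≤ wC x (α' + h) * wC x α := by
  have hv := fun t h0 ht => cos_gt_of_le (t := t) hBπ hB h0 ht
  have hdT : ∀ t, HasDerivAt (fun t => 1 + cos t) (-sin t) t := fun t =>
    (hasDerivAt_cos t).const_add 1
  refine ratio_mono (g := fun t => 2 * (sin t / (cos t - x)) - sin t / (1 + cos t))
    (B := B) ?_ ?_ ?_ h0 hαα hh hBh
  · intro t ht
    have h1 := hv t ht.1 ht.2
    have h2 : 0 < 1 + cos t := by linarith
    have h3 : 0 < cos t - x := by linarith
    unfold wC; positivity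
  · intro t ht
    have h1 := hv t ht.1 ht.2
    have h2 : 1 + cos t ≠ 0 := by linarith
    have h3 : cos t - x ≠ 0 := by linarith
    refine HasDerivAt.congr_deriv (f := wC x)
      ((hdT t).div ((hasDerivAt_cos_sub x t).pow 2) (pow_ne_zero 2 h3)) ?_
    simp only [wC]; field_simp; ring
  · refine le_of_deriv_nonneg (g' := fun t => 2 * ((1 - x * cos t) / (cos t - x) ^ 2)
      - (1 + cos t) / (1 + cos t) ^ 2) ?_ ?_
    · intro t h0 ht
      have h1 := hv t h0 ht
      have h2 : cos t - x ≠ 0 := by linarith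
      have h3 : 1 + cos t ≠ 0 := by linarith
      refine ((((hasDerivAt_sin t).div (hasDerivAt_cos_sub x t) h2).const_mul 2).sub
        ((hasDerivAt_sin t).div (hdT t) h3)).congr_deriv ?_
      have e1 : cos t * (1 + cos t) - sin t * -sin t = 1 + cos t := by
        linear_combination sin_sq_add_cos_sq t
      have e2 : cos t * (cos t - x) - sin t * -sin t = 1 - x * cos t := by
        linear_combination sin_sq_add_cos_sq t
      rw [e1, e2]
    · intro t h0 ht
      have h1 := hv t h0 ht
      have h2 : 0 < cos t - x := by linarith
      have h3 : 0 < 1 + cos t := by linarith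
      have hx1 : x < 1 := h1.trans_le (cos_le_one t)
      have h4 := one_sub_mul_pos hx h1 (cos_le_one t)
      have h5 : cos t - x ≤ 1 - x * cos t := by nlinarith [cos_le_one t]
      have h6 : (1 + cos t) / (1 + cos t) ^ 2 ≤ (1 - x * cos t) / (cos t - x) ^ 2 := by
        rw [div_le_div_iff₀ (by positivity) (by positivity)]
        have : (cos t - x) ^ 2 ≤ (1 - x * cos t) * (1 + cos t) := by nlinarith
        nlinarith
      have : 0 ≤ (1 - x * cos t) / (cos t - x) ^ 2 := by positivity
      linarith

end Visible

end

section

/-- The sum `∑ (w (a i) - ρ w (a i + h))` over the pairs with indices in `[j, m)`. -/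
noncomputable def pairSum (ρ h : ℝ) (w : ℝ → ℝ) (a : ℕ → ℝ) (j m : ℕ) : ℝ :=
  ∑ i ∈ Ico j m, (w (a i) - ρ * w (a i + h))

/-- The contribution of one side: `m` pairs and `σ` unpaired nodes at angle `0`. -/
noncomputable def sideE (ρ h x : ℝ) (σ m : ℕ) (a : ℕ → ℝ) : ℝ :=
  pairSum ρ h (wU x) a 0 m - σ * (ρ * wU x 0)

/-- Admissible positions of the pairs on one side. -/
structure Adm (h x : ℝ) (σ m : ℕ) (a : ℕ → ℝ) : Prop where
  start : ∀ i < m, σ * h ≤ a i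
  gap : ∀ i, i + 1 < m → a i + 2 * h ≤ a (i + 1)
  bound : ∀ i < m, a i + h ≤ π
  vis : ∀ i < m, x < cos (a i + h)
  lt_one : x < 1

theorem pairSum_congr {ρ h : ℝ} {v w : ℝ → ℝ} {a : ℕ → ℝ} {j m : ℕ}
    (h1 : ∀ i < m, v (a i) = w (a i)) (h2 : ∀ i < m, v (a i + h) = w (a i + h)) :
    pairSum ρ h v a j m = pairSum ρ h w a j m :=
  Finset.sum_congr rfl fun i hi => by rw [h1 i (mem_Ico.1 hi).2, h2 i (mem_Ico.1 hi).2]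

theorem pairSum_add_mul (ρ h c d : ℝ) (v w : ℝ → ℝ) (a : ℕ → ℝ) (j m : ℕ) :
    pairSum ρ h (fun t => c * v t + d * w t) a j m =
      c * pairSum ρ h v a j m + d * pairSum ρ h w a j m := by
  simp only [pairSum, Finset.mul_sum, ← Finset.sum_add_distrib]
  exact Finset.sum_congr rfl fun i _ => by ring

namespace Adm
variable {h x : ℝ} {σ m : ℕ} {a : ℕ → ℝ}

theorem gap_lt (A : Adm h x σ m a) (hh : 0 < h) : ∀ i j, i < j → j < m → a i + 2 * h ≤ a j := by
  intro i j hij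
  induction j with
  | zero => omega
  | succ j ih =>
    intro hj
    have h1 := A.gap j hj
    rcases (Nat.lt_succ_iff.1 hij).eq_or_lt with rfl | h2
    · exact h1
    · have := ih h2 (by omega)
      linarith

theorem lower (A : Adm h x σ m a) : ∀ i < m, ((σ : ℝ) + 2 * i) * h ≤ a i := by
  intro i
  induction i with
  | zero => intro h0; simpa using A.start 0 h0
  | succ i ih =>
    intro hi
    have h1 := A.gap i hi
    have h2 := ih (by omega)
    push_cast
    linarith

theorem nonneg (A : Adm h x σ m a) (hh : 0 < h) {i : ℕ} (hi : i < m) : 0 ≤ a i :=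
  le_trans (by positivity) (A.lower i hi)

theorem vis_outer (A : Adm h x σ m a) (hh : 0 < h) {i : ℕ} (hi : i < m) : x < cos (a i) :=
  (A.vis i hi).trans_le
    (cos_le_cos_of_nonneg_of_le_pi (A.nonneg hh hi) (A.bound i hi) (by linarith))

theorem lt_pi (A : Adm h x σ m a) (hx : -1 < x) {i : ℕ} (hi : i < m) : a i + h < π := by
  refine lt_of_le_of_ne (A.bound i hi) fun h1 => ?_
  have := A.vis i hi
  rw [h1, cos_pi] at this
  linarith

theorem tail_neg (A : Adm h x σ m a) (hh : 0 < h) {ρ : ℝ} (hρ : 0 < ρ) {w l v : ℝ → ℝ}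
    (hc : ∀ t, x < cos t → l t * w t = v t)
    (hw : ∀ t, 0 ≤ t → t ≤ π → x < cos t → 0 < w t)
    (hratio : ∀ {B : ℝ}, B ≤ π → x < cos B → ∀ {α α' : ℝ}, 0 ≤ α → α ≤ α' → α' + h ≤ B →
      w (α + h) * w α' ≤ w (α' + h) * w α)
    (hl : ∀ t, 0 ≤ t → t ≤ π → x < cos t → 0 ≤ l t)
    (hlt : ∀ s t, 0 ≤ s → s < t → t ≤ π → x < cos t → l s < l t)
    (hsum : pairSum ρ h w a 0 m ≤ 0) {j : ℕ} (hj : j < m) :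
    pairSum ρ h v a j m < 0 := by
  have e : pairSum ρ h (fun t => l t * w t) a j m = pairSum ρ h v a j m :=
    pairSum_congr (fun i hi => hc _ (A.vis_outer hh hi)) (fun i hi => hc _ (A.vis i hi))
  rw [← e]
  rw [pairSum, ← Finset.range_eq_Ico] at hsum
  refine tail_neg_of_sum_nonpos hρ (f := fun i => w (a i)) (g := fun i => w (a i + h))
    (l := fun i => l (a i)) (k := fun i => l (a i + h)) ?_ ?_ ?_ ?_ ?_ ?_ hsum hj
  · intro i hi
    exact hw _ (A.nonneg hh hi) (by linarith [A.bound i hi]) (A.vis_outer hh hi)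
  · intro i hi
    exact hw _ (by linarith [A.nonneg hh hi]) (A.bound i hi) (A.vis i hi)
  · intro i j hij hj
    exact hratio (A.bound j hj) (A.vis j hj) (A.nonneg hh (hij.trans hj))
      (by linarith [A.gap_lt hh i j hij hj]) le_rfl
  · intro i hi
    exact hl _ (A.nonneg hh hi) (by linarith [A.bound i hi]) (A.vis_outer hh hi)
  · intro i hi
    exact hlt _ _ (A.nonneg hh hi) (by linarith) (A.bound i hi) (A.vis i hi)
  · intro i j hij hj
    exact (hlt _ _ (by linarith [A.nonneg hh (hij.trans hj)])
      (by linarith [A.gap_lt hh i j hij hj]) (by linarith [A.bound j hj])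
      (A.vis_outer hh hj)).le

/-- If the values sum to at most `0`, then so does every tail of the `wT`-weighted sum. -/
theorem tail_wT_neg (A : Adm h x σ m a) (hh : 0 < h) (hx : -1 < x) {ρ : ℝ} (hρ : 0 < ρ)
    (hsum : pairSum ρ h (wU x) a 0 m ≤ 0) {j : ℕ} (hj : j < m) :
    pairSum ρ h (wT x) a j m < 0 := by
  have hx1 := A.lt_one
  refine A.tail_neg hh hρ (w := wU x) (l := fun t => (1 - x * cos t) / (cos t - x))
    ?_ ?_ ?_ ?_ ?_ hsum hj
  · intro t ht
    have : cos t - x ≠ 0 := by linarith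
    simp only [wU, wT]; field_simp
  · intro t _ _ ht
    exact inv_pos.2 (by linarith)
  · intro B h1 h2 α α' h3 h4 h5
    exact wU_ratio_mono hx h1 h2 h3 h4 hh.le h5
  · intro t _ _ ht
    have := one_sub_mul_pos hx ht (cos_le_one t)
    have : 0 < cos t - x := by linarith
    positivity
  · intro s t h0 hst ht hv
    have h1 := cos_lt_cos_of_nonneg_of_le_pi h0 ht hst
    have h2 : 0 < cos t - x := by linarith
    have h3 : 0 < cos s - x := by linarith
    rw [div_lt_div_iff₀ h3 h2]
    have : 0 < 1 - x ^ 2 := by nlinarith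
    nlinarith

theorem strict_of_deriv {g g' : ℝ → ℝ} {s t : ℝ} (hst : s < t)
    (hd : ∀ y, s ≤ y → y ≤ t → HasDerivAt g (g' y) y) (hg : ∀ y, s ≤ y → y ≤ t → 0 < g' y) :
    g s < g t := by
  have : StrictMonoOn g (Set.Icc s t) := by
    apply strictMonoOn_of_deriv_pos (convex_Icc _ _)
    · exact fun y hy => (hd y hy.1 hy.2).continuousAt.continuousWithinAt
    · rw [interior_Icc]
      intro y hy
      rw [(hd y hy.1.le hy.2.le).deriv]
      exact hg y hy.1.le hy.2.le
  exact this ⟨le_rfl, hst.le⟩ ⟨hst.le, le_rfl⟩ hst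

theorem tail_wS_neg_of_wT (A : Adm h x σ m a) (hh : 0 < h) (hx : -1 < x) {ρ : ℝ} (hρ : 0 < ρ)
    (hsum : pairSum ρ h (wT x) a 0 m ≤ 0) {j : ℕ} (hj : j < m) :
    pairSum ρ h (wS x) a j m < 0 := by
  have hx1 := A.lt_one
  refine A.tail_neg hh hρ (w := wT x) (l := fun t => sin t / (1 - x * cos t))
    ?_ ?_ ?_ ?_ ?_ hsum hj
  · intro t ht
    have : cos t - x ≠ 0 := by linarith
    have := (one_sub_mul_pos hx ht (cos_le_one t)).ne'
    simp only [wT, wS]; field_simp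
  · intro t _ _ ht
    have := one_sub_mul_pos hx ht (cos_le_one t)
    have : 0 < cos t - x := by linarith
    unfold wT; positivity
  · intro B h1 h2 α α' h3 h4 h5
    exact wT_ratio_mono hx h1 h2 h3 h4 hh.le h5
  · intro t h0 hπ ht
    have := one_sub_mul_pos hx ht (cos_le_one t)
    have := sin_nonneg_of_nonneg_of_le_pi h0 hπ
    positivity
  · intro s t h0 hst ht hv
    have hv' : ∀ y, s ≤ y → y ≤ t → x < cos y := fun y h1 h2 =>
      cos_gt_of_le ht hv (h0.trans h1) h2
    refine strict_of_deriv (g := fun t => sin t / (1 - x * cos t))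
      (g' := fun y => (cos y - x) / (1 - x * cos y) ^ 2) hst ?_ ?_
    · intro y h1 h2
      have h3 := (one_sub_mul_pos hx (hv' y h1 h2) (cos_le_one y)).ne'
      have hdT : HasDerivAt (fun t => 1 - x * cos t) (x * sin y) y :=
        (((hasDerivAt_cos y).const_mul x).const_sub 1).congr_deriv (by ring)
      refine ((hasDerivAt_sin y).div hdT h3).congr_deriv ?_
      congr 1
      linear_combination -x * sin_sq_add_cos_sq y
    · intro y h1 h2
      have h3 := (one_sub_mul_pos hx (hv' y h1 h2) (cos_le_one y))
      have : 0 < cos y - x := by linarith [hv' y h1 h2]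
      positivity

theorem tail_wS_neg_of_wC (A : Adm h x σ m a) (hh : 0 < h) (hx : -1 < x) {ρ : ℝ} (hρ : 0 < ρ)
    (hsum : pairSum ρ h (wC x) a 0 m ≤ 0) {j : ℕ} (hj : j < m) :
    pairSum ρ h (wS x) a j m < 0 := by
  have hx1 := A.lt_one
  refine A.tail_neg hh hρ (w := wC x) (l := fun t => sin t / (1 + cos t))
    ?_ ?_ ?_ ?_ ?_ hsum hj
  · intro t ht
    have : cos t - x ≠ 0 := by linarith
    have : 1 + cos t ≠ 0 := by linarith
    simp only [wC, wS]; field_simp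
  · intro t _ _ ht
    have : 0 < 1 + cos t := by linarith
    have : 0 < cos t - x := by linarith
    unfold wC; positivity
  · intro B h1 h2 α α' h3 h4 h5
    exact wC_ratio_mono hx h1 h2 h3 h4 hh.le h5
  · intro t h0 hπ ht
    have : 0 < 1 + cos t := by linarith
    have := sin_nonneg_of_nonneg_of_le_pi h0 hπ
    positivity
  · intro s t h0 hst ht hv
    have hv' : ∀ y, s ≤ y → y ≤ t → x < cos y := fun y h1 h2 =>
      cos_gt_of_le ht hv (h0.trans h1) h2
    refine strict_of_deriv (g := fun t => sin t / (1 + cos t))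
      (g' := fun y => (1 + cos y) / (1 + cos y) ^ 2) hst ?_ ?_
    · intro y h1 h2
      have h3 : 1 + cos y ≠ 0 := by linarith [hv' y h1 h2]
      refine ((hasDerivAt_sin y).div ((hasDerivAt_cos y).const_add 1) h3).congr_deriv ?_
      congr 1
      linear_combination sin_sq_add_cos_sq y
    · intro y h1 h2
      have h3 : 0 < 1 + cos y := by linarith [hv' y h1 h2]
      positivity

end Adm

end

section

theorem curve_bound_aux {A B a b c z : ℝ} (hA : 0 < A) (hc : 0 < c) (hz : 0 < z) (ha : 0 < a)
    (hcurve : c ^ 2 * a + c * b = 4 * z) (hQ : 0 ≤ A ^ 2 * a - A * B * b - 4 * z * B ^ 2) :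
    0 ≤ A + c * B := by
  by_contra! h
  have hB : B < 0 := by
    by_contra! hB
    have := mul_nonneg hc.le hB
    linarith
  have h1 : 0 < A * a - B * b := by
    have : 0 < 4 * z * B ^ 2 := by have := sq_pos_of_neg hB; positivity
    have h2 : 0 < A * (A * a - B * b) := by linarith
    exact (pos_iff_pos_of_mul_pos h2).1 hA
  obtain ⟨X, hX⟩ : ∃ X, X = -A - c * B := ⟨_, rfl⟩
  have hX0 : 0 < X := by linarith
  have e : A ^ 2 * a - A * B * b - 4 * z * B ^ 2 + X * (A * a + a * X + (A * a - B * b)) = 0 := by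
    rw [hX]
    linear_combination B ^ 2 * hcurve
  have : 0 < X * (A * a + a * X + (A * a - B * b)) := by positivity
  linarith

theorem curve_poly_A {z : ℝ} (hz : 0 ≤ z) (hz2 : z ≤ 97 / 200) :
    0 ≤ 2/25+497/125*z-37847/1875*z^2+7846/225*z^3-157246/5625*z^4
          +175831/9375*z^5-2765569/140625*z^6+1889956/140625*z^7-206218/46875*z^8
          +29624/15625*z^9-12696/15625*z^10 := by
    nlinarith [mul_nonneg hz (sub_nonneg.2 hz2), mul_nonneg hz (sq_nonneg (z-97/200)),
      mul_nonneg hz (sq_nonneg (z^2-97/200*z)), pow_nonneg hz 3, pow_nonneg hz 5,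
      pow_nonneg hz 7]

theorem curve_poly_B {z : ℝ} (hz : 0 ≤ z) (hz2 : z ≤ 97 / 200) :
    0 ≤ 11/25+3379/1000*z-624353/30000*z^2+165347/4500*z^3-331163/11250*z^4
          +2958979/150000*z^5-11553799/562500*z^6+31288279/2250000*z^7-3394237/750000*z^8
          +244783/125000*z^9-104907/125000*z^10 := by
    nlinarith [mul_nonneg hz (sub_nonneg.2 hz2), mul_nonneg hz (sq_nonneg (z-97/200)),
      mul_nonneg hz (sq_nonneg (z^2-97/200*z)), pow_nonneg hz 3, pow_nonneg hz 5,
      pow_nonneg hz 7]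

theorem curve_bound {Z c z : ℝ} (hZ : Z = 21 / 25 ∨ Z = 87 / 100) (hc : 0 < c) (hz : 0 ≤ z)
    (hz1 : z < 1) (hcurve : z * (2 + c + c * z) ^ 2 = c * (3 + 4 * c) * (1 - z) ^ 2) :
    2 * c * (1 - z) ^ 2 ≤
      (2 + c + c * z) * ((Z - 1) * z + (Z + 1) * (1 - z) * (z + z ^ 2 / 3 + z ^ 3 / 5))
        + Z * (1 - z) ^ 2 - (Z - z) * (1 + c * z) := by
  have hz0 : 0 < z := by
    refine lt_of_le_of_ne hz fun h => ?_
    rw [← h] at hcurve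
    nlinarith
  have e : c ^ 2 * (4 * (1 - z) ^ 2 - z * (1 + z) ^ 2) + c * (3 * (1 - z) ^ 2 - 4 * z * (1 + z))
      = 4 * z := by linear_combination -hcurve
  have ha : 0 < 4 * (1 - z) ^ 2 - z * (1 + z) ^ 2 := by
    by_contra! ha
    have hz2 : 48 / 100 < z := by nlinarith
    have hb : 3 * (1 - z) ^ 2 - 4 * z * (1 + z) < 0 := by nlinarith
    have := mul_neg_of_pos_of_neg hc hb
    have := mul_nonpos_of_nonneg_of_nonpos (sq_nonneg c) ha
    linarith
  have hz2 : z ≤ 97 / 200 := by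
    by_contra! h
    nlinarith
  rcases hZ with rfl | rfl
  · have hA : 0 < z * (67 / 25 - 121 / 75 * z - 184 / 375 * z ^ 2 - 92 / 125 * z ^ 3) := by
      apply mul_pos hz0
      nlinarith [mul_nonneg hz (sub_nonneg.2 hz2), pow_nonneg hz 3, pow_nonneg hz 2]
    have := curve_bound_aux (B := -2 + 121 / 25 * z - 41 / 75 * z ^ 2 - 184 / 125 * z ^ 3
      - 46 / 75 * z ^ 4 - 46 / 125 * z ^ 5) hA hc hz0 ha e ?_
    · linarith
    · have key : 0 ≤ 2/25+497/125*z-37847/1875*z^2+7846/225*z^3-157246/5625*z^4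
          +175831/9375*z^5-2765569/140625*z^6+1889956/140625*z^7-206218/46875*z^8
          +29624/15625*z^9-12696/15625*z^10 := curve_poly_A hz hz2
      have := mul_nonneg hz key
      linear_combination this
  · have hA : 0 < z * (137 / 50 - 487 / 300 * z - 187 / 375 * z ^ 2 - 187 / 250 * z ^ 3) := by
      apply mul_pos hz0
      nlinarith [mul_nonneg hz (sub_nonneg.2 hz2), pow_nonneg hz 3, pow_nonneg hz 2]
    have := curve_bound_aux (B := -2 + 487 / 100 * z - 38 / 75 * z ^ 2 - 187 / 125 * z ^ 3
      - 187 / 300 * z ^ 4 - 187 / 500 * z ^ 5) hA hc hz0 ha e ?_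
    · linarith
    · have key : 0 ≤ 11/25+3379/1000*z-624353/30000*z^2+165347/4500*z^3-331163/11250*z^4
          +2958979/150000*z^5-11553799/562500*z^6+31288279/2250000*z^7-3394237/750000*z^8
          +244783/125000*z^9-104907/125000*z^10 := curve_poly_B hz hz2
      have := mul_nonneg hz key
      linear_combination this

end

section

theorem flow_poly_large {c z : ℝ} (hc : 7 / 10 ≤ c) (h0 : 0 ≤ z) (hz : z ≤ 83 / 100) :
    ((17 / 25 + 21 / 25 * c) - (1 + 29 / 25 * c) * z) * (1 + c * z) * (1 + 5 * z) +
      2 * z * (1 - z) * (-(1 + 29 / 25 * c) * (1 + c * z) +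
        c * ((17 / 25 + 21 / 25 * c) - (1 + 29 / 25 * c) * z)) ≤
      2 * c * (3 + 4 * c) * (21 / 25 - z) * (1 - z) ^ 2 := by
  obtain ⟨u, rfl⟩ : ∃ u, c = 7 / 10 + u := ⟨c - 7 / 10, by ring⟩
  have hu : 0 ≤ u := by linarith
  nlinarith [mul_nonneg hu h0, mul_nonneg hu (sub_nonneg.2 hz),
    mul_nonneg (mul_nonneg hu hu) (sub_nonneg.2 hz), mul_nonneg h0 (sub_nonneg.2 hz),
    sq_nonneg (z - 46 / 100), mul_nonneg h0 (sq_nonneg (z - 46 / 100)),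
    mul_nonneg hu (sq_nonneg (z - 46 / 100)),
    mul_nonneg (mul_nonneg hu h0) (sq_nonneg (z - 46 / 100)),
    mul_nonneg (mul_nonneg hu hu) (mul_nonneg h0 (sq_nonneg (z - 46 / 100))),
    mul_nonneg (mul_nonneg hu hu) (sq_nonneg (z - 46 / 100))]

theorem flow_poly_small {c z : ℝ} (hc0 : 0 ≤ c) (hc : c ≤ 7 / 10) (h0 : 0 ≤ z)
    (hz : z ≤ 542 / 1000) :
    (1 - z) * ((74 / 100 + 87 / 100 * c) - (1 + 113 / 100 * c) * z) * (2 * c + 3 / 4) *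
        (20 / 7 * z + 7 / 20) ≤
      ((74 / 100 + 87 / 100 * c) - (1 + 113 / 100 * c) * z) * (1 + c * z) * (1 + 5 * z) +
        2 * z * (1 - z) * (-(1 + 113 / 100 * c) * (1 + c * z) +
          c * ((74 / 100 + 87 / 100 * c) - (1 + 113 / 100 * c) * z)) := by
  have e0 : 0 ≤ 2183/4000 - 12011/28000*z + 261/560*z^2 - 15/7*z^3 := by
    nlinarith [mul_nonneg h0 (sub_nonneg.2 hz), mul_nonneg h0 (sq_nonneg z), sq_nonneg (z-1/2), mul_nonneg (mul_nonneg h0 h0) (sub_nonneg.2 hz)]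
  have e2 : -609/1000 - 673/700*z + 53183/7000*z^2 - 5311/700*z^3 ≤ 0 := by
    nlinarith [mul_nonneg h0 (sub_nonneg.2 hz), mul_nonneg h0 (sq_nonneg (z-1/2)), sq_nonneg (z-1/2), mul_nonneg (mul_nonneg h0 h0) (sub_nonneg.2 hz)]
  have e1 : 0 ≤ (2183/4000 - 12011/28000*z + 261/560*z^2 - 15/7*z^3) + 7/10*(989/8000-8189/7000*z+395469/56000*z^2-1279/140*z^3)+49/100*(-609/1000 - 673/700*z + 53183/7000*z^2 - 5311/700*z^3) := by
    nlinarith [mul_nonneg h0 (sub_nonneg.2 hz), mul_nonneg h0 (sq_nonneg (z-1/2)), sq_nonneg (z-13/100),mul_nonneg h0 (sq_nonneg (z-13/100)),  mul_nonneg (mul_nonneg h0 h0) (sub_nonneg.2 hz)]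
  have h1 : 0 ≤ 7 / 10 - c := by linarith
  have f0 := mul_nonneg h1 e0
  have f1 := mul_nonneg hc0 e1
  have f2 := mul_nonneg (mul_nonneg hc0 h1) (neg_nonneg.2 e2)
  linear_combination 10/7*f0+10/7*f1+f2

theorem small_region {c z : ℝ} (hc0 : 0 ≤ c) (hc : c ≤ 7 / 10)
    (h : z * (2 + c * z) ≤ 4 * c * (1 - z)) : z ≤ 542 / 1000 := by
  by_contra! hz
  rcases le_or_gt 0 (4 - 4 * z - z ^ 2) with h1 | h1
  · nlinarith [mul_nonneg (sub_nonneg.2 hc) h1]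
  · nlinarith [mul_nonneg hc0 (neg_nonneg.2 h1.le)]

theorem flow_poly_sq {c z : ℝ} (h0 : 0 ≤ z)
    (hz : z ≤ 542 / 1000) (h : z * (2 + c * z) ≤ 4 * c * (1 - z)) :
    z * ((74 / 100 + 87 / 100 * c) - (1 + 113 / 100 * c) * z) ^ 2 ≤
      c * (3 + 4 * c) * (87 / 100 - z) ^ 2 * (1 - z) ^ 2 := by
  obtain ⟨A, hA⟩ : ∃ A, A = 4 * ((87 / 100 - z) ^ 2 * (1 - z) ^ 2)
      - z * (87 / 100 - 113 / 100 * z) ^ 2 := ⟨_, rfl⟩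
  obtain ⟨B, hB⟩ : ∃ B, B = 3 * ((87 / 100 - z) ^ 2 * (1 - z) ^ 2)
      - 2 * z * (74 / 100 - z) * (87 / 100 - 113 / 100 * z) := ⟨_, rfl⟩
  have hA0 : 0 ≤ A := by
    rw [hA]
    nlinarith [mul_nonneg h0 (sub_nonneg.2 hz), mul_nonneg h0 (sq_nonneg (z - 1 / 2)),
      sq_nonneg (z - 1 / 2), sq_nonneg (z ^ 2 - 1 / 2 * z), mul_nonneg (mul_nonneg h0 h0) (sub_nonneg.2 hz)]
  have hB0 : 0 ≤ B := by
    rw [hB]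
    nlinarith [mul_nonneg h0 (sub_nonneg.2 hz), mul_nonneg h0 (sq_nonneg (z - 1 / 2)),
      sq_nonneg (z - 1 / 2), sq_nonneg (z ^ 2 - 1 / 2 * z), mul_nonneg (mul_nonneg h0 h0) (sub_nonneg.2 hz)]
  have he : 0 < 4 - 4 * z - z ^ 2 := by nlinarith
  have hce : 2 * z ≤ c * (4 - 4 * z - z ^ 2) := by linarith
  have hC : 0 ≤ 2351/250-13311/250*z+570031/5000*z^2-269031/2500*z^3+159693/5000*z^4
      +311/25*z^5-7*z^6 := by
    clear hA0 hB0 hA hB hce h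
    nlinarith [mul_nonneg h0 (sub_nonneg.2 hz), mul_nonneg h0 (sq_nonneg (z - 1 / 2)),
      sq_nonneg (z - 1 / 2), sq_nonneg (z ^ 2 - 1 / 2 * z), mul_nonneg (mul_nonneg h0 h0) (sub_nonneg.2 hz),
      mul_nonneg h0 (sq_nonneg (z ^ 2 - 1 / 2 * z)), pow_nonneg h0 5]
  set e := 4 - 4 * z - z ^ 2 with hedef
  have h1 : (2 * z) ^ 2 * A ≤ (c * e) ^ 2 * A := by gcongr
  have h2 : 2 * z * (e * B) ≤ c * e * (e * B) := by gcongr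
  have h3 : 0 ≤ e ^ 2 * (c ^ 2 * A + c * B - z * (74 / 100 - z) ^ 2) := by
    have h4 := mul_nonneg h0 hC
    have h5 : (2 * z) ^ 2 * A + 2 * z * (e * B) - z * (74 / 100 - z) ^ 2 * e ^ 2 =
        z * (2351/250-13311/250*z+570031/5000*z^2-269031/2500*z^3+159693/5000*z^4
      +311/25*z^5-7*z^6) := by
      rw [hA, hB, hedef]; ring
    linarith
  have h4 := nonneg_of_mul_nonneg_right h3 (by positivity)
  rw [hA, hB] at h4
  linarith

end

section

/-- The function `(1 + q²y²) / (1 - y²)²`. -/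
noncomputable def flowV (q y : ℝ) : ℝ := (1 + q ^ 2 * y ^ 2) / (1 - y ^ 2) ^ 2
/-- The logarithmic derivative of `flowV` along a flow. -/
noncomputable def flowL (q y : ℝ) : ℝ := y * (2 + q ^ 2 + q ^ 2 * y ^ 2) / (q * (1 - y ^ 2))
/-- The function `(Z - y²) (1 + q²y²) / (1 - y²)²`. -/
noncomputable def flowF (Z q y : ℝ) : ℝ := (Z - y ^ 2) * flowV q y
/-- The linear factor of the derivative of `flowF`. -/
noncomputable def flowN (Z q y : ℝ) : ℝ :=
  2 * Z - 1 + q ^ 2 * Z - (1 + q ^ 2 * (2 - Z)) * y ^ 2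
/-- The derivative of `flowF` along a flow. -/
noncomputable def flowF₁ (Z q y : ℝ) : ℝ :=
  y * flowN Z q y * (1 + q ^ 2 * y ^ 2) / (q * (1 - y ^ 2) ^ 3)
/-- The second derivative of `flowF` along a flow. -/
noncomputable def flowF₂ (Z q y : ℝ) : ℝ :=
  (1 + q ^ 2 * y ^ 2) * (flowN Z q y * (1 + q ^ 2 * y ^ 2) * (1 + 5 * y ^ 2) +
    2 * y ^ 2 * (1 - y ^ 2) * (-(1 + q ^ 2 * (2 - Z)) * (1 + q ^ 2 * y ^ 2) +
      q ^ 2 * flowN Z q y)) / (2 * q ^ 2 * (1 - y ^ 2) ^ 4)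
/-- The antiderivative of `flowF` along a flow. -/
noncomputable def flowG (Z q y : ℝ) : ℝ :=
  q * ((Z - 1) * y / (1 - y ^ 2) + (Z + 1) / 2 * (log (1 + y) - log (1 - y)))
/-- The antiderivative of `flowV` with respect to `y²`. -/
noncomputable def flowJ (q y : ℝ) : ℝ :=
  (1 + q ^ 2) * y ^ 2 / (1 - y ^ 2) + q ^ 2 * log (1 - y ^ 2)

section
variable {q t : ℝ} {y : ℝ → ℝ}

theorem flow_hasDerivAt_sq (hd : HasDerivAt y ((1 + q ^ 2 * y t ^ 2) / (2 * q)) t) :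
    HasDerivAt (fun t => y t ^ 2) (y t * (1 + q ^ 2 * y t ^ 2) / q) t := by
  refine (hd.pow 2).congr_deriv ?_
  norm_num
  ring

theorem flow_hasDerivAt_V (hq : 0 < q) (hy : y t ^ 2 < 1)
    (hd : HasDerivAt y ((1 + q ^ 2 * y t ^ 2) / (2 * q)) t) :
    HasDerivAt (fun t => flowV q (y t)) (flowL q (y t) * flowV q (y t)) t := by
  have h2 := flow_hasDerivAt_sq hd
  have h1 : 1 - y t ^ 2 ≠ 0 := by linarith
  have := ((h2.const_mul (q ^ 2)).const_add 1).div ((h2.const_sub 1).pow 2) (pow_ne_zero 2 h1)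
  refine HasDerivAt.congr_deriv (f := fun t => flowV q (y t)) this ?_
  simp only [flowL, flowV, Pi.pow_apply]
  generalize y t = y at *
  field_simp
  ring

theorem flow_hasDerivAt_F (Z : ℝ) (hq : 0 < q) (hy : y t ^ 2 < 1)
    (hd : HasDerivAt y ((1 + q ^ 2 * y t ^ 2) / (2 * q)) t) :
    HasDerivAt (fun t => flowF Z q (y t)) (flowF₁ Z q (y t)) t := by
  have h2 := flow_hasDerivAt_sq hd
  have h1 : 1 - y t ^ 2 ≠ 0 := by linarith
  refine HasDerivAt.congr_deriv (f := fun t => flowF Z q (y t))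
    ((h2.const_sub Z).mul (flow_hasDerivAt_V hq hy hd)) ?_
  simp only [flowF₁, flowN, flowL, flowV]
  generalize y t = y at *
  field_simp
  ring

theorem flow_hasDerivAt_F₁ (Z : ℝ) (hq : 0 < q) (hy : y t ^ 2 < 1)
    (hd : HasDerivAt y ((1 + q ^ 2 * y t ^ 2) / (2 * q)) t) :
    HasDerivAt (fun t => flowF₁ Z q (y t)) (flowF₂ Z q (y t)) t := by
  have h2 := flow_hasDerivAt_sq hd
  have h1 : 1 - y t ^ 2 ≠ 0 := by linarith
  have hN : HasDerivAt (fun t => flowN Z q (y t)) _ t :=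
    (h2.const_mul (1 + q ^ 2 * (2 - Z))).const_sub (2 * Z - 1 + q ^ 2 * Z)
  have := ((hd.mul hN).mul ((h2.const_mul (q ^ 2)).const_add 1)).div
    (((h2.const_sub 1).pow 3).const_mul q) (mul_ne_zero hq.ne' (pow_ne_zero 3 h1))
  refine HasDerivAt.congr_deriv (f := fun t => flowF₁ Z q (y t)) this ?_
  simp only [flowF₂, flowN, Pi.pow_apply, Pi.mul_apply]
  generalize y t = y at *
  field_simp
  ring

theorem flow_hasDerivAt_G (Z : ℝ) (hq : 0 < q) (hy : y t ^ 2 < 1)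
    (hd : HasDerivAt y ((1 + q ^ 2 * y t ^ 2) / (2 * q)) t) :
    HasDerivAt (fun t => flowG Z q (y t)) (flowF Z q (y t)) t := by
  have h2 := flow_hasDerivAt_sq hd
  have h1 : 1 - y t ^ 2 ≠ 0 := by linarith
  obtain ⟨h3, h4⟩ := abs_lt.1 ((sq_lt_one_iff_abs_lt_one _).1 hy)
  have h5 : 1 + y t ≠ 0 := by linarith
  have h6 : 1 - y t ≠ 0 := by linarith
  have := (((hd.const_mul (Z - 1)).div (h2.const_sub 1) h1).add
    ((((hd.const_add 1).log h5).sub ((hd.const_sub 1).log h6)).const_mul ((Z + 1) / 2))).const_mul q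
  refine HasDerivAt.congr_deriv (f := fun t => flowG Z q (y t)) this ?_
  simp only [flowF, flowV]
  generalize y t = y at *
  have e : 1 - y ^ 2 = (1 + y) * (1 - y) := by ring
  rw [e]
  field_simp
  ring

theorem flow_hasDerivAt_J (hq : 0 < q) (hy : y t ^ 2 < 1)
    (hd : HasDerivAt y ((1 + q ^ 2 * y t ^ 2) / (2 * q)) t) :
    HasDerivAt (fun t => flowJ q (y t)) (y t * (1 + q ^ 2 * y t ^ 2) / q * flowV q (y t)) t := by
  have h2 := flow_hasDerivAt_sq hd
  have h1 : 1 - y t ^ 2 ≠ 0 := by linarith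
  have := ((h2.const_mul (1 + q ^ 2)).div (h2.const_sub 1) h1).add
    (((h2.const_sub 1).log h1).const_mul (q ^ 2))
  refine HasDerivAt.congr_deriv (f := fun t => flowJ q (y t)) this ?_
  simp only [flowV]
  generalize y t = y at *
  field_simp
  ring
end

end

section

section
variable {F F₁ F₂ G : ℝ → ℝ} {κ B : ℝ}

theorem sym_step_le {M : ℝ}
    (hG : ∀ t, 0 ≤ t → t ≤ B → HasDerivAt G (F t) t)
    (hF : ∀ t, 0 ≤ t → t ≤ B → HasDerivAt F (F₁ t) t)
    (hF₁ : ∀ t, 0 ≤ t → t ≤ B → HasDerivAt F₁ (F₂ t) t)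
    (hle : ∀ t, 0 ≤ t → t ≤ B → F₂ t ≤ κ ^ 2 * F t) {s : ℝ} (hs : 0 ≤ s) (hM : s ≤ M)
    (hB : M + s ≤ B) :
    κ * (G (M + s) - G (M - s)) + F (M + s) + F (M - s) ≤ 2 * exp (κ * s) * F M := by
  have dp : ∀ {f f' : ℝ → ℝ}, (∀ t, 0 ≤ t → t ≤ B → HasDerivAt f (f' t) t) → ∀ t, 0 ≤ t → t ≤ s →
      HasDerivAt (fun t => f (M + t)) (f' (M + t)) t := by
    intro f f' hf t h1 h2
    exact (hf (M + t) (by linarith) (by linarith)).comp_const_add M t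
  have dm : ∀ {f f' : ℝ → ℝ}, (∀ t, 0 ≤ t → t ≤ B → HasDerivAt f (f' t) t) → ∀ t, 0 ≤ t → t ≤ s →
      HasDerivAt (fun t => f (M - t)) (-f' (M - t)) t := by
    intro f f' hf t h1 h2
    exact (hf (M - t) (by linarith) (by linarith)).comp_const_sub M t
  have hX : ∀ t, 0 ≤ t → t ≤ s →
      F₁ (M + t) - F₁ (M - t) - κ ^ 2 * (G (M + t) - G (M - t)) ≤ 0 := by
    intro t h1 h2
    have := le_of_deriv_nonneg (B := s)
      (g := fun t => -(F₁ (M + t) - F₁ (M - t) - κ ^ 2 * (G (M + t) - G (M - t))))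
      (g' := fun t => -(F₂ (M + t) + F₂ (M - t) - κ ^ 2 * (F (M + t) + F (M - t)))) ?_ ?_
      0 t le_rfl h1 h2
    · simp only [add_zero, sub_zero] at this
      linarith
    · intro t h1 h2
      exact ((((dp hF₁ t h1 h2).sub (dm hF₁ t h1 h2)).sub
        (((dp hG t h1 h2).sub (dm hG t h1 h2)).const_mul _)).neg).congr_deriv (by ring)
    · intro t h1 h2
      have := hle (M + t) (by linarith) (by linarith)
      have := hle (M - t) (by linarith) (by linarith)
      linarith
  have := le_of_deriv_nonneg (B := s)
    (g := fun t => -(exp (-κ * t) * (κ * (G (M + t) - G (M - t)) + F (M + t) + F (M - t))))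
    (g' := fun t => -(exp (-κ * t) *
      (F₁ (M + t) - F₁ (M - t) - κ ^ 2 * (G (M + t) - G (M - t))))) ?_ ?_ 0 s le_rfl hs le_rfl
  · simp only [mul_zero, exp_zero, add_zero, sub_zero] at this
    have e : exp (κ * s) * exp (-κ * s) = 1 := by rw [← exp_add]; simp
    have h3 := mul_le_mul_of_nonneg_left this (exp_pos (κ * s)).le
    have : exp (κ * s) * (exp (-κ * s) * (κ * (G (M + s) - G (M - s)) + F (M + s) + F (M - s)))
      = (κ * (G (M + s) - G (M - s)) + F (M + s) + F (M - s)) := by rw [← mul_assoc, e, one_mul]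
    linarith
  · intro t h1 h2
    have hE : HasDerivAt (fun t => exp (-κ * t)) (exp (-κ * t) * (-κ)) t := by
      simpa using ((hasDerivAt_id t).const_mul (-κ)).exp
    exact ((hE.mul (((((dp hG t h1 h2).sub (dm hG t h1 h2)).const_mul κ).add
      (dp hF t h1 h2)).add (dm hF t h1 h2))).neg).congr_deriv
        (by simp only [Pi.add_apply, Pi.sub_apply]; ring)
  · intro t h1 h2
    have := hX t h1 h2
    have := exp_pos (-κ * t)
    nlinarith

theorem one_side_le
    (hG : ∀ t, 0 ≤ t → t ≤ B → HasDerivAt G (F t) t)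
    (hF : ∀ t, 0 ≤ t → t ≤ B → HasDerivAt F (F₁ t) t)
    (hF₁ : ∀ t, 0 ≤ t → t ≤ B → HasDerivAt F₁ (F₂ t) t)
    (hle : ∀ t, 0 ≤ t → t ≤ B → F₂ t ≤ κ ^ 2 * F t) (hG0 : G 0 = 0) (hF₁0 : F₁ 0 = 0)
    {s : ℝ} (hs : 0 ≤ s) (hB : s ≤ B) :
    κ * G s + F s ≤ exp (κ * s) * F 0 := by
  have hX : ∀ t, 0 ≤ t → t ≤ s → F₁ t - κ ^ 2 * G t ≤ 0 := by
    intro t h1 h2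
    have := le_of_deriv_nonneg (B := s) (g := fun t => -(F₁ t - κ ^ 2 * G t))
      (g' := fun t => -(F₂ t - κ ^ 2 * F t)) ?_ ?_ 0 t le_rfl h1 h2
    · rw [hG0, hF₁0] at this
      linarith
    · intro t h1 h2
      exact ((hF₁ t h1 (by linarith)).sub ((hG t h1 (by linarith)).const_mul _)).neg
    · intro t h1 h2
      linarith [hle t h1 (by linarith)]
  have := le_of_deriv_nonneg (B := s) (g := fun t => -(exp (-κ * t) * (κ * G t + F t)))
    (g' := fun t => -(exp (-κ * t) * (F₁ t - κ ^ 2 * G t))) ?_ ?_ 0 s le_rfl hs le_rfl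
  · simp only [mul_zero, exp_zero, hG0] at this
    have e : exp (κ * s) * exp (-κ * s) = 1 := by rw [← exp_add]; simp
    have h3 := mul_le_mul_of_nonneg_left this (exp_pos (κ * s)).le
    have : exp (κ * s) * (exp (-κ * s) * (κ * G s + F s)) = κ * G s + F s := by
      rw [← mul_assoc, e, one_mul]
    linarith
  · intro t h1 h2
    have hE : HasDerivAt (fun t => exp (-κ * t)) (exp (-κ * t) * (-κ)) t := by
      simpa using ((hasDerivAt_id t).const_mul (-κ)).exp
    exact ((hE.mul (((hG t h1 (by linarith)).const_mul κ).add
      (hF t h1 (by linarith)))).neg).congr_deriv (by simp only [Pi.add_apply]; ring)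
  · intro t h1 h2
    have := hX t h1 h2
    have := exp_pos (-κ * t)
    nlinarith

/-- Lower bound for the alternating sum when the second derivative of `F` is at most `κ² F`. -/
theorem two_mul_sum_ge_of_deriv2_le (hκ : 0 ≤ κ)
    (hG : ∀ t, 0 ≤ t → t ≤ B → HasDerivAt G (F t) t)
    (hF : ∀ t, 0 ≤ t → t ≤ B → HasDerivAt F (F₁ t) t)
    (hF₁ : ∀ t, 0 ≤ t → t ≤ B → HasDerivAt F₁ (F₂ t) t)
    (hle : ∀ t, 0 ≤ t → t ≤ B → F₂ t ≤ κ ^ 2 * F t) (hG0 : G 0 = 0) (hF₁0 : F₁ 0 = 0)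
    (hF0 : 0 ≤ F 0) {h : ℝ} (hh : 0 ≤ h) (k : ℕ) (hB : (2 * k + 1 : ℝ) * h ≤ B) :
    κ * G ((2 * k + 1 : ℝ) * h) + F 0 - F ((2 * k + 1 : ℝ) * h) ≤
      2 * ∑ j ∈ range (k + 1), (exp (κ * h) * F ((2 * j : ℝ) * h) - F ((2 * j + 1 : ℝ) * h)) := by
  induction k with
  | zero =>
    simp only [Nat.cast_zero, mul_zero, zero_add, one_mul] at hB ⊢
    have := one_side_le hG hF hF₁ hle hG0 hF₁0 hh hB
    have h2 : 1 ≤ exp (κ * h) := one_le_exp (by positivity)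
    simp only [range_one, sum_singleton, Nat.cast_zero, mul_zero, zero_mul, zero_add, one_mul]
    nlinarith
  | succ k ih =>
    have h1 := ih (by push_cast at hB; nlinarith)
    rw [Finset.sum_range_succ]
    have h2 := sym_step_le (M := (2 * (k + 1 : ℕ) : ℝ) * h) hG hF hF₁ hle hh
      (by push_cast; nlinarith [mul_nonneg (Nat.cast_nonneg (α := ℝ) k) hh]) (by linarith)
    have e1 : (2 * (k + 1 : ℕ) : ℝ) * h + h = (2 * (k + 1 : ℕ) + 1 : ℝ) * h := by ring
    have e2 : (2 * (k + 1 : ℕ) : ℝ) * h - h = (2 * k + 1 : ℝ) * h := by push_cast; ring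
    rw [e1, e2] at h2
    linarith

theorem deriv_le_mul_of_deriv2_le (hκ : 0 ≤ κ)
    (hF : ∀ t, 0 ≤ t → t ≤ B → HasDerivAt F (F₁ t) t)
    (hF₁ : ∀ t, 0 ≤ t → t ≤ B → HasDerivAt F₁ (F₂ t) t)
    (hle : ∀ t, 0 ≤ t → t ≤ B → F₂ t ≤ κ ^ 2 * F t) (hF₁0 : F₁ 0 = 0)
    (hF0 : 0 ≤ F 0) {t : ℝ} (ht : 0 ≤ t) (htB : t ≤ B) : F₁ t ≤ κ * F t := by
  have := le_of_deriv_nonneg (B := B) (g := fun t => exp (κ * t) * (κ * F t - F₁ t))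
    (g' := fun t => exp (κ * t) * (κ ^ 2 * F t - F₂ t)) ?_ ?_ 0 t le_rfl ht htB
  · simp only [mul_zero, exp_zero, hF₁0] at this
    have h2 : 0 ≤ exp (κ * t) * (κ * F t - F₁ t) := le_trans (by nlinarith) this
    linarith [nonneg_of_mul_nonneg_right h2 (exp_pos _)]
  · intro t h1 h2
    have hE : HasDerivAt (fun t => exp (κ * t)) (exp (κ * t) * κ) t := by
      simpa using ((hasDerivAt_id t).const_mul κ).exp
    exact (hE.mul (((hF t h1 h2).const_mul κ).sub (hF₁ t h1 h2))).congr_deriv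
      (by simp only [Pi.sub_apply]; ring)
  · intro t h1 h2
    have := hle t h1 h2
    have := exp_pos (κ * t)
    exact mul_nonneg this.le (by linarith)

theorem mul_exp_ge {M s : ℝ} (hF : ∀ t, 0 ≤ t → t ≤ B → HasDerivAt F (F₁ t) t)
    (hle : ∀ t, 0 ≤ t → t ≤ B → F₁ t ≤ κ * F t) (hM : 0 ≤ M) (hs : 0 ≤ s) (hB : M + s ≤ B) :
    F (M + s) ≤ exp (κ * s) * F M := by
  have := le_of_deriv_nonneg (B := s) (g := fun t => -(exp (-κ * t) * F (M + t)))
    (g' := fun t => exp (-κ * t) * (κ * F (M + t) - F₁ (M + t))) ?_ ?_ 0 s le_rfl hs le_rfl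
  · simp only [mul_zero, exp_zero, add_zero] at this
    have e : exp (κ * s) * exp (-κ * s) = 1 := by rw [← exp_add]; simp
    have h3 := mul_le_mul_of_nonneg_left this (exp_pos (κ * s)).le
    have : exp (κ * s) * (exp (-κ * s) * F (M + s)) = F (M + s) := by
      rw [← mul_assoc, e, one_mul]
    linarith
  · intro t h1 h2
    have hE : HasDerivAt (fun t => exp (-κ * t)) (exp (-κ * t) * (-κ)) t := by
      simpa using ((hasDerivAt_id t).const_mul (-κ)).exp
    have := (hF (M + t) (by linarith) (by linarith)).comp_const_add M t
    exact ((hE.mul this).neg).congr_deriv (by ring)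
  · intro t h1 h2
    have := hle (M + t) (by linarith) (by linarith)
    have := exp_pos (-κ * t)
    exact mul_nonneg this.le (by linarith)

/-- Lower bound for the alternating sum when `F₁ ≤ κ F` and `κ F₁ ≤ F₂`
for the derivatives `F₁`, `F₂` of `F`. -/
theorem two_mul_sum_ge_of_le_deriv2 (hκ : 0 ≤ κ)
    (hG : ∀ t, 0 ≤ t → t ≤ B → HasDerivAt G (F t) t)
    (hF : ∀ t, 0 ≤ t → t ≤ B → HasDerivAt F (F₁ t) t)
    (hF₁ : ∀ t, 0 ≤ t → t ≤ B → HasDerivAt F₁ (F₂ t) t)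
    (hle₁ : ∀ t, 0 ≤ t → t ≤ B → F₁ t ≤ κ * F t)
    (hle₂ : ∀ t, 0 ≤ t → t ≤ B → κ * F₁ t ≤ F₂ t) (hG0 : G 0 = 0)
    {h : ℝ} (hh : 0 ≤ h) (k : ℕ) (hB : (2 * k + 1 : ℝ) * h ≤ B) :
    κ * G ((2 * k + 1 : ℝ) * h) + F 0 - F ((2 * k + 1 : ℝ) * h) ≤
      2 * ∑ j ∈ range (k + 1), (exp (κ * h) * F ((2 * j : ℝ) * h) - F ((2 * j + 1 : ℝ) * h)) := by
  obtain ⟨H, hH⟩ : ∃ H : ℝ → ℝ, H = fun t => κ * G t + F 0 - F t := ⟨_, rfl⟩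
  have hdH : ∀ t, 0 ≤ t → t ≤ B → HasDerivAt H (κ * F t - F₁ t) t := by
    intro t h1 h2
    rw [hH]
    exact (((hG t h1 h2).const_mul κ).add_const _).sub (hF t h1 h2)
  have hmono := le_of_deriv_nonneg hdH fun t h1 h2 => by linarith [hle₁ t h1 h2]
  have hanti := le_of_deriv_nonneg (B := B) (g := fun t => -(κ * F t - F₁ t))
    (g' := fun t => -(κ * F₁ t - F₂ t))
    (fun t h1 h2 => (((hF t h1 h2).const_mul κ).sub (hF₁ t h1 h2)).neg)
    fun t h1 h2 => by linarith [hle₂ t h1 h2]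
  have hconc : ∀ M, h ≤ M → M + h ≤ B → H (M + h) + H (M - h) ≤ 2 * H M := by
    intro M h1 h2
    have := le_of_deriv_nonneg (B := h) (g := fun t => -(H (M + t) + H (M - t)))
      (g' := fun t => -((κ * F (M + t) - F₁ (M + t)) - (κ * F (M - t) - F₁ (M - t)))) ?_ ?_
      0 h le_rfl hh le_rfl
    · simp only [add_zero, sub_zero] at this
      linarith
    · intro t h3 h4
      have d1 := (hdH (M + t) (by linarith) (by linarith)).comp_const_add M t
      have d2 := (hdH (M - t) (by linarith) (by linarith)).comp_const_sub M t
      exact ((d1.add d2).neg).congr_deriv (by ring)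
    · intro t h3 h4
      have := hanti (M - t) (M + t) (by linarith) (by linarith) (by linarith)
      linarith
  have hpair : ∀ M, 0 ≤ M → M + h ≤ B →
      H (M + h) - H M ≤ exp (κ * h) * F M - F (M + h) := by
    intro M h1 h2
    have := le_of_deriv_nonneg (B := h)
      (g := fun t => exp (κ * t) * F M - κ * G (M + t))
      (g' := fun t => κ * (exp (κ * t) * F M - F (M + t))) ?_ ?_ 0 h le_rfl hh le_rfl
    · simp only [mul_zero, exp_zero, add_zero] at this
      rw [hH]
      linarith
    · intro t h3 h4
      have hE : HasDerivAt (fun t => exp (κ * t)) (exp (κ * t) * κ) t := by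
        simpa using ((hasDerivAt_id t).const_mul κ).exp
      have := (hG (M + t) (by linarith) (by linarith)).comp_const_add M t
      exact ((hE.mul_const _).sub (this.const_mul κ)).congr_deriv (by ring)
    · intro t h3 h4
      have := mul_exp_ge (M := M) (s := t) hF hle₁ h1 h3 (by linarith)
      exact mul_nonneg hκ (by linarith)
  have hH0 : H 0 = 0 := by rw [hH]; simp [hG0]
  have key : ∀ k : ℕ, (2 * k + 1 : ℝ) * h ≤ B →
      H ((2 * k + 1 : ℝ) * h) + (H ((2 * k + 1 : ℝ) * h) - H ((2 * k : ℝ) * h)) ≤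
      2 * ∑ j ∈ range (k + 1), (exp (κ * h) * F ((2 * j : ℝ) * h) - F ((2 * j + 1 : ℝ) * h)) := by
    intro k
    induction k with
    | zero =>
      intro hB
      have := hpair 0 le_rfl (by simpa using hB)
      simp [hH0] at this ⊢
      linarith
    | succ k ih =>
      intro hB
      have h1 := ih (by push_cast at hB; nlinarith)
      rw [Finset.sum_range_succ]
      have hk := mul_nonneg (Nat.cast_nonneg (α := ℝ) k) hh
      have h2 := hpair ((2 * (k + 1 : ℕ) : ℝ) * h) (by positivity) (by linarith)
      have h3 := hconc ((2 * k + 1 : ℝ) * h) (by linarith) (by push_cast at hB; linarith)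
      have e1 : (2 * (k + 1 : ℕ) : ℝ) * h + h = (2 * (k + 1 : ℕ) + 1 : ℝ) * h := by ring
      have e2 : (2 * k + 1 : ℝ) * h + h = (2 * (k + 1 : ℕ) : ℝ) * h := by push_cast; ring
      have e3 : (2 * k + 1 : ℝ) * h - h = (2 * k : ℝ) * h := by ring
      rw [e1] at h2
      rw [e2, e3] at h3
      linarith
  have h1 := key k hB
  have h2 := hmono ((2 * k : ℝ) * h) ((2 * k + 1 : ℝ) * h) (by positivity) (by linarith) hB
  have h3 : H ((2 * k + 1 : ℝ) * h) = κ * G ((2 * k + 1 : ℝ) * h) + F 0 - F ((2 * k + 1 : ℝ) * h) := by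
    rw [hH]
  linarith
end

end

section

theorem artanh_ge {y : ℝ} (h0 : 0 ≤ y) (h1 : y < 1) :
    y + y ^ 3 / 3 + y ^ 5 / 5 ≤ (log (1 + y) - log (1 - y)) / 2 := by
  have := le_of_deriv_nonneg (B := y)
    (g := fun y => (log (1 + y) - log (1 - y)) / 2 - (y + y ^ 3 / 3 + y ^ 5 / 5))
    (g' := fun y => y ^ 6 / (1 - y ^ 2)) ?_ ?_ 0 y le_rfl h0 le_rfl
  · norm_num at this
    linarith
  · intro t h2 h3
    have h5 : 1 + t ≠ 0 := by linarith
    have h6 : 1 - t ≠ 0 := by linarith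
    have h7 : 1 - t ^ 2 ≠ 0 := by nlinarith
    have d := hasDerivAt_id t
    refine ((((((d.const_add 1).log h5).sub ((d.const_sub 1).log h6)).div_const 2).sub
      ((d.add ((d.pow 3).div_const 3)).add ((d.pow 5).div_const 5)))).congr_deriv ?_
    simp only [id_eq]
    have e : 1 - t ^ 2 = (1 + t) * (1 - t) := by ring
    rw [e]
    field_simp
    ring
  · intro t h2 h3
    have : 0 < 1 - t ^ 2 := by nlinarith
    positivity

theorem neg_log_le {u : ℝ} (h0 : 0 < u) (h1 : u ≤ 1) : -log u ≤ (u⁻¹ - u) / 2 := by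
  have := le_of_deriv_nonneg (B := 1 - u)
    (g := fun t => ((1 - t)⁻¹ - (1 - t)) / 2 + log (1 - t))
    (g' := fun t => ((1 - t)⁻¹ - 1) ^ 2 / 2) ?_ ?_ 0 (1 - u) le_rfl (by linarith) le_rfl
  · norm_num at this
    linarith
  · intro t h2 h3
    have h5 : 1 - t ≠ 0 := by linarith
    have d := (hasDerivAt_id t).const_sub 1
    refine ((((d.inv h5).sub d).div_const 2).add (d.log h5)).congr_deriv ?_
    simp only [id_eq]
    field_simp
    ring
  · intro t h2 h3
    positivity

theorem flowJ_region {q y : ℝ} (h0 : 0 ≤ y) (h1 : y < 1) (hJ : flowJ q y ≤ 2 * q ^ 2) :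
    y ^ 2 * (2 + q ^ 2 * y ^ 2) ≤ 4 * q ^ 2 * (1 - y ^ 2) := by
  have h2 : 0 < 1 - y ^ 2 := by nlinarith
  have h3 := neg_log_le h2 (by nlinarith)
  unfold flowJ at hJ
  have h4 := mul_le_mul_of_nonneg_left h3 (sq_nonneg q)
  have h5 : (1 + q ^ 2) * y ^ 2 / (1 - y ^ 2) - q ^ 2 * (((1 - y ^ 2)⁻¹ - (1 - y ^ 2)) / 2)
      ≤ 2 * q ^ 2 := by linarith
  have h6 := mul_le_mul_of_nonneg_right h5 h2.le
  have e : ((1 + q ^ 2) * y ^ 2 / (1 - y ^ 2) - q ^ 2 * (((1 - y ^ 2)⁻¹ - (1 - y ^ 2)) / 2)) *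
      (1 - y ^ 2) = (1 + q ^ 2) * y ^ 2 - q ^ 2 * ((1 - (1 - y ^ 2) ^ 2) / 2) := by
    field_simp
  rw [e] at h6
  linarith

theorem flow_value_ge {Z q y : ℝ} (hZ : Z = 21 / 25 ∨ Z = 87 / 100) (hq : 0 < q) (h0 : 0 ≤ y)
    (h1 : y < 1) (hL : flowL q y = √(3 + 4 * q ^ 2)) :
    2 * q ^ 2 ≤ √(3 + 4 * q ^ 2) * flowG Z q y + Z - flowF Z q y := by
  have h2 : 0 < 1 - y ^ 2 := by nlinarith
  have hcurve : y ^ 2 * (2 + q ^ 2 + q ^ 2 * y ^ 2) ^ 2 =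
      q ^ 2 * (3 + 4 * q ^ 2) * (1 - y ^ 2) ^ 2 := by
    have h3 : flowL q y ^ 2 = 3 + 4 * q ^ 2 := by rw [hL]; exact sq_sqrt (by positivity)
    rw [flowL] at h3
    field_simp at h3
    linarith
  have hb := curve_bound hZ (pow_pos hq 2) (sq_nonneg y) (by nlinarith) hcurve
  have ha := artanh_ge h0 h1
  rw [← hL]
  have hZ1 : 0 < Z + 1 := by rcases hZ with rfl | rfl <;> norm_num
  have hya : y ^ 2 + (y ^ 2) ^ 2 / 3 + (y ^ 2) ^ 3 / 5 ≤ y * ((log (1 + y) - log (1 - y)) / 2) := by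
    have := mul_le_mul_of_nonneg_left ha h0
    linarith
  have e : flowL q y * flowG Z q y + Z - flowF Z q y =
      ((2 + q ^ 2 + q ^ 2 * y ^ 2) * ((Z - 1) * y ^ 2 + (Z + 1) * (1 - y ^ 2) *
        (y * ((log (1 + y) - log (1 - y)) / 2))) + Z * (1 - y ^ 2) ^ 2 -
        (Z - y ^ 2) * (1 + q ^ 2 * y ^ 2)) / (1 - y ^ 2) ^ 2 := by
    rw [flowL, flowG, flowF, flowV]
    field_simp
  rw [e, le_div_iff₀ (by positivity)]
  refine hb.trans ?_
  gcongr

section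
variable {q y : ℝ}

theorem flowF₂_le (hq : 0 < q) (hy : y ^ 2 < 1) (hc : 7 / 10 ≤ q ^ 2) (hz : y ^ 2 ≤ 83 / 100) :
    flowF₂ (21 / 25) q y ≤ √(3 + 4 * q ^ 2) ^ 2 * flowF (21 / 25) q y := by
  have h2 : 0 < 1 - y ^ 2 := by linarith
  have := flow_poly_large hc (sq_nonneg y) hz
  rw [sq_sqrt (by positivity), flowF₂, flowF, flowV, div_le_iff₀ (by positivity)]
  have e : (3 + 4 * q ^ 2) * ((21 / 25 - y ^ 2) * ((1 + q ^ 2 * y ^ 2) / (1 - y ^ 2) ^ 2)) *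
      (2 * q ^ 2 * (1 - y ^ 2) ^ 4) =
      (1 + q ^ 2 * y ^ 2) * (2 * q ^ 2 * (3 + 4 * q ^ 2) * (21 / 25 - y ^ 2) * (1 - y ^ 2) ^ 2) := by
    field_simp
  rw [e, flowN]
  refine mul_le_mul_of_nonneg_left ?_ (by positivity)
  linarith

theorem sqrt_mul_le (hq : 0 < q) : √(3 + 4 * q ^ 2) * q ≤ 2 * q ^ 2 + 3 / 4 := by
  rw [← sqrt_sq hq.le, ← sqrt_mul (by positivity), sqrt_sq hq.le]
  apply sqrt_le_iff.2
  constructor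
  · positivity
  · nlinarith

theorem le_flowF₂ (hq : 0 < q) (hy0 : 0 ≤ y) (hc : q ^ 2 ≤ 7 / 10) (hz : y ^ 2 ≤ 542 / 1000) :
    √(3 + 4 * q ^ 2) * flowF₁ (87 / 100) q y ≤ flowF₂ (87 / 100) q y := by
  have h2 : 0 < 1 - y ^ 2 := by linarith
  have h3 := flow_poly_small (sq_nonneg q) hc (sq_nonneg y) hz
  have hk := sqrt_mul_le hq
  have hk0 : 0 ≤ √(3 + 4 * q ^ 2) * q := by positivity
  have hN : 0 ≤ flowN (87 / 100) q y := by
    unfold flowN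
    nlinarith [mul_nonneg (sq_nonneg q) (sub_nonneg.2 hz)]
  have hy2 : 2 * y ≤ 20 / 7 * y ^ 2 + 7 / 20 := by nlinarith [sq_nonneg (y - 7 / 20)]
  rw [flowF₂, flowF₁, le_div_iff₀ (by positivity)]
  have e : √(3 + 4 * q ^ 2) * (y * flowN (87 / 100) q y * (1 + q ^ 2 * y ^ 2) /
      (q * (1 - y ^ 2) ^ 3)) * (2 * q ^ 2 * (1 - y ^ 2) ^ 4) =
      (1 + q ^ 2 * y ^ 2) * ((1 - y ^ 2) * flowN (87 / 100) q y * (√(3 + 4 * q ^ 2) * q) *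
        (2 * y)) := by
    field_simp
  rw [e]
  refine mul_le_mul_of_nonneg_left ?_ (by positivity)
  calc (1 - y ^ 2) * flowN (87 / 100) q y * (√(3 + 4 * q ^ 2) * q) * (2 * y) ≤
      (1 - y ^ 2) * flowN (87 / 100) q y * (2 * q ^ 2 + 3 / 4) * (20 / 7 * y ^ 2 + 7 / 20) := by
        gcongr
    _ ≤ _ := by
      unfold flowN
      linarith

theorem flowF₁_le (hq : 0 < q) (hz : y ^ 2 ≤ 542 / 1000)
    (h : y ^ 2 * (2 + q ^ 2 * y ^ 2) ≤ 4 * q ^ 2 * (1 - y ^ 2)) :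
    flowF₁ (87 / 100) q y ≤ √(3 + 4 * q ^ 2) * flowF (87 / 100) q y := by
  have h2 : 0 < 1 - y ^ 2 := by linarith
  have h3 := flow_poly_sq (sq_nonneg y) hz h
  have h4 : y * flowN (87 / 100) q y ≤
      √(3 + 4 * q ^ 2) * q * ((87 / 100 - y ^ 2) * (1 - y ^ 2)) := by
    refine (le_abs_self _).trans (abs_le_of_sq_le_sq ?_ ?_)
    · rw [mul_pow, mul_pow, mul_pow _ q, sq_sqrt (by positivity), flowN]
      linarith
    · have : 0 ≤ 87 / 100 - y ^ 2 := by linarith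
      positivity
  rw [flowF₁, flowF, flowV, div_le_iff₀ (by positivity)]
  have e : √(3 + 4 * q ^ 2) * ((87 / 100 - y ^ 2) * ((1 + q ^ 2 * y ^ 2) / (1 - y ^ 2) ^ 2)) *
      (q * (1 - y ^ 2) ^ 3) = √(3 + 4 * q ^ 2) * q * ((87 / 100 - y ^ 2) * (1 - y ^ 2)) *
      (1 + q ^ 2 * y ^ 2) := by
    field_simp
  rw [e]
  gcongr
end

end

section

/-- Along a flow, if every tail of `∑ (r v(2jh) - v((2j+1)h))` is nonpositive, then the sum of
`(1 + y²) v` over odd minus `r` times even multiples of `h` is at least `q²`. -/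
theorem flow_sum_ge {q h r : ℝ} {y : ℝ → ℝ} {k : ℕ} (hq : 0 < q) (hh : 0 < h)
    (hy0 : y 0 = 0)
    (hd : ∀ t, 0 ≤ t → t ≤ (2 * k + 1 : ℝ) * h →
      HasDerivAt y ((1 + q ^ 2 * y t ^ 2) / (2 * q)) t)
    (hy1 : ∀ t, 0 ≤ t → t ≤ (2 * k + 1 : ℝ) * h → y t < 1)
    (hr : exp (√(3 + 4 * q ^ 2) * h) ≤ r)
    (hU : ∀ j < k + 1, ∑ i ∈ Ico j (k + 1),
      (r * flowV q (y ((2 * i : ℝ) * h)) - flowV q (y ((2 * i + 1 : ℝ) * h))) ≤ 0) :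
    q ^ 2 ≤ ∑ i ∈ range (k + 1),
      ((1 + y ((2 * i + 1 : ℝ) * h) ^ 2) * flowV q (y ((2 * i + 1 : ℝ) * h)) -
        r * ((1 + y ((2 * i : ℝ) * h) ^ 2) * flowV q (y ((2 * i : ℝ) * h)))) := by
  obtain ⟨P, hP⟩ : ∃ P : ℝ, P = (2 * k + 1 : ℝ) * h := ⟨_, rfl⟩
  rw [← hP] at hd hy1
  have hP0 : 0 ≤ P := by rw [hP]; positivity
  have hmono : ∀ s t, 0 ≤ s → s ≤ t → t ≤ P → y s ≤ y t :=
    le_of_deriv_nonneg hd fun t _ _ => by positivity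
  have hnn : ∀ t, 0 ≤ t → t ≤ P → 0 ≤ y t := fun t h1 h2 => by
    simpa [hy0] using hmono 0 t le_rfl h1 h2
  have hsq : ∀ t, 0 ≤ t → t ≤ P → y t ^ 2 < 1 := fun t h1 h2 => by
    nlinarith [hnn t h1 h2, hy1 t h1 h2]
  have hsqm : ∀ s t, 0 ≤ s → s ≤ t → t ≤ P → y s ^ 2 ≤ y t ^ 2 := fun s t h1 h2 h3 =>
    pow_le_pow_left₀ (hnn s h1 (h2.trans h3)) (hmono s t h1 h2 h3) 2
  have hV0 : ∀ t, 0 ≤ t → t ≤ P → 0 < flowV q (y t) := fun t h1 h2 => by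
    have := hsq t h1 h2
    have : 0 < 1 - y t ^ 2 := by linarith
    unfold flowV; positivity
  have hdV : ∀ t, 0 ≤ t → t ≤ P →
      HasDerivAt (fun t => flowV q (y t)) (flowL q (y t) * flowV q (y t)) t :=
    fun t h1 h2 => flow_hasDerivAt_V hq (hsq t h1 h2) (hd t h1 h2)
  have hL0 : ∀ t, 0 ≤ t → t ≤ P → 0 ≤ flowL q (y t) := fun t h1 h2 => by
    have := hsq t h1 h2
    have := hnn t h1 h2
    have : 0 < 1 - y t ^ 2 := by linarith
    unfold flowL; positivity
  have hLm : ∀ s t, 0 ≤ s → s ≤ t → t ≤ P → flowL q (y s) ≤ flowL q (y t) := by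
    intro s t h1 h2 h3
    have a1 := hsqm s t h1 h2 h3
    have a2 := hmono s t h1 h2 h3
    have a3 := hsq t (h1.trans h2) h3
    have a4 := hnn s h1 (h2.trans h3)
    have : 0 < 1 - y t ^ 2 := by linarith
    have := a4.trans a2
    unfold flowL
    gcongr
  have hVm : ∀ s t, 0 ≤ s → s ≤ t → t ≤ P → flowV q (y s) ≤ flowV q (y t) :=
    le_of_deriv_nonneg hdV fun t h1 h2 => mul_nonneg (hL0 t h1 h2) (hV0 t h1 h2).le
  -- positions
  have hpos : ∀ i < k + 1, 0 ≤ (2 * i : ℝ) * h ∧ (2 * i : ℝ) * h ≤ (2 * i + 1 : ℝ) * h ∧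
      (2 * i + 1 : ℝ) * h ≤ P := by
    intro i hi
    have : (i : ℝ) ≤ k := by exact_mod_cast Nat.lt_succ_iff.1 hi
    refine ⟨by positivity, by nlinarith, ?_⟩
    rw [hP]
    gcongr
  by_cases hJ : 2 * q ^ 2 ≤ flowJ q (y P)
  · -- direct estimate
    have hdJ : ∀ t, 0 ≤ t → t ≤ P → HasDerivAt (fun t => flowJ q (y t))
        (y t * (1 + q ^ 2 * y t ^ 2) / q * flowV q (y t)) t :=
      fun t h1 h2 => flow_hasDerivAt_J hq (hsq t h1 h2) (hd t h1 h2)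
    have hIm : ∀ s t, 0 ≤ s → s ≤ t → t ≤ P →
        y s * (1 + q ^ 2 * y s ^ 2) / q * flowV q (y s) ≤
          y t * (1 + q ^ 2 * y t ^ 2) / q * flowV q (y t) := by
      intro s t h1 h2 h3
      have a1 := hsqm s t h1 h2 h3
      have a2 := hmono s t h1 h2 h3
      have a4 := hnn s h1 (h2.trans h3)
      have a5 := hVm s t h1 h2 h3
      have a6 := hV0 s h1 (h2.trans h3)
      have := a4.trans a2
      gcongr
    have hconv : ∀ M, h ≤ M → M + h ≤ P →
        2 * flowJ q (y M) ≤ flowJ q (y (M + h)) + flowJ q (y (M - h)) := by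
      intro M h1 h2
      have := le_of_deriv_nonneg (B := h)
        (g := fun t => flowJ q (y (M + t)) + flowJ q (y (M - t)))
        (g' := fun t => y (M + t) * (1 + q ^ 2 * y (M + t) ^ 2) / q * flowV q (y (M + t))
          - y (M - t) * (1 + q ^ 2 * y (M - t) ^ 2) / q * flowV q (y (M - t))) ?_ ?_
        0 h le_rfl hh.le le_rfl
      · simp only [add_zero, sub_zero] at this
        linarith
      · intro t h3 h4
        have d1 := (hdJ (M + t) (by linarith) (by linarith)).comp_const_add M t
        have d2 := (hdJ (M - t) (by linarith) (by linarith)).comp_const_sub M t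
        exact d1.add d2
      · intro t h3 h4
        have := hIm (M - t) (M + t) (by linarith) (by linarith) (by linarith)
        linarith
    have hpair : ∀ M, 0 ≤ M → M + h ≤ P → flowJ q (y (M + h)) - flowJ q (y M) ≤
        (y (M + h) ^ 2 - y M ^ 2) * flowV q (y (M + h)) := by
      intro M h1 h2
      have := le_of_deriv_nonneg (B := h)
        (g := fun t => y (M + t) ^ 2 * flowV q (y (M + h)) - flowJ q (y (M + t)))
        (g' := fun t => y (M + t) * (1 + q ^ 2 * y (M + t) ^ 2) / q *
          (flowV q (y (M + h)) - flowV q (y (M + t)))) ?_ ?_ 0 h le_rfl hh.le le_rfl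
      · simp only [add_zero] at this
        linarith
      · intro t h3 h4
        have d0 := flow_hasDerivAt_sq (hd (M + t) (by linarith) (by linarith))
        have d1 := (d0.comp_const_add M t).mul_const (flowV q (y (M + h)))
        have d2 := (hdJ (M + t) (by linarith) (by linarith)).comp_const_add M t
        exact (d1.sub d2).congr_deriv (by ring)
      · intro t h3 h4
        have a1 := hVm (M + t) (M + h) (by linarith) (by linarith) h2
        have a2 := hnn (M + t) (by linarith) (by linarith)
        refine mul_nonneg (by positivity) (by linarith)
    have hsum : ∀ n < k + 1, flowJ q (y ((2 * n + 1 : ℝ) * h)) ≤ 2 * ∑ i ∈ range (n + 1),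
        (y ((2 * i + 1 : ℝ) * h) ^ 2 - y ((2 * i : ℝ) * h) ^ 2) *
          flowV q (y ((2 * i + 1 : ℝ) * h)) := by
      have hJ0 : flowJ q (y 0) = 0 := by simp [flowJ, hy0]
      intro n
      induction n with
      | zero =>
        intro h0
        have h1 := hpair 0 le_rfl (by have := (hpos 0 h0).2.2; simpa using this)
        simp only [zero_add, hJ0] at h1
        have h2 := hnn h hh.le (by have := (hpos 0 h0).2.2; simpa using this)
        have h3 := hV0 h hh.le (by have := (hpos 0 h0).2.2; simpa using this)
        simp only [hy0, range_one, sum_singleton, Nat.cast_zero, mul_zero, zero_mul, zero_add,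
          one_mul] at h1 ⊢
        have := mul_nonneg (sq_nonneg (y h)) h3.le
        linarith
      | succ n ih =>
        intro h0
        have h1 := ih (by omega)
        rw [Finset.sum_range_succ]
        have hn := mul_nonneg (Nat.cast_nonneg (α := ℝ) n) hh.le
        obtain ⟨p1, p2, p3⟩ := hpos (n + 1) h0
        have e1 : (2 * (n + 1 : ℕ) : ℝ) * h + h = (2 * (n + 1 : ℕ) + 1 : ℝ) * h := by ring
        have e2 : (2 * (n + 1 : ℕ) : ℝ) * h - h = (2 * n + 1 : ℝ) * h := by push_cast; ring
        have h2 := hpair _ p1 (by rw [e1]; exact p3)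
        have h3 := hconv ((2 * (n + 1 : ℕ) : ℝ) * h) (by push_cast; linarith)
          (by rw [e1]; exact p3)
        rw [e1] at h2
        rw [e1, e2] at h3
        linarith
    have h1 := hsum k (by omega)
    rw [← hP] at h1
    have h2 := sum_mul_nonpos_of_tails_nonpos (m := k + 1)
      (e := fun i => r * flowV q (y ((2 * i : ℝ) * h)) - flowV q (y ((2 * i + 1 : ℝ) * h)))
      (l := fun i => 1 + y ((2 * i : ℝ) * h) ^ 2) (fun i _ => by positivity) ?_ hU
    · have e : ∑ i ∈ range (k + 1),
          ((1 + y ((2 * i + 1 : ℝ) * h) ^ 2) * flowV q (y ((2 * i + 1 : ℝ) * h)) -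
            r * ((1 + y ((2 * i : ℝ) * h) ^ 2) * flowV q (y ((2 * i : ℝ) * h)))) =
          ∑ i ∈ range (k + 1), (y ((2 * i + 1 : ℝ) * h) ^ 2 - y ((2 * i : ℝ) * h) ^ 2) *
            flowV q (y ((2 * i + 1 : ℝ) * h)) -
          ∑ i ∈ range (k + 1), (1 + y ((2 * i : ℝ) * h) ^ 2) *
            (r * flowV q (y ((2 * i : ℝ) * h)) - flowV q (y ((2 * i + 1 : ℝ) * h))) := by
        rw [← Finset.sum_sub_distrib]
        exact Finset.sum_congr rfl fun i _ => by ring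
      rw [e]
      linarith
    · intro i hi
      have := hpos (i + 1) hi
      have := hpos i (by omega)
      have := hsqm ((2 * i : ℝ) * h) ((2 * (i + 1 : ℕ) : ℝ) * h) (by tauto)
        (by push_cast; nlinarith) (by linarith)
      simpa using this
  · -- comparison with an explicit function
    have hreg : ∀ t, 0 ≤ t → t ≤ P →
        y t ^ 2 * (2 + q ^ 2 * y t ^ 2) ≤ 4 * q ^ 2 * (1 - y t ^ 2) := by
      intro t h1 h2
      have h3 := flowJ_region (hnn P hP0 le_rfl) (hy1 P hP0 le_rfl) (not_le.1 hJ).le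
      have h4 := hsqm t P h1 h2 le_rfl
      have : 4 * q ^ 2 * (1 - y P ^ 2) ≤ 4 * q ^ 2 * (1 - y t ^ 2) := by gcongr
      have : y t ^ 2 * (2 + q ^ 2 * y t ^ 2) ≤ y P ^ 2 * (2 + q ^ 2 * y P ^ 2) := by gcongr
      linarith
    obtain ⟨κ, hκ⟩ : ∃ κ, κ = √(3 + 4 * q ^ 2) := ⟨_, rfl⟩
    have hκ0 : 0 ≤ κ := by rw [hκ]; positivity
    have hmain : ∃ Z : ℝ, (Z = 21 / 25 ∨ Z = 87 / 100) ∧ (∀ t, 0 ≤ t → t ≤ P → y t ^ 2 ≤ Z) ∧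
        (∀ t, 0 ≤ t → t ≤ P → flowF₁ Z q (y t) ≤ κ * flowF Z q (y t)) ∧
        κ * flowG Z q (y P) + Z - flowF Z q (y P) ≤ 2 * ∑ j ∈ range (k + 1),
          (exp (κ * h) * flowF Z q (y ((2 * j : ℝ) * h))
            - flowF Z q (y ((2 * j + 1 : ℝ) * h))) := by
      have hG : ∀ Z, ∀ t, 0 ≤ t → t ≤ P →
          HasDerivAt (fun t => flowG Z q (y t)) (flowF Z q (y t)) t :=
        fun Z t h1 h2 => flow_hasDerivAt_G Z hq (hsq t h1 h2) (hd t h1 h2)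
      have hF : ∀ Z, ∀ t, 0 ≤ t → t ≤ P →
          HasDerivAt (fun t => flowF Z q (y t)) (flowF₁ Z q (y t)) t :=
        fun Z t h1 h2 => flow_hasDerivAt_F Z hq (hsq t h1 h2) (hd t h1 h2)
      have hF₁ : ∀ Z, ∀ t, 0 ≤ t → t ≤ P →
          HasDerivAt (fun t => flowF₁ Z q (y t)) (flowF₂ Z q (y t)) t :=
        fun Z t h1 h2 => flow_hasDerivAt_F₁ Z hq (hsq t h1 h2) (hd t h1 h2)
      have hG0 : ∀ Z, flowG Z q (y 0) = 0 := fun Z => by simp [flowG, hy0]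
      have hF0 : ∀ Z, flowF Z q (y 0) = Z := fun Z => by simp [flowF, flowV, hy0]
      have hF₁0 : ∀ Z, flowF₁ Z q (y 0) = 0 := fun Z => by simp [flowF₁, hy0]
      rcases le_total (7 / 10) (q ^ 2) with hc | hc
      · have hz : ∀ t, 0 ≤ t → t ≤ P → y t ^ 2 ≤ 83 / 100 := by
          intro t h1 h2
          have h3 := hreg t h1 h2
          by_contra! h4
          nlinarith [sq_pos_of_pos hq, mul_pos (sq_pos_of_pos hq) (sub_pos.2 h4)]
        have hle : ∀ t, 0 ≤ t → t ≤ P →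
            flowF₂ (21 / 25) q (y t) ≤ κ ^ 2 * flowF (21 / 25) q (y t) := by
          intro t h1 h2
          rw [hκ]
          exact flowF₂_le hq (hsq t h1 h2) hc (hz t h1 h2)
        refine ⟨21 / 25, Or.inl rfl, fun t h1 h2 => (hz t h1 h2).trans (by norm_num), ?_, ?_⟩
        · intro t h1 h2
          exact deriv_le_mul_of_deriv2_le hκ0 (hF _) (hF₁ _) hle (hF₁0 _)
            (by rw [hF0]; norm_num) h1 h2
        · have := two_mul_sum_ge_of_deriv2_le hκ0 (hG _) (hF _) (hF₁ _) hle (hG0 _) (hF₁0 _)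
            (by rw [hF0]; norm_num) hh.le k hP.ge
          rwa [hF0, ← hP] at this
      · have hz : ∀ t, 0 ≤ t → t ≤ P → y t ^ 2 ≤ 542 / 1000 := fun t h1 h2 =>
          small_region (sq_nonneg q) hc (hreg t h1 h2)
        have hle₁ : ∀ t, 0 ≤ t → t ≤ P →
            flowF₁ (87 / 100) q (y t) ≤ κ * flowF (87 / 100) q (y t) := by
          intro t h1 h2
          rw [hκ]
          exact flowF₁_le hq (hz t h1 h2) (hreg t h1 h2)
        have hle₂ : ∀ t, 0 ≤ t → t ≤ P →
            κ * flowF₁ (87 / 100) q (y t) ≤ flowF₂ (87 / 100) q (y t) := by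
          intro t h1 h2
          rw [hκ]
          exact le_flowF₂ hq (hnn t h1 h2) hc (hz t h1 h2)
        refine ⟨87 / 100, Or.inr rfl, fun t h1 h2 => (hz t h1 h2).trans (by norm_num), hle₁, ?_⟩
        have := two_mul_sum_ge_of_le_deriv2 hκ0 (hG _) (hF _) (hF₁ _) hle₁ hle₂ (hG0 _)
          hh.le k hP.ge
        rwa [hF0, ← hP] at this
    obtain ⟨Z, hZ, hzZ, hmonoH, hsum⟩ := hmain
    have hZ1 : 0 ≤ 1 + Z := by rcases hZ with rfl | rfl <;> norm_num
    -- the logarithmic derivative reaches `κ`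
    have hLP : κ ≤ flowL q (y P) := by
      by_contra! hlt
      have h1 := hU k (by omega)
      simp only [Nat.Ico_succ_singleton, sum_singleton, ← hP] at h1
      obtain ⟨p1, p2, p3⟩ := hpos k (by omega)
      have h2 : flowV q (y ((2 * k : ℝ) * h + h)) ≤
          exp (flowL q (y P) * h) * flowV q (y ((2 * k : ℝ) * h)) := by
        refine mul_exp_ge (F := fun t => flowV q (y t)) (B := P) hdV ?_ p1 hh.le (by linarith)
        intro t h3 h4
        have := hLm t P h3 h4 le_rfl
        have := hV0 t h3 h4
        gcongr
      have e1 : (2 * k : ℝ) * h + h = P := by rw [hP]; ring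
      rw [e1] at h2
      have h3 := hV0 _ p1 (p2.trans p3)
      have h4 : exp (flowL q (y P) * h) < exp (κ * h) := exp_lt_exp.2 (by nlinarith)
      rw [← hκ] at hr
      nlinarith
    obtain ⟨t, ht, hLt⟩ : ∃ t ∈ Set.Icc 0 P, flowL q (y t) = κ := by
      have hcont : ContinuousOn (fun t => flowL q (y t)) (Set.Icc 0 P) := by
        intro t ht
        have h1 := (hd t ht.1 ht.2).continuousAt
        have h2 := hsq t ht.1 ht.2
        have h3 : q * (1 - y t ^ 2) ≠ 0 := mul_ne_zero hq.ne' (by linarith)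
        unfold flowL
        exact ((h1.mul (continuousAt_const.add (continuousAt_const.mul (h1.pow 2)))).div
          (continuousAt_const.mul (continuousAt_const.sub (h1.pow 2))) h3).continuousWithinAt
      have := intermediate_value_Icc hP0 hcont
      have h0 : flowL q (y 0) = 0 := by simp [flowL, hy0]
      exact this ⟨by simpa [h0] using hκ0, hLP⟩
    have h1 := flow_value_ge hZ hq (hnn t ht.1 ht.2) (hy1 t ht.1 ht.2) (by rw [hLt, hκ])
    have h2 := le_of_deriv_nonneg (B := P)
      (g := fun t => κ * flowG Z q (y t) - flowF Z q (y t))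
      (g' := fun t => κ * flowF Z q (y t) - flowF₁ Z q (y t))
      (fun t h1 h2 => ((flow_hasDerivAt_G Z hq (hsq t h1 h2) (hd t h1 h2)).const_mul κ).sub
        (flow_hasDerivAt_F Z hq (hsq t h1 h2) (hd t h1 h2)))
      (fun t h1 h2 => by linarith [hmonoH t h1 h2]) t P ht.1 ht.2 le_rfl
    rw [← hκ] at h1 hr
    have h3 : ∑ j ∈ range (k + 1), (exp (κ * h) * flowF Z q (y ((2 * j : ℝ) * h))
            - flowF Z q (y ((2 * j + 1 : ℝ) * h))) ≤
        ∑ j ∈ range (k + 1), (r * flowF Z q (y ((2 * j : ℝ) * h))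
            - flowF Z q (y ((2 * j + 1 : ℝ) * h))) := by
      refine Finset.sum_le_sum fun i hi => ?_
      obtain ⟨p1, p2, p3⟩ := hpos i (mem_range.1 hi)
      have a1 := hzZ _ p1 (p2.trans p3)
      have a2 := hV0 _ p1 (p2.trans p3)
      have : 0 ≤ flowF Z q (y ((2 * i : ℝ) * h)) := mul_nonneg (by linarith) a2.le
      gcongr
    have h4 := hU 0 (by omega)
    rw [← Finset.range_eq_Ico] at h4
    have e : ∑ i ∈ range (k + 1),
          ((1 + y ((2 * i + 1 : ℝ) * h) ^ 2) * flowV q (y ((2 * i + 1 : ℝ) * h)) -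
            r * ((1 + y ((2 * i : ℝ) * h) ^ 2) * flowV q (y ((2 * i : ℝ) * h)))) =
        ∑ j ∈ range (k + 1), (r * flowF Z q (y ((2 * j : ℝ) * h))
            - flowF Z q (y ((2 * j + 1 : ℝ) * h))) -
          (1 + Z) * ∑ i ∈ range (k + 1),
            (r * flowV q (y ((2 * i : ℝ) * h)) - flowV q (y ((2 * i + 1 : ℝ) * h))) := by
      rw [Finset.mul_sum, ← Finset.sum_sub_distrib]
      exact Finset.sum_congr rfl fun i _ => by unfold flowF; ring
    rw [e]
    have := mul_nonpos_of_nonneg_of_nonpos hZ1 h4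
    linarith

end

section

theorem one_add_sq_tan_half {x C S c : ℝ} (hS : S ^ 2 + C ^ 2 = 1) (hC : 1 + C ≠ 0)
    (hx : 1 + x ≠ 0) (hx' : 1 - x ≠ 0) (hc : c = (1 - x) / (1 + x)) :
    S ^ 2 / ((1 + C) ^ 2 * c) = (1 - C) * (1 + x) / ((1 + C) * (1 - x)) := by
  have : S ^ 2 = (1 - C) * (1 + C) := by linarith
  rw [this, hc]
  field_simp

theorem Adm.wT_le_of_flush {h x ρ : ℝ} {m : ℕ} {a : ℕ → ℝ} (A : Adm h x 0 m a) (hm : 1 ≤ m)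
    (hh : 0 < h) (hx : -1 < x) (hρ : 0 < ρ)
    (hκ : ρ * exp (√(3 + 4 * ((1 - x) / (1 + x))) * h) ≤ 1)
    (ha : ∀ i < m, a i = (2 * i : ℝ) * h) (hC : pairSum ρ h (wC x) a 0 m ≤ 0) :
    pairSum ρ h (wT x) a 0 m ≤ -(ρ * wU (-x) 0) := by
  classical
  have hx1 := A.lt_one
  have x1 : 0 < 1 - x := by linarith
  have x2 : 0 < 1 + x := by linarith
  obtain ⟨c, hc⟩ : ∃ c, c = (1 - x) / (1 + x) := ⟨_, rfl⟩
  have hc0 : 0 < c := by rw [hc]; positivity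
  obtain ⟨q, hq⟩ : ∃ q, q = √c := ⟨_, rfl⟩
  have hq0 : 0 < q := by rw [hq]; positivity
  have hq2 : q ^ 2 = c := by rw [hq]; exact sq_sqrt hc0.le
  obtain ⟨y, hy⟩ : ∃ y : ℝ → ℝ, y = fun t => sin t / ((1 + cos t) * q) := ⟨_, rfl⟩
  have hysq : ∀ t, x < cos t → y t ^ 2 = (1 - cos t) * (1 + x) / ((1 + cos t) * (1 - x)) := by
    intro t ht
    rw [hy]
    simp only
    rw [div_pow, mul_pow, hq2]
    exact one_add_sq_tan_half (sin_sq_add_cos_sq t) (by linarith) x2.ne' x1.ne' hc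
  have hy1 : ∀ t, x < cos t → 1 - y t ^ 2 = 2 * (cos t - x) / ((1 + cos t) * (1 - x)) := by
    intro t ht
    have : 1 + cos t ≠ 0 := by linarith
    rw [hysq t ht]
    field_simp
    ring
  have hv : ∀ t, x < cos t → wC x t = 2 / (1 - x) ^ 2 * flowV q (y t) := by
    intro t ht
    have h1 : 1 + cos t ≠ 0 := by linarith
    have h2 : cos t - x ≠ 0 := by linarith
    rw [flowV, hy1 t ht, hysq t ht, wC, hq2, hc]
    field_simp
    ring
  have hvT : ∀ t, x < cos t → wT x t = 1 / (1 - x) * ((1 + y t ^ 2) * flowV q (y t)) := by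
    intro t ht
    have h1 : 1 + cos t ≠ 0 := by linarith
    have h2 : cos t - x ≠ 0 := by linarith
    rw [flowV, hy1 t ht, hysq t ht, wT, hq2, hc]
    field_simp
    ring
  obtain ⟨r, hr⟩ : ∃ r, r = 1 / ρ := ⟨_, rfl⟩
  have hρr : ρ * r = 1 := by rw [hr]; field_simp
  have hr0 : 0 < r := by rw [hr]; positivity
  have hexp : exp (√(3 + 4 * q ^ 2) * h) ≤ r := by
    rw [hq2, hc, hr, le_div_iff₀ hρ]
    linarith
  have hvM : ∀ i < m, x < cos ((2 * i : ℝ) * h) := fun i hi => by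
    rw [← ha i hi]; exact A.vis_outer hh hi
  have hvP : ∀ i < m, x < cos ((2 * i + 1 : ℝ) * h) := fun i hi => by
    have := A.vis i hi
    rw [ha i hi] at this
    convert this using 2; ring
  have hbd : ∀ i < m, (2 * i + 1 : ℝ) * h ≤ π := fun i hi => by
    have := A.bound i hi
    rw [ha i hi] at this
    linarith
  obtain ⟨e, he⟩ : ∃ e : ℕ → ℝ, e = fun i : ℕ =>
    r * flowV q (y ((2 * i : ℝ) * h)) - flowV q (y ((2 * i + 1 : ℝ) * h)) := ⟨_, rfl⟩
  have hposV : ∀ t, x < cos t → 0 < flowV q (y t) := fun t ht => by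
    have h1 : 0 < 1 - y t ^ 2 := by
      rw [hy1 t ht]
      have : 0 < 1 + cos t := by linarith
      have : 0 < cos t - x := by linarith
      positivity
    unfold flowV; positivity
  have hCe : pairSum ρ h (wC x) a 0 m = 2 / (1 - x) ^ 2 * ρ * ∑ i ∈ range m, e i := by
    rw [pairSum, ← Finset.range_eq_Ico, Finset.mul_sum]
    refine Finset.sum_congr rfl fun i hi => ?_
    have hi := mem_range.1 hi
    have e1 : a i + h = (2 * i + 1 : ℝ) * h := by rw [ha i hi]; ring
    rw [e1, ha i hi, hv _ (hvM i hi), hv _ (hvP i hi), he]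
    linear_combination (-(2 / (1 - x) ^ 2) * flowV q (y ((2 * i : ℝ) * h))) * hρr
  have hTe : pairSum ρ h (wT x) a 0 m = -(1 / (1 - x) * ρ * ∑ i ∈ range m,
      ((1 + y ((2 * i + 1 : ℝ) * h) ^ 2) * flowV q (y ((2 * i + 1 : ℝ) * h)) -
        r * ((1 + y ((2 * i : ℝ) * h) ^ 2) * flowV q (y ((2 * i : ℝ) * h))))) := by
    rw [pairSum, ← Finset.range_eq_Ico, Finset.mul_sum, ← Finset.sum_neg_distrib]
    refine Finset.sum_congr rfl fun i hi => ?_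
    have hi := mem_range.1 hi
    have e1 : a i + h = (2 * i + 1 : ℝ) * h := by rw [ha i hi]; ring
    rw [e1, ha i hi, hvT _ (hvM i hi), hvT _ (hvP i hi)]
    linear_combination (-(1 / (1 - x)) * ((1 + y ((2 * i : ℝ) * h) ^ 2) *
      flowV q (y ((2 * i : ℝ) * h)))) * hρr
  have hUm : ∑ i ∈ range m, e i ≤ 0 := by
    rw [hCe] at hC
    exact nonpos_of_mul_nonpos_right hC (by positivity)
  have hex : ∃ k, k < m ∧ ∑ i ∈ range (k + 1), e i ≤ 0 :=
    ⟨m - 1, by omega, by rwa [Nat.sub_add_cancel hm]⟩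
  obtain ⟨hkm, hk⟩ := Nat.find_spec hex
  have hmin := fun j => Nat.find_min hex (m := j)
  set k := Nat.find hex
  clear_value k
  have hpre : ∀ j < k + 1, 0 ≤ ∑ i ∈ range j, e i := by
    intro j hj
    rcases j with _ | j
    · simp
    · by_contra! h1
      exact hmin j (by omega) ⟨by omega, h1.le⟩
  have hU : ∀ j < k + 1, ∑ i ∈ Ico j (k + 1), e i ≤ 0 := by
    intro j hj
    have h1 := Finset.sum_range_add_sum_Ico e hj.le
    have h2 := hpre j hj
    linarith
  have hvis : ∀ t, 0 ≤ t → t ≤ (2 * k + 1 : ℝ) * h → x < cos t := fun t h1 h2 =>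
    cos_gt_of_le (hbd k hkm) (hvP k hkm) h1 h2
  have main : q ^ 2 ≤ ∑ i ∈ range (k + 1),
      ((1 + y ((2 * i + 1 : ℝ) * h) ^ 2) * flowV q (y ((2 * i + 1 : ℝ) * h)) -
        r * ((1 + y ((2 * i : ℝ) * h) ^ 2) * flowV q (y ((2 * i : ℝ) * h)))) := by
    refine flow_sum_ge hq0 hh (by rw [hy]; simp) ?_ ?_ hexp ?_
    · intro t h1 h2
      have h3 := hvis t h1 h2
      have h4 : 1 + cos t ≠ 0 := by linarith
      have d := (hasDerivAt_sin t).div (((hasDerivAt_cos t).const_add 1).mul_const q)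
        (mul_ne_zero h4 hq0.ne')
      have e1 := sin_sq_add_cos_sq t
      rw [hy]
      refine HasDerivAt.congr_deriv (f := fun t => sin t / ((1 + cos t) * q)) d ?_
      field_simp
      linear_combination e1
    · intro t h1 h2
      have h3 := hvis t h1 h2
      have h4 := hy1 t h3
      have h5 : 0 < 1 - y t ^ 2 := by
        rw [h4]
        have : 0 < 1 + cos t := by linarith
        have : 0 < cos t - x := by linarith
        positivity
      nlinarith
    · rw [he] at hU
      exact hU
  have hbad : ∀ i, k ≤ i → i < m → e i ≤ 0 := by
    have hek : e k ≤ 0 := by simpa using hU k (by omega)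
    intro i h1 h2
    have hk2 : ((k : ℕ) : ℝ) ≤ i := by exact_mod_cast h1
    have hB : (2 * i : ℝ) * h + h = (2 * i + 1 : ℝ) * h := by ring
    have h3 := wC_ratio_mono (B := (2 * i + 1 : ℝ) * h) (α := (2 * k : ℝ) * h)
      (α' := (2 * i : ℝ) * h) hx (hbd i h2) (hvP i h2) (by positivity) (by gcongr) hh.le hB.le
    have hB' : (2 * k : ℝ) * h + h = (2 * k + 1 : ℝ) * h := by ring
    rw [hB, hB', hv _ (hvM i h2), hv _ (hvP i h2), hv _ (hvM k hkm), hv _ (hvP k hkm)] at h3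
    have p1 := hposV _ (hvM i h2)
    have p2 := hposV _ (hvM k hkm)
    rw [he] at hek ⊢
    simp only at hek ⊢
    generalize flowV q (y ((2 * i : ℝ) * h)) = A at *
    generalize flowV q (y ((2 * i + 1 : ℝ) * h)) = B at *
    generalize flowV q (y ((2 * k : ℝ) * h)) = A' at *
    generalize flowV q (y ((2 * k + 1 : ℝ) * h)) = B' at *
    have h4 : B' * A ≤ B * A' := by
      have h5 : 0 < 2 / (1 - x) ^ 2 := by positivity
      have : (2 / (1 - x) ^ 2) ^ 2 * (B' * A) ≤ (2 / (1 - x) ^ 2) ^ 2 * (B * A') := by linarith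
      exact le_of_mul_le_mul_left this (by positivity)
    have : A' * (r * A - B) ≤ 0 := by nlinarith
    exact nonpos_of_mul_nonpos_right this p2
  have hDm : ∑ i ∈ range (k + 1),
      ((1 + y ((2 * i + 1 : ℝ) * h) ^ 2) * flowV q (y ((2 * i + 1 : ℝ) * h)) -
        r * ((1 + y ((2 * i : ℝ) * h) ^ 2) * flowV q (y ((2 * i : ℝ) * h)))) ≤
      ∑ i ∈ range m,
      ((1 + y ((2 * i + 1 : ℝ) * h) ^ 2) * flowV q (y ((2 * i + 1 : ℝ) * h)) -
        r * ((1 + y ((2 * i : ℝ) * h) ^ 2) * flowV q (y ((2 * i : ℝ) * h)))) := by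
    refine Finset.sum_le_sum_of_subset_of_nonneg (range_subset_range.2 (by omega)) ?_
    intro i hi hi'
    have hi := mem_range.1 hi
    have hi' : k + 1 ≤ i := by simpa using hi'
    have h1 := hbad i (by omega) hi
    rw [he] at h1
    simp only at h1
    have h2 : y ((2 * i : ℝ) * h) ^ 2 ≤ y ((2 * i + 1 : ℝ) * h) ^ 2 := by
      have h3 : cos ((2 * i + 1 : ℝ) * h) ≤ cos ((2 * i : ℝ) * h) :=
        cos_le_cos_of_nonneg_of_le_pi (by positivity) (hbd i hi) (by linarith)
      have h4 := hvP i hi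
      have h5 := hvM i hi
      have h6 := cos_le_one ((2 * i : ℝ) * h)
      rw [hysq _ h4, hysq _ h5]
      have h7 : 0 < 1 + cos ((2 * i + 1 : ℝ) * h) := by linarith
      have h8 : 0 ≤ 1 - cos ((2 * i + 1 : ℝ) * h) := by linarith
      have h9 : 0 ≤ (1 - cos ((2 * i + 1 : ℝ) * h)) * (1 + x) := mul_nonneg h8 (by linarith)
      gcongr
    have p1 := hposV _ (hvM i hi)
    have p2 := hposV _ (hvP i hi)
    have : (1 + y ((2 * i : ℝ) * h) ^ 2) * flowV q (y ((2 * i + 1 : ℝ) * h)) ≤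
      (1 + y ((2 * i + 1 : ℝ) * h) ^ 2) * flowV q (y ((2 * i + 1 : ℝ) * h)) := by gcongr
    have h7 : 0 ≤ 1 + y ((2 * i : ℝ) * h) ^ 2 := by positivity
    nlinarith
  have hD := main.trans hDm
  rw [hTe, wU, cos_zero]
  rw [hq2] at hD
  have h1 : 1 / (1 - x) * ρ * c ≤ 1 / (1 - x) * ρ * ∑ i ∈ range m,
      ((1 + y ((2 * i + 1 : ℝ) * h) ^ 2) * flowV q (y ((2 * i + 1 : ℝ) * h)) -
        r * ((1 + y ((2 * i : ℝ) * h) ^ 2) * flowV q (y ((2 * i : ℝ) * h)))) := by gcongr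
  have h2 : 1 / (1 - x) * ρ * c = ρ * (1 - -x)⁻¹ := by
    rw [hc, sub_neg_eq_add]
    field_simp
  linarith

end

section

/-- A critical configuration: the functional vanishes there and is nonpositive everywhere. -/
structure IsOpt (ρ h : ℝ) (σ τ m p : ℕ) (x : ℝ) (a b : ℕ → ℝ) : Prop where
  left : Adm h x σ m a
  right : Adm h (-x) τ p b
  zero : sideE ρ h x σ m a + sideE ρ h (-x) τ p b = 0
  max : ∀ x' a' b', Adm h x' σ m a' → Adm h (-x') τ p b' →
    sideE ρ h x' σ m a' + sideE ρ h (-x') τ p b' ≤ 0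

theorem HasDerivAt.nonpos_of_right_max {φ : ℝ → ℝ} {d : ℝ} (hd : HasDerivAt φ d 0)
    (hφ : ∀ᶠ t in 𝓝[>] 0, φ t ≤ φ 0) : d ≤ 0 := by
  have h1 : Filter.Tendsto (slope φ 0) (𝓝[>] 0) (𝓝 d) :=
    (hasDerivAt_iff_tendsto_slope.1 hd).mono_left
      (nhdsWithin_mono _ fun t (ht : 0 < t) => ht.ne')
  refine le_of_tendsto h1 ?_
  filter_upwards [hφ, self_mem_nhdsWithin] with t ht (ht0 : 0 < t)
  rw [slope_def_field]
  exact div_nonpos_of_nonpos_of_nonneg (by linarith) (by linarith)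

/-- Moving the pairs with index at least `j` by `t` towards the gap. -/
noncomputable def shiftTail (a : ℕ → ℝ) (j : ℕ) (t : ℝ) (i : ℕ) : ℝ := if j ≤ i then a i + t else a i

theorem shiftTail_zero (a : ℕ → ℝ) (j : ℕ) : shiftTail a j 0 = a := by
  ext i; simp [shiftTail]

theorem hasDerivAt_sideE_shiftTail {ρ h x : ℝ} {σ m : ℕ} {a : ℕ → ℝ} (A : Adm h x σ m a)
    (hh : 0 < h) (j : ℕ) :
    HasDerivAt (fun t => sideE ρ h x σ m (shiftTail a j t)) (pairSum ρ h (wS x) a j m) 0 := by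
  have h1 : HasDerivAt (fun t => sideE ρ h x σ m (shiftTail a j t))
      (∑ i ∈ Ico 0 m, if j ≤ i then (wS x (a i) - ρ * wS x (a i + h)) else 0) 0 := by
    unfold sideE pairSum
    refine HasDerivAt.sub_const _ (HasDerivAt.fun_sum fun i hi => ?_)
    have him := (mem_Ico.1 hi).2
    by_cases hji : j ≤ i
    · simp only [shiftTail, hji, if_true]
      have d1 : HasDerivAt (fun t => wU x (a i + t)) (wS x (a i)) 0 := by
        have := hasDerivAt_wU (t := a i + 0) (by simpa using A.vis_outer hh him)
        simpa using this.comp_const_add (a i) 0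
      have d2 : HasDerivAt (fun t => wU x (a i + t + h)) (wS x (a i + h)) 0 := by
        have := hasDerivAt_wU (t := (a i + h) + 0) (by simpa using A.vis i him)
        have := this.comp_const_add (a i + h) 0
        simpa [add_right_comm] using this
      exact d1.sub (d2.const_mul ρ)
    · simp only [shiftTail, hji, if_false]
      exact hasDerivAt_const _ _
  refine h1.congr_deriv ?_
  rw [← Finset.sum_filter, pairSum]
  refine Finset.sum_congr ?_ fun _ _ => rfl
  ext i
  simp only [mem_filter, mem_Ico]
  omega

theorem Adm.eventually_shiftTail {h x : ℝ} {σ m : ℕ} {a : ℕ → ℝ} (A : Adm h x σ m a)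
    (hx : -1 < x) (j : ℕ) : ∀ᶠ t in 𝓝[>] (0:ℝ), Adm h x σ m (shiftTail a j t) := by
  have h1 : ∀ i ∈ range m, ∀ᶠ t in 𝓝 (0:ℝ), x < cos (a i + t + h) ∧ a i + t + h < π := by
    intro i hi
    have him := mem_range.1 hi
    have c1 : ContinuousAt (fun t => cos (a i + t + h)) 0 := by fun_prop
    have c2 : ContinuousAt (fun t => a i + t + h) 0 := by fun_prop
    exact (c1.eventually_const_lt (by simpa using A.vis i him)).and
      (c2.eventually_lt_const (by simpa using A.lt_pi hx him))
  have h2 := (Filter.eventually_all_finset (range m)).2 h1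
  filter_upwards [self_mem_nhdsWithin, h2.filter_mono nhdsWithin_le_nhds] with t (ht : 0 < t) h3
  constructor
  · intro i hi
    have := A.start i hi
    unfold shiftTail; split_ifs <;> linarith
  · intro i hi
    have := A.gap i hi
    unfold shiftTail; split_ifs <;> linarith
  · intro i hi
    have h4 := A.bound i hi
    have h5 := (h3 i (mem_range.2 hi)).2
    unfold shiftTail; split_ifs <;> linarith
  · intro i hi
    have h4 := A.vis i hi
    have h5 := (h3 i (mem_range.2 hi)).1
    unfold shiftTail; split_ifs <;> linarith
  · exact A.lt_one

theorem Adm.eventually_shiftTail_neg {h x : ℝ} {σ m : ℕ} {a : ℕ → ℝ} (A : Adm h x σ m a)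
    (hh : 0 < h) {j : ℕ} (hj : j < m)
    (h0 : j = 0 → σ * h < a j) (h1 : ∀ k, k + 1 = j → a k + 2 * h < a j) :
    ∀ᶠ t in 𝓝[>] (0:ℝ), Adm h x σ m (shiftTail a j (-t)) := by
  have e1 : ∀ᶠ t in 𝓝 (0:ℝ), (j = 0 → σ * h < a j - t) ∧
      (∀ k, k + 1 = j → a k + 2 * h < a j - t) := by
    have c : ContinuousAt (fun t => a j - t) 0 := by fun_prop
    rcases Nat.eq_zero_or_pos j with rfl | hj0
    · filter_upwards [c.eventually_const_lt (u := σ * h) (by simpa using h0 rfl)] with t ht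
      exact ⟨fun _ => ht, fun k hk => by omega⟩
    · obtain ⟨k, rfl⟩ : ∃ k, j = k + 1 := ⟨j - 1, by omega⟩
      filter_upwards [c.eventually_const_lt (u := a k + 2 * h) (by simpa using h1 k rfl)]
        with t ht
      refine ⟨fun h => by omega, fun k' hk' => ?_⟩
      obtain rfl : k' = k := by omega
      exact ht
  filter_upwards [self_mem_nhdsWithin, e1.filter_mono nhdsWithin_le_nhds] with t (ht : 0 < t) h3
  have hgap : ∀ i, i + 1 < m →
      shiftTail a j (-t) i + 2 * h ≤ shiftTail a j (-t) (i + 1) := by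
    intro i hi
    have := A.gap i hi
    unfold shiftTail
    split_ifs with q1 q2
    · linarith
    · omega
    · obtain rfl : j = i + 1 := by omega
      have := h3.2 i rfl
      linarith
    · linarith
  have hstart0 : 0 < m → σ * h ≤ shiftTail a j (-t) 0 := by
    intro hm
    have := A.start 0 hm
    unfold shiftTail
    split_ifs with q1
    · obtain rfl : j = 0 := by omega
      have := h3.1 rfl
      linarith
    · linarith
  have hstart : ∀ i < m, σ * h ≤ shiftTail a j (-t) i := by
    intro i
    induction i with
    | zero => exact hstart0
    | succ i ih =>
      intro hi
      have := hgap i hi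
      have := ih (by omega)
      linarith
  refine ⟨hstart, hgap, ?_, ?_, A.lt_one⟩
  · intro i hi
    have h4 := A.bound i hi
    unfold shiftTail; split_ifs <;> linarith
  · intro i hi
    have h4 := A.vis i hi
    have h5 : 0 ≤ shiftTail a j (-t) i := le_trans (by positivity) (hstart i hi)
    refine h4.trans_le (cos_le_cos_of_nonneg_of_le_pi (by linarith) (A.bound i hi) ?_)
    unfold shiftTail; split_ifs <;> linarith

theorem hasDerivAt_wU_left {x α : ℝ} (hx : x < cos α) :
    HasDerivAt (fun y => wU y α) ((wU x α) ^ 2) x := by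
  have h1 : cos α - x ≠ 0 := by linarith
  have := ((hasDerivAt_id x).const_sub (cos α)).inv h1
  refine HasDerivAt.congr_deriv (f := fun y => wU y α) this ?_
  simp [wU]

theorem hasDerivAt_sideE_left {ρ h x : ℝ} {σ m : ℕ} {a : ℕ → ℝ} (A : Adm h x σ m a)
    (hh : 0 < h) :
    HasDerivAt (fun y => sideE ρ h y σ m a)
      (pairSum ρ h (fun t => wU x t ^ 2) a 0 m - σ * (ρ * wU x 0 ^ 2)) x := by
  unfold sideE pairSum
  refine HasDerivAt.sub (HasDerivAt.fun_sum fun i hi => ?_) ?_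
  · have him := (mem_Ico.1 hi).2
    exact (hasDerivAt_wU_left (A.vis_outer hh him)).sub
      ((hasDerivAt_wU_left (A.vis i him)).const_mul ρ)
  · exact ((hasDerivAt_wU_left (by simpa using A.lt_one)).const_mul ρ).const_mul _

theorem Adm.eventually_left {h x : ℝ} {σ m : ℕ} {a : ℕ → ℝ} (A : Adm h x σ m a) :
    ∀ᶠ y in 𝓝 x, Adm h y σ m a := by
  have h1 : ∀ i ∈ range m, ∀ᶠ y in 𝓝 x, y < cos (a i + h) := fun i hi =>
    continuousAt_id.eventually_lt_const (A.vis i (mem_range.1 hi))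
  filter_upwards [(Filter.eventually_all_finset (range m)).2 h1,
    continuousAt_id.eventually_lt_const A.lt_one] with y h2 h3
  exact ⟨A.start, A.gap, A.bound, fun i hi => h2 i (mem_range.2 hi), h3⟩

/-- The `wT`-weighted sum of one side in terms of the derivative in `x` and the value. -/
theorem Adm.wT_sum {ρ h x : ℝ} {σ m : ℕ} {a : ℕ → ℝ} (A : Adm h x σ m a) (hh : 0 < h) :
    pairSum ρ h (wT x) a 0 m - σ * (ρ * wU x 0) =
      (1 - x ^ 2) * (pairSum ρ h (fun t => wU x t ^ 2) a 0 m - σ * (ρ * wU x 0 ^ 2))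
        - x * sideE ρ h x σ m a := by
  have hc : ∀ t, x < cos t → wT x t = (1 - x ^ 2) * wU x t ^ 2 + (-x) * wU x t := by
    intro t ht
    have : cos t - x ≠ 0 := by linarith
    simp only [wT, wU]; field_simp; ring
  rw [pairSum_congr (w := fun t => (1 - x ^ 2) * wU x t ^ 2 + (-x) * wU x t)
    (fun i hi => hc _ (A.vis_outer hh hi)) (fun i hi => hc _ (A.vis i hi)),
    pairSum_add_mul ρ h (1 - x ^ 2) (-x) (fun t => wU x t ^ 2) (wU x), sideE]
  have h0 : wU x 0 = (1 - x ^ 2) * wU x 0 ^ 2 + (-x) * wU x 0 := by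
    rw [← hc 0 (by simpa using A.lt_one)]
    have : 1 - x ≠ 0 := by linarith [A.lt_one]
    simp only [wT, wU, cos_zero]; field_simp
  linear_combination (-(σ : ℝ) * ρ) * h0

namespace IsOpt
variable {ρ h : ℝ} {σ τ m p : ℕ} {x : ℝ} {a b : ℕ → ℝ}

theorem mirror (O : IsOpt ρ h σ τ m p x a b) : IsOpt ρ h τ σ p m (-x) b a where
  left := O.right
  right := by rw [neg_neg]; exact O.left
  zero := by rw [neg_neg, add_comm]; exact O.zero
  max := fun x' a' b' h1 h2 => by
    have := O.max (-x') b' a' h2 (by rwa [neg_neg])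
    rwa [neg_neg, add_comm] at this

theorem neg_one_lt (O : IsOpt ρ h σ τ m p x a b) : -1 < x := by linarith [O.right.lt_one]

theorem tail_nonpos (O : IsOpt ρ h σ τ m p x a b) (hh : 0 < h) (j : ℕ) :
    pairSum ρ h (wS x) a j m ≤ 0 := by
  refine HasDerivAt.nonpos_of_right_max (hasDerivAt_sideE_shiftTail O.left hh j) ?_
  filter_upwards [O.left.eventually_shiftTail O.neg_one_lt j] with t ht
  have h1 := O.max x _ b ht O.right
  have h2 := O.zero
  rw [shiftTail_zero]
  linarith

theorem tail_nonneg (O : IsOpt ρ h σ τ m p x a b) (hh : 0 < h) {j : ℕ} (hj : j < m)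
    (h0 : j = 0 → σ * h < a j) (h1 : ∀ k, k + 1 = j → a k + 2 * h < a j) :
    0 ≤ pairSum ρ h (wS x) a j m := by
  have hd := hasDerivAt_sideE_shiftTail (ρ := ρ) O.left hh j
  have hd' : HasDerivAt (fun t => sideE ρ h x σ m (shiftTail a j (-t)))
      (-pairSum ρ h (wS x) a j m) 0 := by
    have h3 : HasDerivAt (fun t => sideE ρ h x σ m (shiftTail a j t))
      (pairSum ρ h (wS x) a j m) (-0) := by simpa using hd
    refine HasDerivAt.congr_deriv (f := fun t => sideE ρ h x σ m (shiftTail a j (-t)))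
      (h3.scomp 0 (hasDerivAt_neg 0)) ?_
    simp
  have := HasDerivAt.nonpos_of_right_max hd' ?_
  · linarith
  filter_upwards [O.left.eventually_shiftTail_neg hh hj h0 h1] with t ht
  have h1 := O.max x _ b ht O.right
  have h2 := O.zero
  rw [neg_zero, shiftTail_zero]
  linarith

theorem balance (O : IsOpt ρ h σ τ m p x a b) (hh : 0 < h) :
    pairSum ρ h (wT x) a 0 m - σ * (ρ * wU x 0) =
      pairSum ρ h (wT (-x)) b 0 p - τ * (ρ * wU (-x) 0) := by
  have d1 := hasDerivAt_sideE_left (ρ := ρ) O.left hh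
  have d2 := hasDerivAt_sideE_left (ρ := ρ) O.right hh
  have d3 := d1.add (d2.scomp x (hasDerivAt_neg x))
  have hmax : IsLocalMax (fun y => sideE ρ h y σ m a + sideE ρ h (-y) τ p b) x := by
    have e2 : ∀ᶠ y in 𝓝 x, Adm h (-y) τ p b :=
      (continuous_neg.tendsto x).eventually O.right.eventually_left
    filter_upwards [O.left.eventually_left, e2] with y h1 h2
    rw [O.zero]
    exact O.max y a b h1 h2
  have h0 := hmax.hasDerivAt_eq_zero d3
  rw [O.left.wT_sum hh, O.right.wT_sum hh]
  have hz := O.zero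
  simp only [smul_eq_mul] at h0
  linear_combination (1 - x ^ 2) * h0 - x * hz

/-- Strictly negative tails leave no slack. -/
theorem flush_of_tail_neg (O : IsOpt ρ h σ τ m p x a b) (hh : 0 < h)
    (ht : ∀ j < m, pairSum ρ h (wS x) a j m < 0) : ∀ i < m, a i = ((σ : ℝ) + 2 * i) * h := by
  intro i
  induction i with
  | zero =>
    intro hi
    by_contra hne
    have h1 := O.left.start 0 hi
    have h2 : σ * h < a 0 := lt_of_le_of_ne h1 fun h => hne (by simpa using h.symm)
    have := O.tail_nonneg hh hi (fun _ => h2) (fun k hk => by omega)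
    linarith [ht 0 hi]
  | succ i ih =>
    intro hi
    have h3 := ih (by omega)
    by_contra hne
    have h1 := O.left.gap i hi
    have h2 : a i + 2 * h < a (i + 1) := lt_of_le_of_ne h1 fun h4 => hne (by
      rw [← h4, h3]; push_cast; ring)
    have := O.tail_nonneg hh hi (fun h => by omega) (fun k hk => by
      obtain rfl : k = i := by omega
      exact h2)
    linarith [ht _ hi]

theorem flush_of_wT_nonpos (O : IsOpt ρ h σ τ m p x a b) (hh : 0 < h) (hρ : 0 < ρ)
    (hT : pairSum ρ h (wT x) a 0 m ≤ 0) : ∀ i < m, a i = ((σ : ℝ) + 2 * i) * h :=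
  O.flush_of_tail_neg hh fun _ hj => O.left.tail_wS_neg_of_wT hh O.neg_one_lt hρ hT hj

/-- With an even number of nodes on both sides a critical configuration is extremal. -/
theorem flush_even_even (O : IsOpt ρ h 0 0 m p x a b) (hh : 0 < h) (hρ : 0 < ρ) :
    (∀ i < m, a i = (2 * i : ℝ) * h) ∧ (∀ i < p, b i = (2 * i : ℝ) * h) := by
  suffices H : pairSum ρ h (wT x) a 0 m ≤ 0 by
    have H2 : pairSum ρ h (wT (-x)) b 0 p ≤ 0 := by
      have := O.balance hh
      simp only [Nat.cast_zero, zero_mul, sub_zero] at this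
      linarith
    exact ⟨by simpa using O.flush_of_wT_nonpos hh hρ H,
      by simpa using O.mirror.flush_of_wT_nonpos hh hρ H2⟩
  have hz := O.zero
  have hb := O.balance hh
  simp only [sideE, Nat.cast_zero, zero_mul, sub_zero] at hz hb
  have key : ∀ {x : ℝ} {m : ℕ} {a : ℕ → ℝ}, Adm h x 0 m a → -1 < x →
      pairSum ρ h (wU x) a 0 m ≤ 0 → pairSum ρ h (wT x) a 0 m ≤ 0 := by
    intro x m a A hx hs
    rcases Nat.eq_zero_or_pos m with rfl | hm
    · simp [pairSum]
    · exact (A.tail_wT_neg hh hx hρ hs hm).le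
  rcases le_total (pairSum ρ h (wU x) a 0 m) 0 with h1 | h1
  · exact key O.left O.neg_one_lt h1
  · rw [hb]
    exact key O.right (by linarith [O.left.lt_one]) (by linarith)

end IsOpt

end

section

theorem sin_div_one_add_cos_lt {s t : ℝ} (h0 : 0 ≤ s) (hst : s < t) (ht : t < π) :
    sin s / (1 + cos s) < sin t / (1 + cos t) := by
  have hv : ∀ y, s ≤ y → y ≤ t → 0 < 1 + cos y := fun y h1 h2 => by
    have := cos_lt_cos_of_nonneg_of_le_pi (x := y) (y := π) (by linarith) le_rfl (by linarith)
    rw [cos_pi] at this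
    linarith
  refine Adm.strict_of_deriv (g := fun t => sin t / (1 + cos t))
    (g' := fun y => (1 + cos y) / (1 + cos y) ^ 2) hst ?_ ?_
  · intro y h1 h2
    have h3 := (hv y h1 h2).ne'
    refine ((hasDerivAt_sin y).div ((hasDerivAt_cos y).const_add 1) h3).congr_deriv ?_
    congr 1
    linear_combination sin_sq_add_cos_sq y
  · intro y h1 h2
    have h3 := hv y h1 h2
    positivity

theorem exp_mul_le_of_deriv {w w' : ℝ → ℝ} {κ s h : ℝ} (hh : 0 ≤ h)
    (hd : ∀ y, s ≤ y → y ≤ s + h → HasDerivAt w (w' y) y)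
    (hw : ∀ y, s ≤ y → y ≤ s + h → κ * w y ≤ w' y) :
    exp (κ * h) * w s ≤ w (s + h) := by
  have hd' : ∀ y, 0 ≤ y → y ≤ h → HasDerivAt (fun y => exp (-(κ * y)) * w (s + y))
      (exp (-(κ * y)) * (w' (s + y) - κ * w (s + y))) y := by
    intro y h1 h2
    have d1 : HasDerivAt (fun y => -(κ * y)) (-κ) y := by
      exact (HasDerivAt.congr_deriv (f := fun y => -(κ * y))
        ((hasDerivAt_id y).const_mul κ).neg (by simp))
    have d2 : HasDerivAt (fun y => w (s + y)) (w' (s + y)) y :=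
      (hd (s + y) (by linarith) (by linarith)).comp_const_add s y
    refine (d1.exp.mul d2).congr_deriv ?_
    ring
  have := le_of_deriv_nonneg hd' (fun y h1 h2 => mul_nonneg (exp_pos _).le
    (by linarith [hw (s + y) (by linarith) (by linarith)])) 0 h le_rfl hh le_rfl
  simp only [mul_zero, neg_zero, exp_zero, one_mul, add_zero] at this
  calc exp (κ * h) * w s ≤ exp (κ * h) * (exp (-(κ * h)) * w (s + h)) := by gcongr
    _ = _ := by rw [← mul_assoc, ← exp_add]; simp

/-- Lower bound for the logarithmic derivative of `wS`. -/
theorem sqrt_le_logDeriv_wS {y β : ℝ} (hy : -1 < y) (hβ : 0 < β) (hβπ : β < π) (hv : y < cos β) :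
    √(3 + 4 * ((1 + y) / (1 - y))) ≤ cos β / sin β + 2 * (sin β / (cos β - y)) := by
  have hs := sin_pos_of_pos_of_lt_pi hβ hβπ
  have hc1 : 0 < 1 + cos β := by linarith
  have hy1 : 0 < 1 - y := by linarith [cos_le_one β]
  have hcy : 0 < cos β - y := by linarith
  set t := sin β / (1 + cos β) with ht
  have ht0 : 0 < t := by positivity
  have hsc := sin_sq_add_cos_sq β
  have ht2 : t * (1 + cos β) = sin β := by rw [ht]; field_simp
  have ht3 : t * sin β = 1 - cos β := by
    have h1 : t * sin β * (1 + cos β) = (1 - cos β) * (1 + cos β) := by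
      linear_combination sin β * ht2 + hsc
    exact mul_right_cancel₀ hc1.ne' h1
  set c := (1 + y) / (1 - y) with hc
  have hc0 : 0 < c := by have : 0 < 1 + y := by linarith
                         positivity
  have hcm : c * (1 - y) = 1 + y := by rw [hc]; field_simp
  have e1 : cos β / sin β = 1 / (2 * t) - t / 2 := by
    clear_value t
    field_simp
    linear_combination t * ht3 + ht2
  have e2 : (1 + c) * t ≤ sin β / (cos β - y) := by
    rw [le_div_iff₀ hcy]
    have h2 : (1 + c) * (1 - y) = 2 := by linear_combination hcm
    have h3 : (1 + c) * t * (cos β - y) ≤ sin β := by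
      have h4 : (1 + c) * (cos β - y) ≤ 1 + cos β := by
        have : (1 + c) * (cos β - y) = 2 - (1 + c) * (1 - cos β) := by
          linear_combination h2
        nlinarith [cos_le_one β]
      calc (1 + c) * t * (cos β - y) = t * ((1 + c) * (cos β - y)) := by ring
        _ ≤ t * (1 + cos β) := by gcongr
        _ = sin β := ht2
    exact h3
  have e3 : √(3 + 4 * c) ≤ 1 / (2 * t) - t / 2 + 2 * ((1 + c) * t) := by
    have hpos : 0 ≤ 1 / (2 * t) - t / 2 + 2 * ((1 + c) * t) := by
      have : 1 / (2 * t) - t / 2 + 2 * ((1 + c) * t) = 1 / (2 * t) + (3 / 2 + 2 * c) * t := by ring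
      rw [this]; positivity
    rw [sqrt_le_left hpos]
    have : (1 / (2 * t) - t / 2 + 2 * ((1 + c) * t)) ^ 2 =
        (3 + 4 * c) + (1 / (2 * t) - (3 / 2 + 2 * c) * t) ^ 2 := by field_simp; ring
    rw [this]
    nlinarith [sq_nonneg (1 / (2 * t) - (3 / 2 + 2 * c) * t)]
  rw [e1]
  linarith

theorem hasDerivAt_wS {y t : ℝ} (h : y < cos t) (hs : sin t ≠ 0) :
    HasDerivAt (wS y) ((cos t / sin t + 2 * (sin t / (cos t - y))) * wS y t) t := by
  have h3 : cos t - y ≠ 0 := by linarith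
  refine HasDerivAt.congr_deriv (f := wS y)
    ((hasDerivAt_sin t).div ((hasDerivAt_cos_sub y t).pow 2) (pow_ne_zero 2 h3)) ?_
  simp only [wS]; field_simp; ring

theorem exp_mul_wS_le {y β h : ℝ} (hy : -1 < y) (hβ : 0 < β) (hh : 0 ≤ h) (hβπ : β + h < π)
    (hv : y < cos (β + h)) :
    exp (√(3 + 4 * ((1 + y) / (1 - y))) * h) * wS y β ≤ wS y (β + h) := by
  have hv' : ∀ t, β ≤ t → t ≤ β + h → y < cos t := fun t h1 h2 =>
    cos_gt_of_le hβπ.le hv (by linarith) h2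
  refine exp_mul_le_of_deriv hh (w' := fun t => (cos t / sin t + 2 * (sin t / (cos t - y))) * wS y t)
    ?_ ?_
  · intro t h1 h2
    exact hasDerivAt_wS (hv' t h1 h2) (sin_pos_of_pos_of_lt_pi (by linarith) (by linarith)).ne'
  · intro t h1 h2
    have h3 := hv' t h1 h2
    have h4 := sin_pos_of_pos_of_lt_pi (x := t) (by linarith) (by linarith)
    have h5 : 0 ≤ wS y t := by unfold wS; positivity
    exact mul_le_mul_of_nonneg_right
      (sqrt_le_logDeriv_wS hy (by linarith) (by linarith) h3) h5

namespace IsOpt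
variable {ρ h : ℝ} {m p : ℕ} {x : ℝ} {a b : ℕ → ℝ}

/-- With an even number of nodes on the left and an odd number on the right a critical
configuration is extremal. -/
theorem flush_even_odd (O : IsOpt ρ h 0 1 m p x a b) (hh : 0 < h) (hρ : 0 < ρ) :
    (∀ i < m, a i = (2 * i : ℝ) * h) ∧ (∀ i < p, b i = (1 + 2 * i : ℝ) * h) := by
  have hx := O.neg_one_lt
  have hx1 := O.left.lt_one
  have hz := O.zero
  have hb := O.balance hh
  simp only [sideE, Nat.cast_zero, zero_mul, sub_zero, Nat.cast_one, one_mul] at hz hb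
  have hLid : pairSum ρ h (wT x) a 0 m + pairSum ρ h (wU x) a 0 m
      = (1 - x) * pairSum ρ h (wC x) a 0 m := by
    have key : ∀ t, x < cos t → 1 * wT x t + 1 * wU x t = (1 - x) * wC x t + 0 * wC x t := by
      intro t ht
      have : cos t - x ≠ 0 := by linarith
      simp only [wT, wU, wC]; field_simp; ring
    have := pairSum_congr (ρ := ρ) (j := 0) (v := fun t => 1 * wT x t + 1 * wU x t) (w := fun t => (1 - x) * wC x t + 0 * wC x t)
      (fun i hi => key _ (O.left.vis_outer hh hi)) (fun i hi => key _ (O.left.vis i hi))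
    rw [pairSum_add_mul, pairSum_add_mul] at this
    linarith
  have hbpos : ∀ i < p, 0 < b i := fun i hi => by
    have := O.right.start i hi
    push_cast at this
    linarith
  have hbpi : ∀ i < p, b i + h < π := fun i hi => O.right.lt_pi (by linarith) hi
  set lam : ℝ → ℝ := fun t => sin t / (1 + cos t) with hlam
  have hlam0 : ∀ t, 0 < t → t < π → 0 < lam t := fun t h0 h1 => by
    have := sin_div_one_add_cos_lt le_rfl h0 h1
    simpa using this
  have hRid : ∀ t, 0 < t → t < π → -x < cos t →
      1 * wT (-x) t + (-1) * wU (-x) t = (1 - x) * (lam t * wS (-x) t) := by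
    intro t h0 h1 ht
    have h2 : cos t - -x ≠ 0 := by linarith
    have h3 : 1 + cos t ≠ 0 := by
      have := cos_lt_cos_of_nonneg_of_le_pi h0.le le_rfl h1
      rw [cos_pi] at this
      linarith
    have h2' : cos t + x ≠ 0 := by linarith
    simp only [wT, wU, wS, hlam, sub_neg_eq_add]; field_simp
    linear_combination -(1 - x) * sin_sq_add_cos_sq t
  have hV : 1 ≤ p → pairSum ρ h (wT (-x)) b 0 p - pairSum ρ h (wU (-x)) b 0 p < 0 := by
    intro hp
    have h1 : pairSum ρ h (wT (-x)) b 0 p - pairSum ρ h (wU (-x)) b 0 p =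
        (1 - x) * pairSum ρ h (fun t => lam t * wS (-x) t) b 0 p := by
      have := pairSum_congr (ρ := ρ) (h := h) (m := p) (j := 0) (a := b)
        (v := fun t => 1 * wT (-x) t + (-1) * wU (-x) t)
        (w := fun t => (1 - x) * (lam t * wS (-x) t) + 0 * wU (-x) t)
        (fun i hi => by
          simp only [hRid _ (hbpos i hi) (by linarith [hbpi i hi]) (O.right.vis_outer hh hi)]; ring)
        (fun i hi => by
          simp only [hRid _ (by linarith [hbpos i hi]) (hbpi i hi) (O.right.vis i hi)]; ring)
      rw [pairSum_add_mul,
        pairSum_add_mul ρ h (1 - x) 0 (fun t => lam t * wS (-x) t) (wU (-x))] at this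
      linarith
    have h2 : ∑ i ∈ range p, lam (b i) * (wS (-x) (b i) - ρ * wS (-x) (b i + h)) ≤ 0 := by
      refine sum_mul_nonpos_of_tails_nonpos (fun i hi => ?_) (fun i hi => ?_) (fun j hj => ?_)
      · exact (hlam0 _ (hbpos i hi) (by linarith [hbpi i hi])).le
      · exact (sin_div_one_add_cos_lt (hbpos i (by omega)).le
          (by linarith [O.right.gap i hi]) (by linarith [hbpi _ hi])).le
      · exact O.mirror.tail_nonpos hh j
    have h3 : pairSum ρ h (fun t => lam t * wS (-x) t) b 0 p <
        ∑ i ∈ range p, lam (b i) * (wS (-x) (b i) - ρ * wS (-x) (b i + h)) := by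
      rw [pairSum, ← Finset.range_eq_Ico]
      refine Finset.sum_lt_sum_of_nonempty ⟨0, by simp; omega⟩ fun i hi => ?_
      have hi := mem_range.1 hi
      have h4 : lam (b i) < lam (b i + h) :=
        sin_div_one_add_cos_lt (hbpos i hi).le (by linarith) (hbpi i hi)
      have h5 : 0 < wS (-x) (b i + h) := by
        have := sin_pos_of_pos_of_lt_pi (x := b i + h) (by linarith [hbpos i hi]) (hbpi i hi)
        have : 0 < cos (b i + h) - -x := by linarith [O.right.vis i hi]
        unfold wS; positivity
      have h6 : 0 < ρ * wS (-x) (b i + h) := by positivity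
      nlinarith
    rw [h1]
    exact mul_neg_of_pos_of_neg (by linarith) (by linarith)
  rcases Nat.eq_zero_or_pos p with rfl | hp
  · refine ⟨?_, fun i hi => by omega⟩
    have h1 : pairSum ρ h (wC x) a 0 m ≤ 0 := by
      have h2 : (1 - x) * pairSum ρ h (wC x) a 0 m = 0 := by
        rw [← hLid]
        simp only [pairSum, Ico_self, sum_empty] at hz hb ⊢
        linarith
      rcases mul_eq_zero.1 h2 with h | h
      · linarith
      · exact h.le
    simpa using O.flush_of_tail_neg hh fun j hj => O.left.tail_wS_neg_of_wC hh hx hρ h1 hj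
  have hV := hV hp
  have h1 : pairSum ρ h (wC x) a 0 m < 0 := by
    by_contra! hc
    have : 0 ≤ (1 - x) * pairSum ρ h (wC x) a 0 m := mul_nonneg (by linarith) hc
    linarith
  have hleft : ∀ i < m, a i = (2 * i : ℝ) * h := by
    simpa using O.flush_of_tail_neg hh fun j hj => O.left.tail_wS_neg_of_wC hh hx hρ h1.le hj
  refine ⟨hleft, ?_⟩
  by_contra hne
  have hm : 1 ≤ m := by
    by_contra! h
    obtain rfl : m = 0 := by omega
    simp [pairSum] at h1
  have hwR : 0 < pairSum ρ h (wT (-x)) b 0 p := by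
    by_contra! h
    exact hne (by simpa using O.mirror.flush_of_wT_nonpos hh hρ h)
  obtain ⟨j, hj, hjt⟩ : ∃ j < p, 0 ≤ pairSum ρ h (wS (-x)) b j p := by
    by_contra! h
    exact hne (by simpa using O.mirror.flush_of_tail_neg hh h)
  obtain ⟨i, hi, hie⟩ : ∃ i < p, ρ * wS (-x) (b i + h) ≤ wS (-x) (b i) := by
    by_contra! hc
    have : pairSum ρ h (wS (-x)) b j p < 0 :=
      Finset.sum_neg (fun i hi => by linarith [hc i (mem_Ico.1 hi).2]) ⟨j, by simp [hj]⟩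
    linarith
  have hκ : ρ * exp (√(3 + 4 * ((1 - x) / (1 + x))) * h) ≤ 1 := by
    have h2 := exp_mul_wS_le (y := -x) (by linarith) (hbpos i hi) hh.le (hbpi i hi)
      (O.right.vis i hi)
    rw [← sub_eq_add_neg, sub_neg_eq_add] at h2
    have h3 : 0 < wS (-x) (b i) := by
      have := sin_pos_of_pos_of_lt_pi (x := b i) (hbpos i hi) (by linarith [hbpi i hi])
      have : 0 < cos (b i) - -x := by linarith [O.right.vis_outer hh hi]
      unfold wS; positivity
    have h4 : ρ * exp (√(3 + 4 * ((1 - x) / (1 + x))) * h) * wS (-x) (b i) ≤ 1 * wS (-x) (b i) :=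
      calc _ = ρ * (exp (√(3 + 4 * ((1 - x) / (1 + x))) * h) * wS (-x) (b i)) := by ring
        _ ≤ ρ * wS (-x) (b i + h) := by gcongr
        _ ≤ _ := by linarith
    exact le_of_mul_le_mul_right h4 h3
  have := O.left.wT_le_of_flush hm hh hx hρ hκ hleft h1.le
  linarith

end IsOpt

end

section

/-- The sum of the reciprocal distances with positive sign on one side. -/
noncomputable def innerSum (h x : ℝ) (σ m : ℕ) (a : ℕ → ℝ) : ℝ :=
  ∑ i ∈ range m, wU x (a i + h) + σ * wU x 0

/-- The sum of the reciprocal distances with negative sign on one side. -/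
noncomputable def outerSum (x : ℝ) (m : ℕ) (a : ℕ → ℝ) : ℝ :=
  ∑ i ∈ range m, wU x (a i)

theorem sideE_eq (ρ h x : ℝ) (σ m : ℕ) (a : ℕ → ℝ) :
    sideE ρ h x σ m a = outerSum x m a - ρ * innerSum h x σ m a := by
  rw [sideE, pairSum, outerSum, innerSum, ← Finset.range_eq_Ico, Finset.sum_sub_distrib,
    ← Finset.mul_sum]
  ring

theorem one_sub_cos_le {h t : ℝ} (ht : 0 ≤ t) (hh : 0 ≤ h) (hb : t + h ≤ π) :
    1 - cos h ≤ cos t - cos (t + h) := by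
  have e1 : cos t - cos (t + h) = 2 * sin (t + h / 2) * sin (h / 2) := by
    rw [cos_sub_cos, show (t + (t + h)) / 2 = t + h / 2 by ring,
      show (t - (t + h)) / 2 = -(h / 2) by ring, sin_neg]
    ring
  have e2 : 1 - cos h = 2 * sin (h / 2) * sin (h / 2) := by
    have : h = 2 * (h / 2) := by ring
    rw [this, cos_two_mul, show 2 * (h / 2) / 2 = h / 2 by ring]
    nlinarith [sin_sq_add_cos_sq (h / 2)]
  have h1 : 0 ≤ sin (h / 2) := sin_nonneg_of_nonneg_of_le_pi (by linarith) (by linarith)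
  have h2 : sin (h / 2) ≤ sin (t + h / 2) := by
    have h3 : sin (t + h / 2) - sin (h / 2) = 2 * sin (t / 2) * cos ((t + h) / 2) := by
      rw [sin_sub_sin]; ring_nf
    have h4 : 0 ≤ sin (t / 2) := sin_nonneg_of_nonneg_of_le_pi (by linarith) (by linarith)
    have h5 : 0 ≤ cos ((t + h) / 2) := cos_nonneg_of_neg_pi_div_two_le_of_le
      (by linarith) (by linarith)
    have : 0 ≤ 2 * sin (t / 2) * cos ((t + h) / 2) := by positivity
    linarith
  rw [e1, e2]
  gcongr

theorem one_sub_cos_pos {h : ℝ} (hh : 0 < h) (hπ : h ≤ π) : 0 < 1 - cos h := by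
  have := cos_lt_cos_of_nonneg_of_le_pi le_rfl hπ hh
  rw [cos_zero] at this
  linarith

variable {h x ρ δ : ℝ} {σ τ m p : ℕ} {a b : ℕ → ℝ}

theorem Adm.outerSum_le (A : Adm h x σ m a) (hh : 0 < h) (hπ : h ≤ π) :
    outerSum x m a ≤ m / (1 - cos h) := by
  have hc := one_sub_cos_pos hh hπ
  rw [outerSum]
  refine (Finset.sum_le_card_nsmul _ _ (1 / (1 - cos h)) fun i hi => ?_).trans ?_
  · have him := mem_range.1 hi
    have h1 := one_sub_cos_le (A.nonneg hh him) hh.le (A.bound i him)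
    rw [wU, ← one_div]
    exact one_div_le_one_div_of_le hc (by linarith [A.vis i him])
  · rw [card_range, nsmul_eq_mul, mul_one_div]

theorem Adm.wU_zero_pos (A : Adm h x σ m a) : 0 < wU x 0 := by
  have := A.lt_one
  rw [wU, cos_zero]; exact inv_pos.2 (by linarith)

theorem Adm.wU_inner_pos (A : Adm h x σ m a) {i : ℕ} (hi : i < m) : 0 < wU x (a i + h) := by
  have := A.vis i hi
  rw [wU]; exact inv_pos.2 (by linarith)

theorem Adm.wU_inner_le (A : Adm h x σ m a) {i : ℕ} (hi : i < m) :
    wU x (a i + h) ≤ innerSum h x σ m a := by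
  have h1 := Finset.single_le_sum (f := fun i => wU x (a i + h))
    (fun j hj => (A.wU_inner_pos (mem_range.1 hj)).le) (mem_range.2 hi)
  have h2 : 0 ≤ (σ : ℝ) * wU x 0 := mul_nonneg (by positivity) A.wU_zero_pos.le
  rw [innerSum]; linarith

theorem Adm.lone_le (A : Adm h x σ m a) (hσ : 1 ≤ σ) : wU x 0 ≤ innerSum h x σ m a := by
  have h1 := Finset.sum_nonneg (s := range m) (f := fun i => wU x (a i + h))
    (fun j hj => (A.wU_inner_pos (mem_range.1 hj)).le)
  have h2 : 1 * wU x 0 ≤ (σ : ℝ) * wU x 0 :=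
    mul_le_mul_of_nonneg_right (by exact_mod_cast hσ) A.wU_zero_pos.le
  rw [innerSum]; linarith

theorem Adm.innerSum_nonneg (A : Adm h x σ m a) : 0 ≤ innerSum h x σ m a :=
  add_nonneg (Finset.sum_nonneg fun _ hj => (A.wU_inner_pos (mem_range.1 hj)).le)
    (mul_nonneg (by positivity) A.wU_zero_pos.le)

theorem Adm.innerSum_pos (A : Adm h x σ m a) (hm : 1 ≤ m + σ) : 0 < innerSum h x σ m a := by
  rcases Nat.eq_zero_or_pos m with h0 | h0
  · exact A.wU_zero_pos.trans_le (A.lone_le (by omega))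
  · exact (A.wU_inner_pos h0).trans_le (A.wU_inner_le h0)

/-- A closed version of `Adm`: the nodes keep distance at least `δ` from `x`. -/
structure AdmC (δ h x : ℝ) (σ m : ℕ) (a : ℕ → ℝ) : Prop where
  start : ∀ i < m, σ * h ≤ a i
  gap : ∀ i, i + 1 < m → a i + 2 * h ≤ a (i + 1)
  bound : ∀ i < m, a i + h ≤ π
  vis : ∀ i < m, δ ≤ cos (a i + h) - x
  lone : 1 ≤ σ → δ ≤ 1 - x

theorem AdmC.adm (A : AdmC δ h x σ m a) (hδ : 0 < δ) (hm : 1 ≤ m + σ) : Adm h x σ m a where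
  start := A.start
  gap := A.gap
  bound := A.bound
  vis i hi := by linarith [A.vis i hi]
  lt_one := by
    rcases Nat.eq_zero_or_pos m with h0 | h0
    · linarith [A.lone (by omega)]
    · linarith [A.vis 0 h0, cos_le_one (a 0 + h)]

theorem Adm.admC (A : Adm h x σ m a) (hδ : 0 < δ) (hP : innerSum h x σ m a ≤ δ⁻¹) :
    AdmC δ h x σ m a where
  start := A.start
  gap := A.gap
  bound := A.bound
  vis i hi := by
    have h1 := (A.wU_inner_le hi).trans hP
    rw [wU] at h1
    exact (inv_le_inv₀ (by linarith [A.vis i hi]) hδ).1 h1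
  lone hσ := by
    have h1 := (A.lone_le hσ).trans hP
    rw [wU, cos_zero] at h1
    exact (inv_le_inv₀ (by linarith [A.lt_one]) hδ).1 h1

theorem isClosed_admC {X : Type*} [TopologicalSpace X] {f : X → ℝ} {g : X → ℕ → ℝ}
    (hf : Continuous f) (hg : Continuous g) :
    IsClosed {q : X | AdmC δ h (f q) σ m (g q)} := by
  have hgi : ∀ i, Continuous fun q => g q i := fun i => (continuous_apply i).comp hg
  have e : {q : X | AdmC δ h (f q) σ m (g q)} =
      {q | (∀ i < m, σ * h ≤ g q i)} ∩ {q | (∀ i, i + 1 < m → g q i + 2 * h ≤ g q (i + 1))} ∩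
      {q | (∀ i < m, g q i + h ≤ π)} ∩ {q | (∀ i < m, δ ≤ cos (g q i + h) - f q)} ∩
      {q | 1 ≤ σ → δ ≤ 1 - f q} := by
    ext q
    constructor
    · rintro ⟨h1, h2, h3, h4, h5⟩
      exact ⟨⟨⟨⟨h1, h2⟩, h3⟩, h4⟩, h5⟩
    · rintro ⟨⟨⟨⟨h1, h2⟩, h3⟩, h4⟩, h5⟩
      exact ⟨h1, h2, h3, h4, h5⟩
  rw [e]
  refine ((((?_ : IsClosed _).inter ?_).inter ?_).inter ?_).inter ?_
  all_goals
    simp only [Set.ofPred_forall]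
    first
      | refine isClosed_iInter fun i => isClosed_iInter fun hi => ?_
      | refine isClosed_iInter fun hi => ?_
    refine isClosed_le ?_ ?_ <;> fun_prop

/-- Replacing the irrelevant entries by `0`. -/
noncomputable def truncate (m : ℕ) (a : ℕ → ℝ) (i : ℕ) : ℝ := if i < m then a i else 0

theorem Adm.truncate (A : Adm h x σ m a) : Adm h x σ m (truncate m a) where
  start i hi := by simpa [Berrut.truncate, hi] using A.start i hi
  gap i hi := by simpa [Berrut.truncate, hi, (Nat.lt_succ_self i).trans hi] using A.gap i hi
  bound i hi := by simpa [Berrut.truncate, hi] using A.bound i hi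
  vis i hi := by simpa [Berrut.truncate, hi] using A.vis i hi
  lt_one := A.lt_one

theorem outerSum_truncate : outerSum x m (truncate m a) = outerSum x m a :=
  Finset.sum_congr rfl fun i hi => by simp [truncate, mem_range.1 hi]

theorem innerSum_truncate : innerSum h x σ m (truncate m a) = innerSum h x σ m a := by
  rw [innerSum, innerSum]
  congr 1
  exact Finset.sum_congr rfl fun i hi => by simp [truncate, mem_range.1 hi]

theorem Adm.truncate_mem (A : Adm h x σ m a) (hh : 0 < h) (i : ℕ) :
    Berrut.truncate m a i ∈ Set.Icc 0 π := by
  unfold Berrut.truncate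
  split_ifs with hi
  · exact ⟨A.nonneg hh hi, by linarith [A.bound i hi]⟩
  · exact ⟨le_rfl, pi_pos.le⟩

/-- If the functional is nonnegative somewhere, a critical configuration exists for a ratio at
least as large. -/
theorem exists_isOpt {ρ₀ : ℝ} (hρ : 0 < ρ₀) (hh : 0 < h) (hπ : h ≤ π) (hm : 1 ≤ m + σ)
    (hp : 1 ≤ p + τ) (A : Adm h x σ m a) (B : Adm h (-x) τ p b)
    (hE : 0 ≤ sideE ρ₀ h x σ m a + sideE ρ₀ h (-x) τ p b) :
    ∃ ρ x' a' b', ρ₀ ≤ ρ ∧ IsOpt ρ h σ τ m p x' a' b' := by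
  have hc := one_sub_cos_pos hh hπ
  obtain ⟨Mx, hMx⟩ : ∃ Mx : ℝ, Mx = (m + p) / (1 - cos h) := ⟨_, rfl⟩
  have hmp : 0 ≤ Mx := by rw [hMx]; positivity
  obtain ⟨δ, hδ⟩ : ∃ δ : ℝ, δ = ρ₀ / (Mx + 1) := ⟨_, rfl⟩
  have hδ0 : 0 < δ := by rw [hδ]; positivity
  have key : ∀ x a b, Adm h x σ m a → Adm h (-x) τ p b →
      0 ≤ sideE ρ₀ h x σ m a + sideE ρ₀ h (-x) τ p b →
      AdmC δ h x σ m a ∧ AdmC δ h (-x) τ p b := by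
    intro x a b A B hE
    have h1 := A.outerSum_le hh hπ
    have h2 := B.outerSum_le hh hπ
    have h3 := A.innerSum_nonneg
    have h4 := B.innerSum_nonneg
    rw [sideE_eq, sideE_eq] at hE
    have h5 : outerSum x m a + outerSum (-x) p b ≤ Mx := by rw [hMx, add_div]; linarith
    have h6 : innerSum h x σ m a + innerSum h (-x) τ p b ≤ δ⁻¹ := by
      rw [hδ, inv_div, le_div_iff₀ hρ]
      linarith
    exact ⟨A.admC hδ0 (by linarith), B.admC hδ0 (by linarith)⟩
  let K : Set (ℝ × (ℕ → ℝ) × (ℕ → ℝ)) :=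
    (Set.Icc (-1) 1 ×ˢ (Set.univ.pi fun _ => Set.Icc 0 π) ×ˢ (Set.univ.pi fun _ => Set.Icc 0 π)) ∩
    ({q | AdmC δ h q.1 σ m q.2.1} ∩ {q | AdmC δ h (-q.1) τ p q.2.2})
  have hK : IsCompact K := by
    refine (isCompact_Icc.prod ((isCompact_univ_pi fun _ => isCompact_Icc).prod
      (isCompact_univ_pi fun _ => isCompact_Icc))).inter_right ?_
    exact (isClosed_admC (by fun_prop) (by fun_prop)).inter
      (isClosed_admC (by fun_prop) (by fun_prop))
  have memK : ∀ x a b, Adm h x σ m a → Adm h (-x) τ p b →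
      0 ≤ sideE ρ₀ h x σ m a + sideE ρ₀ h (-x) τ p b →
      (x, truncate m a, truncate p b) ∈ K := by
    intro x a b A B hE
    rw [sideE_eq, sideE_eq, ← outerSum_truncate, ← innerSum_truncate (a := a),
      ← outerSum_truncate (a := b), ← innerSum_truncate (a := b), ← sideE_eq, ← sideE_eq] at hE
    refine ⟨⟨⟨by linarith [B.lt_one], A.lt_one.le⟩, fun i _ => A.truncate_mem hh i,
      fun i _ => B.truncate_mem hh i⟩, key _ _ _ A.truncate B.truncate hE⟩
  let M : ℝ × (ℕ → ℝ) × (ℕ → ℝ) → ℝ := fun q => outerSum q.1 m q.2.1 + outerSum (-q.1) p q.2.2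
  let P : ℝ × (ℕ → ℝ) × (ℕ → ℝ) → ℝ := fun q =>
    innerSum h q.1 σ m q.2.1 + innerSum h (-q.1) τ p q.2.2
  have admK : ∀ q ∈ K, Adm h q.1 σ m q.2.1 ∧ Adm h (-q.1) τ p q.2.2 := fun q hq =>
    ⟨hq.2.1.adm hδ0 hm, hq.2.2.adm hδ0 hp⟩
  have hP : ∀ q ∈ K, 0 < P q := fun q hq =>
    add_pos ((admK q hq).1.innerSum_pos hm) ((admK q hq).2.innerSum_pos hp)
  have hcM : ContinuousOn M K := by
    refine ContinuousOn.add ?_ ?_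
    · refine continuousOn_finsetSum _ fun i hi => ContinuousOn.inv₀ (by fun_prop) fun q hq => ?_
      have := (admK q hq).1.vis_outer hh (mem_range.1 hi)
      linarith
    · refine continuousOn_finsetSum _ fun i hi => ContinuousOn.inv₀ (by fun_prop) fun q hq => ?_
      have := (admK q hq).2.vis_outer hh (mem_range.1 hi)
      linarith
  have hcP : ContinuousOn P K := by
    refine ContinuousOn.add (ContinuousOn.add ?_ (continuousOn_const.mul ?_))
      (ContinuousOn.add ?_ (continuousOn_const.mul ?_))
    · refine continuousOn_finsetSum _ fun i hi => ContinuousOn.inv₀ (by fun_prop) fun q hq => ?_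
      have := (admK q hq).1.vis i (mem_range.1 hi)
      linarith
    · refine ContinuousOn.inv₀ (by fun_prop) fun q hq => ?_
      have := (admK q hq).1.lt_one
      rw [cos_zero]; linarith
    · refine continuousOn_finsetSum _ fun i hi => ContinuousOn.inv₀ (by fun_prop) fun q hq => ?_
      have := (admK q hq).2.vis i (mem_range.1 hi)
      linarith
    · refine ContinuousOn.inv₀ (by fun_prop) fun q hq => ?_
      have := (admK q hq).2.lt_one
      rw [cos_zero]; linarith
  have h0 := memK x a b A B hE
  obtain ⟨⟨x', a', b'⟩, hq, hmax⟩ := hK.exists_isMaxOn ⟨_, h0⟩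
    (hcM.div hcP fun q hq => (hP q hq).ne')
  have hρle : ρ₀ ≤ M (x', a', b') / P (x', a', b') := by
    refine le_trans ?_ (hmax h0)
    rw [Pi.div_apply, le_div_iff₀ (hP _ h0)]
    simp only [M, P, outerSum_truncate, innerSum_truncate]
    rw [sideE_eq, sideE_eq] at hE
    linarith
  obtain ⟨ρ, hρdef⟩ : ∃ ρ, ρ = M (x', a', b') / P (x', a', b') := ⟨_, rfl⟩
  refine ⟨ρ, x', a', b', hρdef ▸ hρle, (admK _ hq).1, (admK _ hq).2, ?_, ?_⟩
  · have : M (x', a', b') - ρ * P (x', a', b') = 0 := by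
      rw [hρdef, div_mul_cancel₀ _ (hP _ hq).ne', sub_self]
    simp only [M, P] at this
    rw [sideE_eq, sideE_eq]
    linarith
  · intro x₁ a₁ b₁ A₁ B₁
    by_contra! hlt
    have hge : 0 ≤ sideE ρ₀ h x₁ σ m a₁ + sideE ρ₀ h (-x₁) τ p b₁ := by
      rw [sideE_eq, sideE_eq] at hlt ⊢
      have := mul_le_mul_of_nonneg_right (hρdef ▸ hρle : ρ₀ ≤ ρ)
        (add_nonneg A₁.innerSum_nonneg B₁.innerSum_nonneg)
      linarith
    have h1 := memK _ _ _ A₁ B₁ hge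
    have h2 := hmax h1
    simp only [Pi.div_apply, Set.mem_ofPred_eq] at h2
    rw [← hρdef, div_le_iff₀ (hP _ h1)] at h2
    simp only [M, P, outerSum_truncate, innerSum_truncate] at h2
    rw [sideE_eq, sideE_eq] at hlt
    linarith

end

section

variable {h x y ρ : ℝ} {σ τ m p T : ℕ} {a b : ℕ → ℝ}

/-- The extremal positions on one side. -/
noncomputable def flush (h : ℝ) (σ i : ℕ) : ℝ := ((σ : ℝ) + 2 * i) * h

/-- An extremal configuration with `T` nodes at which the functional is nonnegative. -/
def FlushGood (ρ h : ℝ) (T : ℕ) : Prop :=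
  ∃ (σ τ m p : ℕ) (x : ℝ), σ ≤ 1 ∧ τ ≤ 1 ∧ 2 * m + σ + (2 * p + τ) = T ∧ 1 ≤ m + σ ∧ 1 ≤ p + τ ∧
    Adm h x σ m (flush h σ) ∧ Adm h (-x) τ p (flush h τ) ∧
    0 ≤ sideE ρ h x σ m (flush h σ) + sideE ρ h (-x) τ p (flush h τ)

theorem Adm.congr {a' : ℕ → ℝ} (A : Adm h x σ m a) (e : ∀ i < m, a i = a' i) :
    Adm h x σ m a' where
  start i hi := by rw [← e i hi]; exact A.start i hi
  gap i hi := by rw [← e i (by omega), ← e _ hi]; exact A.gap i hi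
  bound i hi := by rw [← e i hi]; exact A.bound i hi
  vis i hi := by rw [← e i hi]; exact A.vis i hi
  lt_one := A.lt_one

theorem sideE_congr {a' : ℕ → ℝ} (e : ∀ i < m, a i = a' i) :
    sideE ρ h x σ m a = sideE ρ h x σ m a' := by
  rw [sideE, sideE, pairSum, pairSum]
  congr 1
  exact Finset.sum_congr rfl fun i hi => by rw [e i (mem_Ico.1 hi).2]

theorem Adm.sideE_anti (A : Adm h x σ m a) {ρ' : ℝ} (hρ : ρ ≤ ρ') :
    sideE ρ' h x σ m a ≤ sideE ρ h x σ m a := by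
  rw [sideE_eq, sideE_eq]
  have := mul_le_mul_of_nonneg_right hρ A.innerSum_nonneg
  linarith

theorem IsOpt.flushGood {ρ' : ℝ} (O : IsOpt ρ' h σ τ m p x a b) (hρ : ρ ≤ ρ') (hσ : σ ≤ 1)
    (hτ : τ ≤ 1) (hm : 1 ≤ m + σ) (hp : 1 ≤ p + τ) (ha : ∀ i < m, a i = flush h σ i)
    (hb : ∀ i < p, b i = flush h τ i) : FlushGood ρ h (2 * m + σ + (2 * p + τ)) := by
  have A := O.left.congr ha
  have B := O.right.congr hb
  refine ⟨σ, τ, m, p, x, hσ, hτ, rfl, hm, hp, A, B, ?_⟩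
  have h1 := O.zero
  rw [sideE_congr ha, sideE_congr hb] at h1
  linarith [A.sideE_anti hρ, B.sideE_anti hρ]

theorem flushGood_even_even (hρ : 0 < ρ) (hh : 0 < h) (hπ : h ≤ π) (hm : 1 ≤ m) (hp : 1 ≤ p)
    (A : Adm h x 0 m a) (B : Adm h (-x) 0 p b)
    (hE : 0 ≤ sideE ρ h x 0 m a + sideE ρ h (-x) 0 p b) :
    FlushGood ρ h (2 * m + 2 * p) := by
  obtain ⟨ρ', x', a', b', h1, O⟩ := exists_isOpt hρ hh hπ hm hp A B hE
  have h2 := O.flush_even_even hh (hρ.trans_le h1)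
  exact O.flushGood h1 (by simp) (by simp) hm hp (fun i hi => by rw [h2.1 i hi, flush]; simp)
    (fun i hi => by rw [h2.2 i hi, flush]; simp)

theorem flushGood_even_odd (hρ : 0 < ρ) (hh : 0 < h) (hπ : h ≤ π) (hm : 1 ≤ m)
    (A : Adm h x 0 m a) (B : Adm h (-x) 1 p b)
    (hE : 0 ≤ sideE ρ h x 0 m a + sideE ρ h (-x) 1 p b) :
    FlushGood ρ h (2 * m + (2 * p + 1)) := by
  obtain ⟨ρ', x', a', b', h1, O⟩ := exists_isOpt hρ hh hπ hm (by omega) A B hE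
  have h2 := O.flush_even_odd hh (hρ.trans_le h1)
  exact O.flushGood h1 (by simp) (by simp) hm (by omega)
    (fun i hi => by rw [h2.1 i hi, flush]; simp) (fun i hi => by rw [h2.2 i hi, flush]; simp)

theorem Adm.outerSum_le_innerSum (A : Adm h x σ m a) (hh : 0 < h) :
    outerSum x m a ≤ innerSum h x σ m a := by
  have h1 : outerSum x m a ≤ ∑ i ∈ range m, wU x (a i + h) := by
    refine Finset.sum_le_sum fun i hi => ?_
    have hi := mem_range.1 hi
    have h2 := cos_le_cos_of_nonneg_of_le_pi (A.nonneg hh hi) (A.bound i hi) (by linarith)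
    have h3 := A.vis i hi
    exact inv_anti₀ (by linarith) (by linarith)
  have h2 : 0 ≤ (σ : ℝ) * wU x 0 := mul_nonneg (by positivity) A.wU_zero_pos.le
  rw [innerSum]; linarith

theorem IsOpt.le_one (O : IsOpt ρ h σ τ m p x a b) (hh : 0 < h) (hm : 1 ≤ m + σ) : ρ ≤ 1 := by
  have h1 := O.zero
  rw [sideE_eq, sideE_eq] at h1
  have h2 := O.left.outerSum_le_innerSum hh
  have h3 := O.right.outerSum_le_innerSum hh
  have h4 := O.left.innerSum_pos hm
  have h5 := O.right.innerSum_nonneg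
  by_contra! h6
  nlinarith

theorem half_le_cos (hh : 0 ≤ h) (h3 : h ≤ π / 3) : 1 / 2 ≤ cos h := by
  rw [← cos_pi_div_three]
  exact cos_le_cos_of_nonneg_of_le_pi hh (by linarith [pi_pos]) h3

theorem flushGood_lone (hρ : 0 < ρ) (hh : 0 < h) (hπ : h ≤ π / 3) (hp : 1 ≤ p)
    (A : Adm h x 1 0 a) (B : Adm h (-x) 1 p b)
    (hE : 0 ≤ sideE ρ h x 1 0 a + sideE ρ h (-x) 1 p b) :
    FlushGood ρ h (1 + (2 * p + 1)) := by
  have hπ' : h ≤ π := by linarith [pi_pos]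
  have hc := half_le_cos hh.le hπ
  obtain ⟨ρ', x', a', b', h1, O⟩ := exists_isOpt hρ hh hπ' (by simp) (by omega) A B hE
  have hρ' := hρ.trans_le h1
  rcases le_total 0 x' with hx | hx
  · have h2 := O.balance hh
    simp only [pairSum, Ico_self, Finset.sum_empty, Nat.cast_one, one_mul] at h2
    have hx1 := O.left.lt_one
    have h3 : wU (-x') 0 ≤ wU x' 0 := by
      rw [wU, wU, cos_zero]
      exact inv_anti₀ (by linarith) (by linarith)
    have h4 := mul_le_mul_of_nonneg_left h3 hρ'.le
    have h5 := O.mirror.flush_of_wT_nonpos hh hρ' (by rw [pairSum]; linarith)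
    have := O.flushGood h1 (by simp) (by simp) (by simp) (by omega)
      (fun i hi => by omega) (fun i hi => by rw [h5 i hi, flush])
    simpa using this
  · have hρ1 := O.le_one hh (by simp)
    have hx1 := O.neg_one_lt
    have A' : Adm h x' 0 1 (fun _ => 0) := by
      refine ⟨by simp, by simp, ?_, ?_, O.left.lt_one⟩
      · intro i _; simpa using hπ'
      · intro i _; simp only [zero_add]; linarith
    have B' : Adm h (-x') 0 p b' := by
      refine ⟨?_, O.right.gap, O.right.bound, O.right.vis, O.right.lt_one⟩
      intro i hi
      have := O.right.nonneg hh hi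
      simpa using this
    have e : 0 ≤ sideE ρ' h x' 0 1 (fun _ => 0) + sideE ρ' h (-x') 0 p b' := by
      have h2 := O.zero
      have hl := O.right.wU_zero_pos
      have hu := O.left.wU_zero_pos
      have h3 : wU x' h ≤ 2 * wU x' 0 := by
        have : 0 < cos h - x' := by linarith
        have : 0 < 1 - x' := by linarith
        rw [wU, wU, cos_zero, ← div_eq_mul_inv, ← one_div, div_le_div_iff₀ (by assumption)
          (by assumption)]
        linarith
      have h4 := mul_le_mul_of_nonneg_left h3 hρ'.le
      have h5 := mul_le_mul_of_nonneg_right hρ1 hu.le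
      have h6 := mul_pos hρ' hl
      simp only [sideE, pairSum, Ico_self, Finset.sum_empty, Nat.cast_one, one_mul,
        Nat.cast_zero, zero_mul, sub_zero, Nat.Ico_zero_eq_range, range_one,
        Finset.sum_singleton, zero_add] at h2 ⊢
      linarith
    have e' : 0 ≤ sideE ρ h x' 0 1 (fun _ => 0) + sideE ρ h (-x') 0 p b' := by
      linarith [A'.sideE_anti h1, B'.sideE_anti h1]
    have := flushGood_even_even hρ hh hπ' le_rfl hp A' B' e'
    convert this using 1
    omega

theorem two_mul_wU_le (hy : -1 < y) {t : ℝ} (ht : 0 ≤ t) (hh : 0 < h) (hb : t + 2 * h ≤ π)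
    (hv : y < cos (t + 2 * h)) : 2 * wU y (t + h) ≤ wU y t + wU y (t + 2 * h) := by
  have h1 := wU_ratio_mono hy hb hv ht (by linarith : t ≤ t + h) hh.le (by linarith)
  rw [show t + h + h = t + 2 * h by ring] at h1
  have p1 : 0 < wU y t := inv_pos.2 (by linarith [cos_gt_of_le hb hv ht (by linarith)])
  have p2 : 0 < wU y (t + 2 * h) := inv_pos.2 (by linarith)
  refine abs_le_of_sq_le_sq' ?_ (by positivity) |>.2
  nlinarith [sq_nonneg (wU y t - wU y (t + 2 * h))]

/-- Effect of regrouping `2 j + 1` flush nodes into pairs after filling the hole behind them. -/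
theorem regroup_ge (hρ : 0 < ρ) (hh : 0 < h) (hy : -1 < y) (j : ℕ)
    (hb : (2 * j + 1 : ℝ) * h ≤ π) (hv : y < cos ((2 * j + 1 : ℝ) * h)) :
    (1 + ρ) / 2 * (wU y 0 + wU y ((2 * j : ℝ) * h)) - ρ * wU y ((2 * j + 1 : ℝ) * h) ≤
      ∑ k ∈ range (j + 1), (wU y ((2 * k : ℝ) * h) - ρ * wU y ((2 * k : ℝ) * h + h)) -
      ∑ k ∈ range j, (wU y (flush h 1 k) - ρ * wU y (flush h 1 k + h)) + ρ * wU y 0 := by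
  induction j with
  | zero =>
    simp
    linarith
  | succ j ih =>
    push_cast at hb hv ⊢
    have ih := ih (by nlinarith) (cos_gt_of_le hb hv (by positivity) (by nlinarith))
    rw [Finset.sum_range_succ _ (j + 1),
      Finset.sum_range_succ (fun k => wU y (flush h 1 k) - ρ * wU y (flush h 1 k + h)) j]
    have h1 := two_mul_wU_le hy (t := (2 * j : ℝ) * h) (by positivity) hh (by nlinarith)
      (cos_gt_of_le hb hv (by positivity) (by nlinarith))
    rw [show (2 * j : ℝ) * h + h = (2 * j + 1 : ℝ) * h by ring,
      show (2 * j : ℝ) * h + 2 * h = (2 * (j + 1) : ℝ) * h by ring] at h1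
    rw [show flush h 1 j = (2 * j + 1 : ℝ) * h by rw [flush]; push_cast; ring,
      show (2 * j + 1 : ℝ) * h + h = (2 * (j + 1) : ℝ) * h by ring]
    push_cast
    rw [show (2 * (j + 1) : ℝ) * h + h = (2 * (j + 1) + 1 : ℝ) * h by ring]
    nlinarith

theorem fill_hole_aux {s c S C D Y g : ℝ} (hs : 0 < s) (hc : 1 / 2 ≤ c) (hS : 0 < S)
    (hC : 0 ≤ C) (hC1 : C ≤ 1) (hSC : S ^ 2 = (1 - C) * (1 + C)) (hY : Y ≤ 1 - C)
    (hD : S * c ≤ D) (hg : 2 * S * (2 * s * c) ≤ g) : Y * (2 * C * s) ≤ D * g := by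
  have h1 : Y * (2 * C * s) ≤ S ^ 2 * s := by
    have e1 : Y * (2 * C * s) ≤ (1 - C) * (2 * C * s) := by gcongr
    have e2 : (1 - C) * (2 * C * s) ≤ (1 - C) * (1 + C) * s := by
      have : 0 ≤ (1 - C) * (1 - C) * s := by positivity
      linarith
    rw [hSC]; linarith
  have h2 : S * c * (2 * S * (2 * s * c)) ≤ D * g := by
    have : 0 ≤ D := le_trans (by positivity) hD
    gcongr
  have h3 : S ^ 2 * s * 1 ≤ S ^ 2 * s * (4 * c ^ 2) := by
    gcongr
    nlinarith
  linarith

theorem fill_hole_aux' {D F V u q : ℝ} (hρ : 0 < ρ) (hD : 0 < D) (hF : 0 < F) (hq : 0 < q)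
    (hFD : F ≤ D) (hk : ρ * F * V ^ 2 ≤ D * q ^ 2) (hu : V * (D - F) ≤ u * D) :
    2 * ρ * V ≤ 2 * ρ * u + (1 + ρ) * q := by
  have h1 : 2 * ρ * V * F ≤ (1 + ρ) * q * D := by
    refine abs_le_of_sq_le_sq' ?_ (by positivity) |>.2
    have e1 := mul_le_mul_of_nonneg_left hk (by positivity : 0 ≤ 4 * ρ * F)
    have e2 := mul_le_mul_of_nonneg_left hFD (by positivity : 0 ≤ 4 * ρ * D * q ^ 2)
    have e3 : 0 ≤ ((1 - ρ) * q * D) ^ 2 := by positivity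
    linarith
  have h2 := mul_le_mul_of_nonneg_left hu hρ.le
  refine le_of_mul_le_mul_right ?_ hD
  linarith

theorem fill_hole_ratio (hh : 0 < h) (hπ : h ≤ π / 3) (hy : -1 < y) {t β : ℝ}
    (ht : 0 ≤ t) (htβ : t + 2 * h ≤ β) (hβ : β + h ≤ π) (hv : y < cos (β + h))
    (hdec : ρ * (wU y (β + h) - wU y β) < wU y β - wU y (β - h)) :
    ρ * sin (β + h / 2) * wU y (t + h) ^ 2 ≤ sin (β - h / 2) * wU y t ^ 2 := by
  have vis : ∀ s, 0 ≤ s → s ≤ β + h → y < cos s := fun s h1 h2 => cos_gt_of_le hβ hv h1 h2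
  have pos : ∀ s, 0 ≤ s → s ≤ β + h → 0 < wU y s := fun s h1 h2 =>
    inv_pos.2 (by linarith [vis s h1 h2])
  have r1 := wU_ratio_mono hy hβ hv ht (by linarith : t ≤ β - h) hh.le (by linarith)
  have r2 := wU_ratio_mono hy hβ hv ht (by linarith : t ≤ β) hh.le le_rfl
  rw [sub_add_cancel] at r1
  have p0 := pos (β + h) (by linarith) le_rfl
  have p1 := pos β (by linarith) (by linarith)
  have p2 := pos (β - h) (by linarith) (by linarith)
  have pt := pos t ht (by linarith)
  have pV := pos (t + h) (by linarith) (by linarith)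
  have hs : 0 < sin (h / 2) := sin_pos_of_pos_of_lt_pi (by linarith) (by linarith [pi_pos])
  have hD : 0 < sin (β - h / 2) := sin_pos_of_pos_of_lt_pi (by linarith) (by linarith)
  have hF : 0 < sin (β + h / 2) := sin_pos_of_pos_of_lt_pi (by linarith) (by linarith)
  have i0 : (cos (β + h) - y) * wU y (β + h) = 1 := mul_inv_cancel₀ (by linarith)
  have i1 : (cos β - y) * wU y β = 1 :=
    mul_inv_cancel₀ (by linarith [vis β (by linarith) (by linarith)])
  have i2 : (cos (β - h) - y) * wU y (β - h) = 1 :=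
    mul_inv_cancel₀ (by linarith [vis (β - h) (by linarith) (by linarith)])
  have c1 : cos β - cos (β + h) = 2 * sin (β + h / 2) * sin (h / 2) := by
    rw [cos_sub_cos, show (β + (β + h)) / 2 = β + h / 2 by ring,
      show (β - (β + h)) / 2 = -(h / 2) by ring, sin_neg]
    ring
  have c2 : cos (β - h) - cos β = 2 * sin (β - h / 2) * sin (h / 2) := by
    rw [cos_sub_cos, show (β - h + β) / 2 = β - h / 2 by ring,
      show (β - h - β) / 2 = -(h / 2) by ring, sin_neg]
    ring
  have d1 : wU y (β + h) - wU y β =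
      2 * sin (β + h / 2) * sin (h / 2) * (wU y (β + h) * wU y β) := by
    rw [← c1]; linear_combination wU y β * i0 - wU y (β + h) * i1
  have d2 : wU y β - wU y (β - h) =
      2 * sin (β - h / 2) * sin (h / 2) * (wU y β * wU y (β - h)) := by
    rw [← c2]; linear_combination wU y (β - h) * i1 - wU y β * i2
  have k1 : ρ * sin (β + h / 2) * wU y (β + h) ≤ sin (β - h / 2) * wU y (β - h) := by
    rw [d1, d2] at hdec
    have : 0 < 2 * sin (h / 2) * wU y β := by positivity
    refine le_of_mul_le_mul_left ?_ this
    linarith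
  have k2 : wU y (t + h) ^ 2 * wU y (β - h) ≤ wU y t ^ 2 * wU y (β + h) := by
    have e1 := mul_le_mul_of_nonneg_left r1 pV.le
    have e2 := mul_le_mul_of_nonneg_left r2 pt.le
    nlinarith
  have e1 := mul_le_mul_of_nonneg_left k1 (sq_nonneg (wU y (t + h)))
  have e2 := mul_le_mul_of_nonneg_left k2 hD.le
  refine le_of_mul_le_mul_right ?_ p0
  linarith

/-- If moving a pair towards the end of the interval does not pay off, filling the hole does. -/
theorem fill_hole (hρ : 0 < ρ) (hh : 0 < h) (hπ : h ≤ π / 3) (hy : -1 < y) {t β : ℝ}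
    (ht : 0 ≤ t) (htβ : t + 2 * h ≤ β) (hβ : β + h ≤ π) (hv : y < cos (β + h))
    (hdec : ρ * (wU y (β + h) - wU y β) < wU y β - wU y (β - h)) :
    2 * ρ * wU y (t + h) ≤ 2 * ρ * wU (-y) 0 + (1 + ρ) * wU y t := by
  have k3 := fill_hole_ratio hh hπ hy ht htβ hβ hv hdec
  have vis : ∀ s, 0 ≤ s → s ≤ β + h → y < cos s := fun s h1 h2 => cos_gt_of_le hβ hv h1 h2
  have pt : 0 < wU y t := inv_pos.2 (by linarith [vis t ht (by linarith)])
  have pV : 0 < wU y (t + h) :=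
    inv_pos.2 (by linarith [vis (t + h) (by linarith) (by linarith)])
  have hs : 0 < sin (h / 2) := sin_pos_of_pos_of_lt_pi (by linarith) (by linarith [pi_pos])
  have hD : 0 < sin (β - h / 2) := sin_pos_of_pos_of_lt_pi (by linarith) (by linarith)
  have hF : 0 < sin (β + h / 2) := sin_pos_of_pos_of_lt_pi (by linarith) (by linarith)
  have hy1 : 0 < 1 + y := by linarith
  have pu : 0 < wU (-y) 0 := by rw [wU, cos_zero]; exact inv_pos.2 (by linarith)
  rcases le_total β (π / 2) with hβ2 | hβ2
  · have h1 : sin (β - h / 2) ≤ sin (β + h / 2) := by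
      have h3 : sin (β + h / 2) - sin (β - h / 2) = 2 * sin (h / 2) * cos β := by
        rw [sin_sub_sin]; ring_nf
      have := cos_nonneg_of_neg_pi_div_two_le_of_le (by linarith) hβ2
      have : 0 ≤ 2 * sin (h / 2) * cos β := by positivity
      linarith
    have h2 : ρ * wU y (t + h) ^ 2 ≤ wU y t ^ 2 := by
      have e1 := mul_le_mul_of_nonneg_right h1
        (by positivity : 0 ≤ ρ * wU y (t + h) ^ 2)
      refine le_of_mul_le_mul_left ?_ hD
      linarith
    have h3 : 2 * ρ * wU y (t + h) ≤ (1 + ρ) * wU y t := by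
      refine abs_le_of_sq_le_sq' ?_ (by positivity) |>.2
      have e1 := mul_le_mul_of_nonneg_left h2 (by positivity : 0 ≤ 4 * ρ)
      nlinarith [mul_nonneg (sq_nonneg (1 - ρ)) (sq_nonneg (wU y t))]
    nlinarith
  · have hC : 0 ≤ -cos β := by
      have := cos_nonpos_of_pi_div_two_le_of_le hβ2 (by linarith)
      linarith
    have hS : 0 < sin β := sin_pos_of_pos_of_lt_pi (by linarith) (by linarith)
    obtain ⟨C, hCdef⟩ : ∃ C, C = -cos β := ⟨_, rfl⟩
    have hSC : sin β ^ 2 = (1 - C) * (1 + C) := by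
      rw [hCdef]; linarith [sin_sq_add_cos_sq β]
    have hDF : sin (β - h / 2) - sin (β + h / 2) = 2 * C * sin (h / 2) := by
      rw [sin_sub_sin, show (β - h / 2 - (β + h / 2)) / 2 = -(h / 2) by ring,
        show (β - h / 2 + (β + h / 2)) / 2 = β by ring, sin_neg, hCdef]
      ring
    rw [← hCdef] at hC
    have hD' : sin β * cos (h / 2) ≤ sin (β - h / 2) := by
      rw [sin_sub]
      have := mul_nonneg hC hs.le
      rw [hCdef] at this
      linarith
    have hC1 : C ≤ 1 := by rw [hCdef]; linarith [neg_one_le_cos β]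
    have hgap : 2 * sin β * sin h ≤ cos (t + h) - y := by
      have h1 : cos (β - h) ≤ cos (t + h) :=
        cos_le_cos_of_nonneg_of_le_pi (by linarith) (by linarith) (by linarith)
      have h2 : cos (β - h) - cos (β + h) = 2 * sin β * sin h := by
        rw [cos_sub, cos_add]; ring
      linarith
    have hch : 1 / 2 ≤ cos (h / 2) := half_le_cos (by linarith) (by linarith)
    have hyC : 1 + y ≤ 1 - C := by
      have h1 : cos (β + h) ≤ cos β :=
        cos_le_cos_of_nonneg_of_le_pi (by linarith) hβ (by linarith)
      rw [hCdef]; linarith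
    have hu : wU y (t + h) * (sin (β - h / 2) - sin (β + h / 2)) ≤
        wU (-y) 0 * sin (β - h / 2) := by
      have g0 : 0 < cos (t + h) - y := by linarith [vis (t + h) (by linarith) (by linarith)]
      have e1 : (1 + y) * (sin (β - h / 2) - sin (β + h / 2)) ≤
          sin (β - h / 2) * (cos (t + h) - y) := by
        rw [hDF]
        rw [show sin h = 2 * sin (h / 2) * cos (h / 2) by
          rw [← sin_two_mul]; ring_nf] at hgap
        exact fill_hole_aux hs hch hS hC hC1 hSC hyC hD' hgap
      rw [wU, wU, cos_zero, inv_mul_eq_div, inv_mul_eq_div, sub_neg_eq_add,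
        div_le_div_iff₀ g0 hy1]
      linarith
    have hFD : sin (β + h / 2) ≤ sin (β - h / 2) := by
      have : 0 ≤ 2 * C * sin (h / 2) := by positivity
      linarith
    exact fill_hole_aux' hρ hD hF pt hFD k3 hu

end

section

variable {h x y ρ : ℝ} {σ τ m p T : ℕ} {a b : ℕ → ℝ}

/-- Filling the hole behind the first `2 j + 1` flush nodes and regrouping. -/
noncomputable def fillHole (h : ℝ) (j : ℕ) (b : ℕ → ℝ) (k : ℕ) : ℝ :=
  if k ≤ j then (2 * k : ℝ) * h else b (k - 1)

theorem Adm.fillHole (B : Adm h y 1 p b) (hh : 0 < h) {j : ℕ} (hj : j < p)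
    (hole : (2 * j + 2 : ℝ) * h ≤ b j) : Adm h y 0 (p + 1) (fillHole h j b) := by
  have hlt : ∀ k ≤ j, (2 * k : ℝ) * h + h ≤ b j := by
    intro k hk
    have : (k : ℝ) ≤ j := by exact_mod_cast hk
    nlinarith
  refine ⟨?_, ?_, ?_, ?_, B.lt_one⟩
  · intro i hi
    unfold Berrut.fillHole
    split_ifs with h1
    · have : (0:ℝ) ≤ (2 * i : ℝ) * h := by positivity
      simpa using this
    · have := B.nonneg hh (i := i - 1) (by omega)
      simpa using this
  · intro i hi
    unfold Berrut.fillHole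
    split_ifs with h1 h2 h2
    · push_cast; linarith
    · obtain rfl : i = j := by omega
      rw [Nat.add_sub_cancel]
      linarith
    · omega
    · obtain ⟨k, rfl⟩ : ∃ k, i = k + 1 := ⟨i - 1, by omega⟩
      exact B.gap k (by omega)
  · intro i hi
    unfold Berrut.fillHole
    split_ifs with h1
    · linarith [hlt i h1, B.bound j hj]
    · exact B.bound _ (by omega)
  · intro i hi
    unfold Berrut.fillHole
    split_ifs with h1
    · exact cos_gt_of_le (B.bound j hj) (B.vis j hj) (by positivity) (by linarith [hlt i h1])
    · exact B.vis _ (by omega)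

theorem Adm.sideE_fillHole_ge (B : Adm h y 1 p b) (hρ : 0 < ρ) (hh : 0 < h) (hy : -1 < y) {j : ℕ}
    (hj : j < p) (hfl : ∀ i < j, b i = flush h 1 i) (hole : (2 * j + 2 : ℝ) * h ≤ b j) :
    sideE ρ h y 1 p b + (1 + ρ) / 2 * (wU y 0 + wU y ((2 * j : ℝ) * h)) -
      ρ * wU y ((2 * j + 1 : ℝ) * h) ≤ sideE ρ h y 0 (p + 1) (Berrut.fillHole h j b) := by
  obtain ⟨d, rfl⟩ := Nat.exists_eq_add_of_lt hj
  have hle : (2 * j + 1 : ℝ) * h ≤ b j + h := by linarith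
  have := regroup_ge hρ hh hy j (hle.trans (B.bound j hj))
    (cos_gt_of_le (B.bound j hj) (B.vis j hj) (by positivity) hle)
  have e1 : sideE ρ h y 1 (j + d + 1) b =
      ∑ k ∈ range j, (wU y (flush h 1 k) - ρ * wU y (flush h 1 k + h)) +
      ∑ k ∈ range (d + 1), (wU y (b (j + k)) - ρ * wU y (b (j + k) + h)) - ρ * wU y 0 := by
    rw [sideE, pairSum, ← Finset.range_eq_Ico, add_assoc, Finset.sum_range_add,
      Nat.cast_one, one_mul]
    congr 2
    exact Finset.sum_congr rfl fun i hi => by rw [hfl i (mem_range.1 hi)]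
  have e2 : sideE ρ h y 0 (j + d + 1 + 1) (Berrut.fillHole h j b) =
      ∑ k ∈ range (j + 1), (wU y ((2 * k : ℝ) * h) - ρ * wU y ((2 * k : ℝ) * h + h)) +
      ∑ k ∈ range (d + 1), (wU y (b (j + k)) - ρ * wU y (b (j + k) + h)) := by
    rw [sideE, pairSum, ← Finset.range_eq_Ico, show j + d + 1 + 1 = (j + 1) + (d + 1) by ring,
      Finset.sum_range_add, Nat.cast_zero, zero_mul, sub_zero]
    congr 1
    · refine Finset.sum_congr rfl fun i hi => ?_
      have : i ≤ j := by have := mem_range.1 hi; omega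
      simp only [Berrut.fillHole, this, if_true]
    · refine Finset.sum_congr rfl fun i _ => ?_
      have h1 : ¬ j + 1 + i ≤ j := by omega
      have h2 : j + 1 + i - 1 = j + i := by omega
      simp only [Berrut.fillHole, h1, if_false, h2]
  rw [e1, e2]
  linarith

theorem flushGood_of_hole (hρ : 0 < ρ) (hh : 0 < h) (hπ : h ≤ π) (hm : 1 ≤ m)
    (A : Adm h x 1 m a) (B : Adm h (-x) 1 p b) {j : ℕ} (hj : j < p)
    (hfl : ∀ i < j, b i = flush h 1 i) (hole : (2 * j + 2 : ℝ) * h ≤ b j)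
    (hE : 0 ≤ sideE ρ h x 1 m a + sideE ρ h (-x) 1 p b)
    (hle : 2 * ρ * wU (-x) ((2 * j + 1 : ℝ) * h) ≤
      2 * ρ * wU x 0 + (1 + ρ) * wU (-x) ((2 * j : ℝ) * h)) :
    FlushGood ρ h (2 * m + 1 + (2 * p + 1)) := by
  have A' : Adm h x 0 m a := by
    refine ⟨fun i hi => ?_, A.gap, A.bound, A.vis, A.lt_one⟩
    simpa using A.nonneg hh hi
  have h1 := B.sideE_fillHole_ge hρ hh (by linarith [A.lt_one]) hj hfl hole
  have h2 := B.wU_zero_pos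
  have h3 : sideE ρ h x 0 m a = sideE ρ h x 1 m a + ρ * wU x 0 := by simp [sideE]
  have h4 : 0 < (1 + ρ) / 2 * wU (-x) 0 := by positivity
  have := flushGood_even_even hρ hh hπ hm (by omega) A' (B.fillHole hh hj hole) (by linarith)
  convert this using 1
  omega

/-- Either the right side can be assumed extremal, or an extremal configuration exists. -/
theorem flushGood_or_right_flush (hρ : 0 < ρ) (hh : 0 < h) (hπ : h ≤ π / 3) (hm : 1 ≤ m)
    (A : Adm h x 1 m a) (β : ℕ → ℕ) (B : Adm h (-x) 1 p (fun i => (β i : ℝ) * h))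
    (hE : 0 ≤ sideE ρ h x 1 m a + sideE ρ h (-x) 1 p (fun i => (β i : ℝ) * h)) :
    FlushGood ρ h (2 * m + 1 + (2 * p + 1)) ∨
      (Adm h (-x) 1 p (flush h 1) ∧
        0 ≤ sideE ρ h x 1 m a + sideE ρ h (-x) 1 p (flush h 1)) := by
  induction hn : ∑ i ∈ range p, β i using Nat.strong_induction_on generalizing β with
  | _ n ih =>
  by_cases hall : ∀ i < p, β i = 1 + 2 * i
  · right
    have e : ∀ i < p, (fun i => (β i : ℝ) * h) i = flush h 1 i := by
      intro i hi
      simp only [hall i hi, flush]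
      push_cast; ring
    exact ⟨B.congr e, by rwa [← sideE_congr e]⟩
  classical
  push Not at hall
  obtain ⟨hjp, hjne⟩ := Nat.find_spec hall
  have hjmin := fun i hi => Nat.find_min hall (m := i) hi
  obtain ⟨j, hjdef⟩ : ∃ j, j = Nat.find hall := ⟨_, rfl⟩
  rw [← hjdef] at hjp hjne hjmin
  have hfl : ∀ i < j, β i = 1 + 2 * i := by
    intro i hi
    by_contra h1
    exact hjmin i hi ⟨by omega, h1⟩
  have hβ : ∀ i j, i < j → j < p → β i + 2 ≤ β j := by
    intro i j hij hj
    have h1 := B.gap_lt hh i j hij hj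
    have : ((β i + 2 : ℕ) : ℝ) ≤ β j := by
      push_cast
      exact le_of_mul_le_mul_right (by linarith) hh
    exact_mod_cast this
  have hhole : 2 * j + 2 ≤ β j := by
    have h1 := B.lower j hjp
    have : ((1 + 2 * j : ℕ) : ℝ) ≤ β j := by
      push_cast
      exact le_of_mul_le_mul_right (by simpa using h1) hh
    have : 1 + 2 * j ≤ β j := by exact_mod_cast this
    omega
  have htail : ∀ i, j ≤ i → i < p → 2 * j + 2 ≤ β i := by
    intro i hi hip
    rcases hi.eq_or_lt with rfl | h1
    · exact hhole
    · have := hβ j i h1 hip; omega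
  obtain ⟨β', hβ'⟩ : ∃ β' : ℕ → ℕ, β' = fun i => if j ≤ i then β i - 1 else β i := ⟨_, rfl⟩
  have hβ'c : ∀ i, j ≤ i → i < p → (β' i : ℝ) = β i - 1 := by
    intro i hi hip
    have := htail i hi hip
    simp only [hβ', hi, if_true]
    push_cast [show 1 ≤ β i by omega]; ring
  have hβ'l : ∀ i, i < j → β' i = β i := by
    intro i hi
    simp only [hβ', show ¬ j ≤ i by omega, if_false]
  by_cases hcase : sideE ρ h (-x) 1 p (fun i => (β i : ℝ) * h) ≤
      sideE ρ h (-x) 1 p (fun i => (β' i : ℝ) * h)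
  · refine ih (∑ i ∈ range p, β' i) ?_ β' ?_ (by linarith) rfl
    · rw [← hn]
      refine Finset.sum_lt_sum (fun i _ => ?_) ⟨j, mem_range.2 hjp, ?_⟩
      · simp only [hβ']; split_ifs <;> omega
      · simp only [hβ', le_refl, if_true]; omega
    · have hle : ∀ i, (β' i : ℝ) ≤ β i := by
        intro i
        simp only [hβ']; split_ifs
        · exact_mod_cast Nat.sub_le _ _
        · exact le_rfl
      refine ⟨?_, ?_, ?_, ?_, B.lt_one⟩
      · intro i hi
        rcases lt_or_ge i j with h1 | h1
        · rw [hβ'l i h1]; exact B.start i hi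
        · simp only [hβ'c i h1 hi]
          have : ((2 * j + 2 : ℕ) : ℝ) ≤ β i := by exact_mod_cast htail i h1 hi
          push_cast at this ⊢
          have h0 : (0:ℝ) ≤ j := by positivity
          have : (1:ℝ) ≤ β i - 1 := by linarith
          gcongr
      · intro i hi
        have hnat : β' i + 2 ≤ β' (i + 1) := by
          have h1 := hβ i (i + 1) (by omega) hi
          have h2 : j ≤ i + 1 → 2 * j + 2 ≤ β (i + 1) := fun h3 => htail _ h3 hi
          have h4 : i < j → β i = 1 + 2 * i := hfl i
          have h5 : j ≤ i → 2 * j + 2 ≤ β i := fun h3 => htail _ h3 (by omega)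
          simp only [hβ']
          split_ifs <;> omega
        have : ((β' i + 2 : ℕ) : ℝ) * h ≤ (β' (i + 1) : ℝ) * h := by gcongr
        push_cast at this
        linarith
      · intro i hi
        have := B.bound i hi
        have := mul_le_mul_of_nonneg_right (hle i) hh.le
        linarith
      · intro i hi
        refine cos_gt_of_le (B.bound i hi) (B.vis i hi) (by positivity) ?_
        have := mul_le_mul_of_nonneg_right (hle i) hh.le
        linarith
  · left
    push Not at hcase
    obtain ⟨i, hip, hlt⟩ : ∃ i < p,
        wU (-x) ((β' i : ℝ) * h) - ρ * wU (-x) ((β' i : ℝ) * h + h) <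
          wU (-x) ((β i : ℝ) * h) - ρ * wU (-x) ((β i : ℝ) * h + h) := by
      by_contra! hcon
      refine absurd hcase (not_lt.2 ?_)
      rw [sideE, sideE, pairSum, pairSum]
      exact sub_le_sub_right (Finset.sum_le_sum fun i hi => hcon i (mem_Ico.1 hi).2) _
    have hji : j ≤ i := by
      by_contra! h1
      rw [hβ'l i h1] at hlt
      exact lt_irrefl _ hlt
    have hcast : (2 * j + 2 : ℝ) ≤ β i := by exact_mod_cast htail i hji hip
    have hcastj : (2 * j + 2 : ℝ) ≤ β j := by exact_mod_cast hhole
    rw [hβ'c i hji hip, show ((β i : ℝ) - 1) * h + h = β i * h by ring,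
      show ((β i : ℝ) - 1) * h = β i * h - h by ring] at hlt
    have h1 := fill_hole hρ hh hπ (y := -x) (by linarith [A.lt_one]) (t := (2 * j : ℝ) * h)
      (β := β i * h) (by positivity) (by nlinarith) (B.bound i hip) (B.vis i hip) (by linarith)
    rw [neg_neg, show (2 * j : ℝ) * h + h = (2 * j + 1 : ℝ) * h by ring] at h1
    refine flushGood_of_hole hρ hh (by linarith [pi_pos]) hm A B hjp ?_ ?_ hE h1
    · intro i hi
      simp only [hfl i hi, flush]
      push_cast; ring
    · gcongr

theorem flushGood_odd_odd (hρ : 0 < ρ) (hh : 0 < h) (hπ : h ≤ π / 3) (hmp : 1 ≤ m + p)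
    (α β : ℕ → ℕ) (A : Adm h x 1 m (fun i => (α i : ℝ) * h))
    (B : Adm h (-x) 1 p (fun i => (β i : ℝ) * h))
    (hE : 0 ≤ sideE ρ h x 1 m (fun i => (α i : ℝ) * h) +
      sideE ρ h (-x) 1 p (fun i => (β i : ℝ) * h)) :
    FlushGood ρ h (2 * m + 1 + (2 * p + 1)) := by
  rcases Nat.eq_zero_or_pos m with rfl | hm
  · simpa using flushGood_lone hρ hh hπ (by omega) A B hE
  rcases Nat.eq_zero_or_pos p with rfl | hp
  · have := flushGood_lone hρ hh hπ hm B (by rwa [neg_neg]) (by rw [neg_neg]; linarith)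
    convert this using 1
    omega
  rcases flushGood_or_right_flush hρ hh hπ hm A β B hE with h1 | ⟨B', hE'⟩
  · exact h1
  rcases flushGood_or_right_flush (x := -x) hρ hh hπ hp B' α (by rwa [neg_neg])
    (by rw [neg_neg]; linarith) with h1 | ⟨A', hE''⟩
  · convert h1 using 1
    omega
  rw [neg_neg] at A' hE''
  exact ⟨1, 1, m, p, x, le_rfl, le_rfl, rfl, by omega, by omega, A', B', by linarith⟩

/-- Any configuration of lattice nodes is dominated by an extremal one. -/
theorem flushGood_of_adm (hρ : 0 < ρ) (hh : 0 < h) (hπ : h ≤ π / 3) (hσ : σ ≤ 1) (hτ : τ ≤ 1)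
    (hm : 1 ≤ m + σ) (hp : 1 ≤ p + τ) (hmp : 1 ≤ m + p)
    (α β : ℕ → ℕ) (A : Adm h x σ m (fun i => (α i : ℝ) * h))
    (B : Adm h (-x) τ p (fun i => (β i : ℝ) * h))
    (hE : 0 ≤ sideE ρ h x σ m (fun i => (α i : ℝ) * h) +
      sideE ρ h (-x) τ p (fun i => (β i : ℝ) * h)) :
    FlushGood ρ h (2 * m + σ + (2 * p + τ)) := by
  have hπ' : h ≤ π := by linarith [pi_pos]
  obtain rfl | rfl : σ = 0 ∨ σ = 1 := by omega
  · obtain rfl | rfl : τ = 0 ∨ τ = 1 := by omega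
    · exact flushGood_even_even hρ hh hπ' hm hp A B hE
    · exact flushGood_even_odd hρ hh hπ' hm A B hE
  · obtain rfl | rfl : τ = 0 ∨ τ = 1 := by omega
    · have := flushGood_even_odd (x := -x) (m := p) (p := m) hρ hh hπ' hp B (by rwa [neg_neg])
        (by rw [neg_neg]; linarith)
      convert this using 1
      omega
    · exact flushGood_odd_odd hρ hh hπ hmp α β A B hE

end

section

variable {h x ρ : ℝ} {σ τ m p n N : ℕ} {k : ℕ → ℕ}

theorem alternating_sum_pairs (e : ℕ → ℝ) (hσ : σ ≤ 1) (m : ℕ) :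
    ∑ j ∈ range (2 * m + σ), (-1 : ℝ) ^ (j + (2 * m + σ) + 1) * e j =
      (∑ i ∈ range m, e (2 * i + σ + 1) + σ * e 0) - ∑ i ∈ range m, e (2 * i + σ) := by
  have hpow : ∀ j, (-1 : ℝ) ^ (j + (2 * m + σ) + 1) = (-1) ^ (j + σ + 1) := fun j => by
    rw [show j + (2 * m + σ) + 1 = 2 * m + (j + σ + 1) by ring, pow_add, pow_mul]
    simp
  simp only [hpow]
  clear hpow
  induction m with
  | zero =>
    obtain rfl | rfl : σ = 0 ∨ σ = 1 := by omega
    · simp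
    · simp
  | succ m ih =>
    rw [show 2 * (m + 1) + σ = 2 * m + σ + 1 + 1 by ring, Finset.sum_range_succ,
      Finset.sum_range_succ, ih, Finset.sum_range_succ _ m, Finset.sum_range_succ _ m,
      show 2 * m + σ + σ + 1 = 2 * (m + σ) + 1 by ring,
      show 2 * m + σ + 1 + σ + 1 = 2 * (m + σ + 1) by ring, pow_succ, pow_mul, pow_mul]
    simp
    ring

theorem sum_pairs (e : ℕ → ℝ) (hσ : σ ≤ 1) (m : ℕ) :
    ∑ j ∈ range (2 * m + σ), e j =
      (∑ i ∈ range m, e (2 * i + σ + 1) + σ * e 0) + ∑ i ∈ range m, e (2 * i + σ) := by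
  induction m with
  | zero =>
    obtain rfl | rfl : σ = 0 ∨ σ = 1 := by omega
    · simp
    · simp
  | succ m ih =>
    rw [show 2 * (m + 1) + σ = 2 * m + σ + 1 + 1 by ring, Finset.sum_range_succ,
      Finset.sum_range_succ, ih, Finset.sum_range_succ _ m, Finset.sum_range_succ _ m]
    ring

/-- The positive part of the alternating sum over the nodes `k i` on one side. -/
noncomputable def nodesIn (h x : ℝ) (σ m : ℕ) (k : ℕ → ℕ) : ℝ :=
  ∑ i ∈ range m, wU x (k (2 * i + σ + 1) * h) + σ * wU x (k 0 * h)

/-- The negative part of the alternating sum over the nodes `k i` on one side. -/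
noncomputable def nodesOut (h x : ℝ) (σ m : ℕ) (k : ℕ → ℕ) : ℝ :=
  ∑ i ∈ range m, wU x (k (2 * i + σ) * h)

/-- Nodes on one side of `x`, with `k` counted from the endpoint. -/
structure Side (N : ℕ) (h x : ℝ) (L : ℕ) (k : ℕ → ℕ) : Prop where
  mono : ∀ i j, i < j → j < L → k i < k j
  le : ∀ i < L, k i ≤ N
  vis : ∀ i < L, x < cos (k i * h)

theorem sums_eq {c : ℕ → ℝ} (hσ : σ ≤ 1) (hτ : τ ≤ 1)
    (hn : 2 * m + σ + (2 * p + τ) = n + 1) {k' : ℕ → ℕ}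
    (hl : ∀ i < 2 * m + σ, x < cos (k i * h) ∧ c i = cos (k i * h))
    (hr : ∀ i < 2 * p + τ, -x < cos (k' i * h) ∧ c (n - i) = -cos (k' i * h)) :
    ∑ i ∈ range (n + 1), 1 / |x - c i| =
        (nodesIn h x σ m k + nodesIn h (-x) τ p k') +
          (nodesOut h x σ m k + nodesOut h (-x) τ p k') ∧
      |∑ j ∈ range (n + 1), (-1 : ℝ) ^ j / (x - c j)| =
        |(nodesIn h x σ m k + nodesIn h (-x) τ p k') -
          (nodesOut h x σ m k + nodesOut h (-x) τ p k')| := by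
  have split : ∀ f : ℕ → ℝ, ∑ i ∈ range (n + 1), f i =
      ∑ i ∈ range (2 * m + σ), f i + ∑ i ∈ range (2 * p + τ), f (n - i) := by
    intro f
    rw [← hn, Finset.sum_range_add, ← Finset.sum_range_reflect _ (2 * p + τ)]
    congr 1
    refine Finset.sum_congr rfl fun i hi => ?_
    have := mem_range.1 hi
    congr 1
    omega
  constructor
  · have e1 : ∑ i ∈ range (2 * m + σ), 1 / |x - c i| =
        ∑ i ∈ range (2 * m + σ), wU x (k i * h) := by
      refine Finset.sum_congr rfl fun i hi => ?_
      have h1 := hl i (mem_range.1 hi)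
      rw [h1.2, abs_of_neg (by linarith), wU, one_div, neg_sub]
    have e2 : ∑ i ∈ range (2 * p + τ), 1 / |x - c (n - i)| =
        ∑ i ∈ range (2 * p + τ), wU (-x) (k' i * h) := by
      refine Finset.sum_congr rfl fun i hi => ?_
      have h1 := hr i (mem_range.1 hi)
      rw [h1.2, abs_of_pos (by linarith), wU, one_div]
      congr 1; ring
    rw [split, e1, e2, sum_pairs _ hσ, sum_pairs _ hτ, nodesIn, nodesIn, nodesOut, nodesOut]
    ring
  · have e1 : ∑ j ∈ range (2 * m + σ), (-1 : ℝ) ^ j / (x - c j) =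
        (-1) ^ σ * (nodesIn h x σ m k - nodesOut h x σ m k) := by
      rw [nodesIn, nodesOut, ← alternating_sum_pairs (fun i => wU x (k i * h)) hσ m,
        Finset.mul_sum]
      refine Finset.sum_congr rfl fun i hi => ?_
      have h1 := hl i (mem_range.1 hi)
      have h2 : (-1 : ℝ) ^ σ * (-1) ^ (i + (2 * m + σ) + 1) = -(-1) ^ i := by
        rw [← pow_add, show σ + (i + (2 * m + σ) + 1) = 2 * (m + σ) + (i + 1) by ring,
          pow_add, pow_mul]
        simp [pow_succ (-1 : ℝ) i]
      rw [h1.2, ← mul_assoc, h2, wU, show x - cos (k i * h) = -(cos (k i * h) - x) by ring,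
        div_neg, div_eq_mul_inv]
      ring
    have e2 : ∑ j ∈ range (2 * p + τ), (-1 : ℝ) ^ (n - j) / (x - c (n - j)) =
        (-1) ^ σ * (nodesIn h (-x) τ p k' - nodesOut h (-x) τ p k') := by
      rw [nodesIn, nodesOut, ← alternating_sum_pairs (fun i => wU (-x) (k' i * h)) hτ p,
        Finset.mul_sum]
      refine Finset.sum_congr rfl fun i hi => ?_
      have hi := mem_range.1 hi
      have h1 := hr i hi
      have h2 : (-1 : ℝ) ^ σ * (-1) ^ (i + (2 * p + τ) + 1) = (-1) ^ (n - i) := by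
        rw [← pow_add]
        obtain ⟨d, hd⟩ : ∃ d, n = i + d := ⟨n - i, by omega⟩
        have : σ + (i + (2 * p + τ) + 1) + 2 * m = 2 * (i + 1) + d := by omega
        have h3 : (-1 : ℝ) ^ (σ + (i + (2 * p + τ) + 1) + 2 * m) = (-1) ^ d := by
          rw [this, pow_add, pow_mul]; simp
        rw [pow_add, pow_mul] at h3
        rw [hd, Nat.add_sub_cancel_left, ← h3]
        simp
      rw [h1.2, ← mul_assoc, h2, wU, div_eq_mul_inv]
      congr 2; ring
    rw [split, e1, e2, ← mul_add, abs_mul, abs_pow, abs_neg, abs_one, one_pow, one_mul]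
    congr 1; ring

theorem wU_mono {s t : ℝ} (hv : x < cos t) (h0 : 0 ≤ s) (hs : s ≤ t) (hb : t ≤ π) :
    wU x s ≤ wU x t := by
  have := cos_le_cos_of_nonneg_of_le_pi h0 hb hs
  exact inv_anti₀ (by linarith) (by linarith)

theorem wU_pos {t : ℝ} (hv : x < cos t) : 0 < wU x t := inv_pos.2 (by linarith)

theorem wU_le_mul_wU {s t : ℝ} (hx : -1 ≤ x) (hh : 0 ≤ h) (h0 : 0 ≤ s) (hs : s + h ≤ t)
    (hb : t ≤ π) (hv : x < cos t) : wU x s ≤ (1 - (1 - cos h) / 2) * wU x t := by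
  have h1 := one_sub_cos_le h0 hh (hs.trans hb)
  have h2 := cos_le_cos_of_nonneg_of_le_pi (by linarith) hb hs
  have h3 := cos_le_one s
  have h4 := cos_le_one h
  have h5 : 0 < cos t - x := by linarith
  have h6 : 0 < cos s - x := by linarith
  rw [wU, wU, ← div_eq_mul_inv, le_div_iff₀ h5, inv_mul_le_iff₀ h6]
  nlinarith

namespace Side
variable {L : ℕ}

theorem index_le (A : Side N h x L k) : ∀ i < L, i ≤ k i := by
  intro i
  induction i with
  | zero => intro _; omega
  | succ i ih =>
    intro hi
    have := ih (by omega)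
    have := A.mono i (i + 1) (by omega) hi
    omega

theorem mul_le_pi (A : Side N h x L k) (hh : 0 ≤ h) (hN : N * h ≤ π) {i : ℕ} (hi : i < L) :
    (k i : ℝ) * h ≤ π := by
  have : (k i : ℝ) ≤ N := by exact_mod_cast A.le i hi
  nlinarith

theorem succ_mul_le (A : Side N h x L k) (hh : 0 ≤ h) {i : ℕ} (hi : i + 1 < L) :
    (k i : ℝ) * h + h ≤ k (i + 1) * h := by
  have : (k i : ℝ) + 1 ≤ k (i + 1) := by exact_mod_cast A.mono i (i + 1) (by omega) hi
  nlinarith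

theorem lt_one (A : Side N h x L k) (hL : 1 ≤ L) : x < 1 :=
  (A.vis 0 hL).trans_le (cos_le_one _)

theorem cast_pred (A : Side N h x L k) {i : ℕ} (hi : i + 1 < L) :
    ((k (i + 1) - 1 : ℕ) : ℝ) = k (i + 1) - 1 := by
  have := A.index_le (i + 1) hi
  push_cast [Nat.cast_sub (show 1 ≤ k (i + 1) by omega)]
  rfl

theorem adm (A : Side N h x (2 * m + σ) k) (hh : 0 ≤ h) (hN : N * h ≤ π) (hm : 1 ≤ m + σ) :
    Adm h x σ m (fun i => ((k (2 * i + σ + 1) - 1 : ℕ) : ℝ) * h) where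
  start i hi := by
    have := A.index_le (2 * i + σ + 1) (by omega)
    have : (σ : ℝ) ≤ ((k (2 * i + σ + 1) - 1 : ℕ) : ℝ) := by exact_mod_cast (by omega)
    exact mul_le_mul_of_nonneg_right this hh
  gap i hi := by
    have h1 := A.mono (2 * i + σ + 1) (2 * i + σ + 2) (by omega) (by omega)
    have h2 := A.mono (2 * i + σ + 2) (2 * (i + 1) + σ + 1) (by omega) (by omega)
    have : ((k (2 * i + σ + 1) - 1 : ℕ) : ℝ) + 2 ≤ ((k (2 * (i + 1) + σ + 1) - 1 : ℕ) : ℝ) := by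
      have h3 := A.index_le (2 * i + σ + 1) (by omega)
      exact_mod_cast (by omega)
    nlinarith
  bound i hi := by
    have := A.mul_le_pi hh hN (i := 2 * i + σ + 1) (by omega)
    rw [A.cast_pred (by omega)]
    linarith
  vis i hi := by
    have := A.vis (2 * i + σ + 1) (by omega)
    rw [A.cast_pred (by omega), sub_mul, one_mul, sub_add_cancel]
    exact this
  lt_one := A.lt_one (by omega)

theorem innerSum_le (A : Side N h x (2 * m + σ) k) (hh : 0 ≤ h) (hN : N * h ≤ π)
    (hσ : σ ≤ 1) :
    innerSum h x σ m (fun i => ((k (2 * i + σ + 1) - 1 : ℕ) : ℝ) * h) ≤ nodesIn h x σ m k := by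
  unfold innerSum nodesIn
  refine add_le_add (Finset.sum_le_sum fun i hi => ?_) ?_
  · have := mem_range.1 hi
    beta_reduce
    rw [A.cast_pred (by omega), sub_mul, one_mul, sub_add_cancel]
  · obtain rfl | rfl : σ = 0 ∨ σ = 1 := by omega
    · simp
    · refine mul_le_mul_of_nonneg_left (wU_mono (A.vis 0 (by omega)) le_rfl (by positivity)
        (A.mul_le_pi hh hN (by omega))) (by simp)

theorem nodesOut_le_outerSum (A : Side N h x (2 * m + σ) k) (hh : 0 ≤ h) (hN : N * h ≤ π) :
    nodesOut h x σ m k ≤ outerSum x m (fun i => ((k (2 * i + σ + 1) - 1 : ℕ) : ℝ) * h) := by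
  refine Finset.sum_le_sum fun i hi => ?_
  have hi := mem_range.1 hi
  have h1 := A.mul_le_pi hh hN (i := 2 * i + σ + 1) (by omega)
  have h2 := A.succ_mul_le hh (i := 2 * i + σ) (by omega)
  have h3 : (0 : ℝ) ≤ (k (2 * i + σ) : ℝ) * h := by positivity
  beta_reduce
  rw [A.cast_pred (by omega), sub_mul, one_mul]
  exact wU_mono (cos_gt_of_le h1 (A.vis _ (by omega)) (by linarith) (by linarith)) h3
    (by linarith) (by linarith)

theorem nodesOut_le (A : Side N h x (2 * m + σ) k) (hh : 0 ≤ h) (hN : N * h ≤ π)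
    (hx : -1 ≤ x) (hσ : σ ≤ 1) :
    nodesOut h x σ m k ≤ (1 - (1 - cos h) / 2) * nodesIn h x σ m k := by
  have h4 := neg_one_le_cos h
  have h5 : 0 ≤ (σ : ℝ) * wU x (k 0 * h) := by
    obtain rfl | rfl : σ = 0 ∨ σ = 1 := by omega
    · simp
    · simpa using (wU_pos (A.vis 0 (by omega))).le
  have h6 : nodesOut h x σ m k ≤
      (1 - (1 - cos h) / 2) * ∑ i ∈ range m, wU x (k (2 * i + σ + 1) * h) := by
    rw [Finset.mul_sum]
    refine Finset.sum_le_sum fun i hi => ?_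
    have hi := mem_range.1 hi
    exact wU_le_mul_wU hx hh (by positivity) (A.succ_mul_le hh (by omega))
      (A.mul_le_pi hh hN (by omega)) (A.vis _ (by omega))
  have h7 : 0 ≤ (1 - (1 - cos h) / 2) * ((σ : ℝ) * wU x (k 0 * h)) :=
    mul_nonneg (by linarith) h5
  unfold nodesIn
  linarith [mul_add (1 - (1 - cos h) / 2) (∑ i ∈ range m, wU x (k (2 * i + σ + 1) * h))
    ((σ : ℝ) * wU x (k 0 * h))]

theorem nodesIn_pos (A : Side N h x (2 * m + σ) k) (hσ : σ ≤ 1) (hm : 1 ≤ m + σ) :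
    0 < nodesIn h x σ m k := by
  have h1 : ∀ i ∈ range m, 0 < wU x (k (2 * i + σ + 1) * h) := fun i hi =>
    wU_pos (A.vis _ (by have := mem_range.1 hi; omega))
  obtain rfl | rfl : σ = 0 ∨ σ = 1 := by omega
  · simpa [nodesIn] using Finset.sum_pos h1 ⟨0, by simp; omega⟩
  · have h2 := Finset.sum_nonneg fun i hi => (h1 i hi).le
    have h3 := wU_pos (A.vis 0 (by omega))
    unfold nodesIn
    push_cast
    linarith

theorem nodesOut_nonneg (A : Side N h x (2 * m + σ) k) : 0 ≤ nodesOut h x σ m k :=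
  Finset.sum_nonneg fun i hi => (wU_pos (A.vis _ (by have := mem_range.1 hi; omega))).le

theorem nodesOut_pos (A : Side N h x (2 * m + σ) k) (hm : 1 ≤ m) :
    0 < nodesOut h x σ m k :=
  Finset.sum_pos (fun i hi => wU_pos (A.vis _ (by have := mem_range.1 hi; omega)))
    ⟨0, by simp; omega⟩

end Side

end

section

variable {h x ρ : ℝ} {σ τ m p n N : ℕ} {k k' : ℕ → ℕ}

theorem flushGood_of_sides (hh : 0 < h) (hπ : h ≤ π / 3) (hN : N * h ≤ π) (hσ : σ ≤ 1)
    (hτ : τ ≤ 1) (hm : 1 ≤ m + σ) (hp : 1 ≤ p + τ) (hmp : 1 ≤ m + p)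
    (A : Side N h x (2 * m + σ) k) (B : Side N h (-x) (2 * p + τ) k') :
    FlushGood ((nodesOut h x σ m k + nodesOut h (-x) τ p k') /
      (nodesIn h x σ m k + nodesIn h (-x) τ p k')) h (2 * m + σ + (2 * p + τ)) := by
  have hI := add_pos (A.nodesIn_pos hσ hm) (B.nodesIn_pos hτ hp)
  have hO : 0 < nodesOut h x σ m k + nodesOut h (-x) τ p k' := by
    obtain h1 | h1 : 1 ≤ m ∨ 1 ≤ p := by omega
    · linarith [A.nodesOut_pos h1, B.nodesOut_nonneg]
    · linarith [B.nodesOut_pos h1, A.nodesOut_nonneg]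
  refine flushGood_of_adm (div_pos hO hI) hh hπ hσ hτ hm hp hmp _ _ (A.adm hh.le hN hm)
    (B.adm hh.le hN hp) ?_
  rw [sideE_eq, sideE_eq]
  have h1 := add_le_add (A.innerSum_le hh.le hN hσ) (B.innerSum_le hh.le hN hτ)
  have h2 := mul_le_mul_of_nonneg_left h1 (div_pos hO hI).le
  rw [div_mul_cancel₀ _ hI.ne'] at h2
  linarith [A.nodesOut_le_outerSum hh.le hN, B.nodesOut_le_outerSum hh.le hN]

theorem nodesIn_id : nodesIn h x σ m id = innerSum h x σ m (flush h σ) := by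
  unfold nodesIn innerSum flush
  congr 1
  · refine Finset.sum_congr rfl fun i _ => ?_
    congr 1; push_cast [id]; ring
  · simp

theorem nodesOut_id : nodesOut h x σ m id = outerSum x m (flush h σ) := by
  unfold nodesOut outerSum flush
  refine Finset.sum_congr rfl fun i _ => ?_
  congr 1; push_cast [id]; ring

theorem side_id (A : Adm h x σ m (flush h σ)) (hh : 0 < h) (hm : 2 * m + σ ≤ N)
    (hσ : σ ≤ 1) : Side N h x (2 * m + σ) id where
  mono i j hij _ := hij
  le i hi := by simp; omega
  vis i hi := by
    rcases Nat.eq_zero_or_pos m with rfl | hm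
    · obtain rfl : i = 0 := by omega
      simpa using A.lt_one
    · refine cos_gt_of_le (A.bound (m - 1) (by omega)) (A.vis (m - 1) (by omega))
        (by positivity) ?_
      have : (i : ℝ) ≤ (σ : ℝ) + 2 * (m - 1 : ℕ) + 1 := by exact_mod_cast (by omega)
      unfold flush
      simp only [id]
      nlinarith

theorem ratio_le {I O I₁ O₁ : ℝ} (hI : 0 < I) (hO : O < I) (hO₁ : O₁ < I₁)
    (hr : O / I * I₁ ≤ O₁) : (I + O) / |I - O| ≤ (I₁ + O₁) / |I₁ - O₁| := by
  rw [abs_of_pos (by linarith), abs_of_pos (by linarith), div_le_div_iff₀ (by linarith)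
    (by linarith)]
  have : O * I₁ ≤ O₁ * I := by
    rw [div_mul_eq_mul_div, div_le_iff₀ hI] at hr
    exact hr
  nlinarith

theorem ratio_le_of_le_mul {I O κ : ℝ} (hI : 0 < I) (hκ : 0 < κ) (hO : O ≤ (1 - κ) * I) :
    (I + O) / |I - O| ≤ 2 / κ := by
  have h1 : 0 < κ * I := by positivity
  rw [abs_of_pos (by linarith), div_le_div_iff₀ (by linarith) hκ]
  nlinarith

/-- The index of the `i`-th node. -/
def nodeIndex (S : Finset ℕ) (i : ℕ) : ℕ := (S.sort (· ≤ ·)).getD i 0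

theorem chebNode_eq (S : Finset ℕ) (i : ℕ) :
    chebNode N S i = cos (nodeIndex S i * (π / N)) := by
  rw [chebNode, nodeIndex, mul_div_assoc]

theorem nodeIndex_eq {S : Finset ℕ} (hS : S.card = n + 1) (i : Fin (n + 1)) :
    nodeIndex S i = S.orderEmbOfFin hS i := by
  have : (i : ℕ) < (S.sort (· ≤ ·)).length := by
    rw [Finset.length_sort, hS]; exact i.2
  rw [nodeIndex, Finset.orderEmbOfFin_apply, List.getD_eq_getElem _ _ this]
  rfl

theorem nodeIndex_lt {S : Finset ℕ} (hS : S.card = n + 1) {i j : ℕ} (hij : i < j)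
    (hj : j ≤ n) : nodeIndex S i < nodeIndex S j := by
  have h1 := nodeIndex_eq hS ⟨i, by omega⟩
  have h2 := nodeIndex_eq hS ⟨j, by omega⟩
  simp only at h1 h2
  rw [h1, h2]
  exact (S.orderEmbOfFin hS).strictMono hij

theorem nodeIndex_le {S : Finset ℕ} (hS : S.card = n + 1) (hN : S ⊆ range (N + 1)) {i : ℕ}
    (hi : i ≤ n) : nodeIndex S i ≤ N := by
  have h1 := nodeIndex_eq hS ⟨i, by omega⟩
  have h2 := mem_range.1 (hN (S.orderEmbOfFin_mem hS ⟨i, by omega⟩))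
  simp only at h1
  omega

theorem nodeIndex_eq_of_strictMono {S : Finset ℕ} (hS : S.card = n + 1) (f : ℕ → ℕ)
    (hf : ∀ i ≤ n, f i ∈ S) (hm : StrictMono f) {i : ℕ} (hi : i ≤ n) : nodeIndex S i = f i := by
  have h1 := nodeIndex_eq hS ⟨i, by omega⟩
  have h2 := Finset.orderEmbOfFin_unique hS (f := fun j : Fin (n + 1) => f j)
    (fun j => hf j (by omega)) (fun a b hab => hm hab)
  rw [← h2] at h1
  exact h1

theorem card_gap {s : ℕ} (k : ℕ) (hk : k + s ≤ N) :
    (range (k + 1) ∪ Icc (k + s + 1) N).card = N - s + 1 := by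
  rw [Finset.card_union_of_disjoint, card_range, Nat.card_Icc]
  · omega
  · rw [Finset.disjoint_left]
    intro a ha hb
    have := mem_range.1 ha
    have := mem_Icc.1 hb
    omega

theorem gap_subset {s : ℕ} (k : ℕ) (hk : k + s ≤ N) :
    range (k + 1) ∪ Icc (k + s + 1) N ⊆ range (N + 1) := by
  intro a ha
  simp only [mem_union, mem_range, mem_Icc] at ha ⊢
  omega

theorem nodeIndex_gap {s : ℕ} (k : ℕ) (hk : k + s ≤ N) {i : ℕ} (hi : i ≤ N - s) :
    nodeIndex (range (k + 1) ∪ Icc (k + s + 1) N) i = if i ≤ k then i else i + s := by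
  refine nodeIndex_eq_of_strictMono (card_gap k hk) (fun i => if i ≤ k then i else i + s)
    (fun i hi => ?_) (fun a b hab => ?_) hi
  · simp only [mem_union, mem_range, mem_Icc]
    split_ifs <;> omega
  · simp only
    split_ifs <;> omega

theorem cos_reflect (hN : 1 ≤ N) {j : ℕ} (hj : j ≤ N) :
    cos (((N - j : ℕ) : ℝ) * (π / N)) = -cos (j * (π / N)) := by
  have : (N : ℝ) ≠ 0 := by positivity
  rw [← cos_pi_sub, Nat.cast_sub hj]
  congr 1
  field_simp

theorem exists_sides {S : Finset ℕ} (hS : S.card = n + 1) (hSN : S ⊆ range (N + 1))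
    (hN : 1 ≤ N) (h0 : x < chebNode N S 0) (hn : chebNode N S n < x)
    (hne : ∀ i ≤ n, x ≠ chebNode N S i) :
    ∃ σ τ m p : ℕ, σ ≤ 1 ∧ τ ≤ 1 ∧ 2 * m + σ + (2 * p + τ) = n + 1 ∧ 1 ≤ m + σ ∧ 1 ≤ p + τ ∧
      Side N (π / N) x (2 * m + σ) (nodeIndex S) ∧
      Side N (π / N) (-x) (2 * p + τ) (fun i => N - nodeIndex S (n - i)) := by
  classical
  have hex : ∃ i, chebNode N S i < x := ⟨n, hn⟩
  obtain ⟨L, hL, hmin⟩ : ∃ L, chebNode N S L < x ∧ ∀ i < L, ¬ chebNode N S i < x :=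
    ⟨Nat.find hex, Nat.find_spec hex, fun i => Nat.find_min hex⟩
  have hLn : L ≤ n := by
    by_contra hc
    exact hmin n (by omega) hn
  have hL1 : 1 ≤ L := by
    by_contra hc
    obtain rfl : L = 0 := by omega
    exact lt_asymm hL h0
  have hanti : ∀ i j, i ≤ j → j ≤ n → chebNode N S j ≤ chebNode N S i := by
    intro i j hij hj
    have h1 : nodeIndex S i ≤ nodeIndex S j := by
      obtain rfl | hij := hij.eq_or_lt
      · rfl
      · exact (nodeIndex_lt hS hij hj).le
    have h2 : (nodeIndex S j : ℝ) ≤ N := by exact_mod_cast nodeIndex_le hS hSN hj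
    have h1 : (nodeIndex S i : ℝ) ≤ nodeIndex S j := by exact_mod_cast h1
    have h3 : (0 : ℝ) < N := by exact_mod_cast hN
    rw [chebNode_eq, chebNode_eq]
    refine cos_le_cos_of_nonneg_of_le_pi (by positivity) ?_
      (mul_le_mul_of_nonneg_right h1 (by positivity))
    rw [← mul_div_assoc, div_le_iff₀ h3]
    nlinarith [pi_pos]
  refine ⟨L % 2, (n + 1 - L) % 2, L / 2, (n + 1 - L) / 2, by omega, by omega, by omega,
    by omega, by omega, ?_, ?_⟩
  · rw [Nat.div_add_mod]
    refine ⟨fun i j hij hj => nodeIndex_lt hS hij (by omega),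
      fun i hi => nodeIndex_le hS hSN (by omega), fun i hi => ?_⟩
    rw [← chebNode_eq]
    exact lt_of_le_of_ne (not_lt.1 (hmin i hi)) (hne i (by omega))
  · rw [Nat.div_add_mod]
    refine ⟨fun i j hij hj => ?_, fun i hi => Nat.sub_le _ _, fun i hi => ?_⟩
    · have h1 := nodeIndex_lt hS (show n - j < n - i by omega) (by omega)
      have h2 := nodeIndex_le hS hSN (show n - i ≤ n by omega)
      omega
    · rw [cos_reflect hN (nodeIndex_le hS hSN (by omega)), ← chebNode_eq]
      exact neg_lt_neg ((hanti L (n - i) (by omega) (by omega)).trans_lt hL)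

/-- The Lebesgue function of Berrut's interpolant at the nodes indexed by `S`. -/
noncomputable def lebesgueFun (N n : ℕ) (S : Finset ℕ) (x : ℝ) : ℝ :=
  (∑ i ∈ range (n + 1), 1 / |x - chebNode N S i|) /
    |∑ j ∈ range (n + 1), (-1 : ℝ) ^ j / (x - chebNode N S j)|

theorem lebesgueFun_eq {S : Finset ℕ} (hS : S.card = n + 1) (hSN : S ⊆ range (N + 1))
    (hN : 1 ≤ N) (hσ : σ ≤ 1) (hτ : τ ≤ 1) (hn : 2 * m + σ + (2 * p + τ) = n + 1)
    (hl : ∀ i < 2 * m + σ, k i = nodeIndex S i)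
    (hr : ∀ i < 2 * p + τ, k' i = N - nodeIndex S (n - i))
    (A : Side N (π / N) x (2 * m + σ) k) (B : Side N (π / N) (-x) (2 * p + τ) k') :
    lebesgueFun N n S x =
      ((nodesIn (π / N) x σ m k + nodesIn (π / N) (-x) τ p k') +
          (nodesOut (π / N) x σ m k + nodesOut (π / N) (-x) τ p k')) /
        |(nodesIn (π / N) x σ m k + nodesIn (π / N) (-x) τ p k') -
          (nodesOut (π / N) x σ m k + nodesOut (π / N) (-x) τ p k')| := by
  have := sums_eq (c := chebNode N S) hσ hτ hn
    (fun i hi => ⟨A.vis i hi, by rw [chebNode_eq, hl i hi]⟩)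
    (fun i hi => ⟨B.vis i hi, by
      rw [chebNode_eq, hr i hi, cos_reflect hN (nodeIndex_le hS hSN (by omega)), neg_neg]⟩)
  rw [lebesgueFun, this.1, this.2]

end

section

variable {h x ρ : ℝ} {σ τ m p n N s : ℕ} {k k' : ℕ → ℕ}

/-- The points over which the supremum in the Lebesgue constant is taken. -/
def NodeFree (N n : ℕ) (S : Finset ℕ) (x : ℝ) : Prop :=
  chebNode N S n < x ∧ x < chebNode N S 0 ∧ ∀ i ≤ n, x ≠ chebNode N S i

theorem berrutLebesgueConst_eq (S : Finset ℕ) :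
    berrutLebesgueConst N n S = sSup {L | ∃ x, NodeFree N n S x ∧ L = lebesgueFun N n S x} := by
  simp only [berrutLebesgueConst, NodeFree, lebesgueFun, and_assoc]

theorem lebesgueFun_nonneg (S : Finset ℕ) : 0 ≤ lebesgueFun N n S x :=
  div_nonneg (Finset.sum_nonneg fun _ _ => by positivity) (abs_nonneg _)

theorem berrutLebesgueConst_nonneg (S : Finset ℕ) : 0 ≤ berrutLebesgueConst N n S := by
  rw [berrutLebesgueConst_eq]
  refine Real.sSup_nonneg ?_
  rintro _ ⟨x, -, rfl⟩
  exact lebesgueFun_nonneg S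

theorem nodesOut_add_le (hh : 0 ≤ h) (hN : N * h ≤ π) (hσ : σ ≤ 1) (hτ : τ ≤ 1)
    (hm : 1 ≤ m + σ) (hp : 1 ≤ p + τ) (A : Side N h x (2 * m + σ) k)
    (B : Side N h (-x) (2 * p + τ) k') :
    nodesOut h x σ m k + nodesOut h (-x) τ p k' ≤
      (1 - (1 - cos h) / 2) * (nodesIn h x σ m k + nodesIn h (-x) τ p k') := by
  have h1 := A.lt_one (by omega)
  have h2 := B.lt_one (by omega)
  linarith [A.nodesOut_le hh hN (by linarith) hσ, B.nodesOut_le hh hN (by linarith) hτ]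

theorem bddAbove_lebesgueFun {S : Finset ℕ} (hS : S.card = n + 1) (hSN : S ⊆ range (N + 1))
    (hN : 1 ≤ N) : BddAbove {L | ∃ x, NodeFree N n S x ∧ L = lebesgueFun N n S x} := by
  refine ⟨2 / ((1 - cos (π / N)) / 2), ?_⟩
  rintro _ ⟨x, ⟨hn, h0, hne⟩, rfl⟩
  obtain ⟨σ, τ, m, p, hσ, hτ, hT, hm, hp, A, B⟩ := exists_sides hS hSN hN h0 hn hne
  have hN' : (1 : ℝ) ≤ N := by exact_mod_cast hN
  have hπ : N * (π / N) = π := by field_simp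
  have hh : 0 < π / N := by positivity
  rw [lebesgueFun_eq hS hSN hN hσ hτ hT (fun _ _ => rfl) (fun _ _ => rfl) A B]
  refine ratio_le_of_le_mul (add_pos (A.nodesIn_pos hσ hm) (B.nodesIn_pos hτ hp)) ?_
    (nodesOut_add_le hh.le hπ.le hσ hτ hm hp A B)
  exact half_pos (one_sub_cos_pos hh (by nlinarith))

theorem exists_gap_le (hs : 1 ≤ s) (hs' : s + 2 ≤ N) {S : Finset ℕ}
    (hS : S.card = N - s + 1) (hSN : S ⊆ range (N + 1)) (hx : NodeFree N (N - s) S x) :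
    ∃ k < N - s, ∃ y, NodeFree N (N - s) (range (k + 1) ∪ Icc (k + s + 1) N) y ∧
      lebesgueFun N (N - s) S x ≤
        lebesgueFun N (N - s) (range (k + 1) ∪ Icc (k + s + 1) N) y := by
  obtain ⟨hn, h0, hne⟩ := hx
  have hN : 1 ≤ N := by omega
  have hN' : (3 : ℝ) ≤ N := by exact_mod_cast (show 3 ≤ N by omega)
  have hh : 0 < π / N := by positivity
  have hNπ : N * (π / N) = π := by field_simp
  have hπ3 : π / N ≤ π / 3 := div_le_div_of_nonneg_left pi_pos.le (by norm_num) hN'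
  have hκ : 0 < (1 - cos (π / N)) / 2 :=
    half_pos (one_sub_cos_pos hh (by linarith [pi_pos]))
  obtain ⟨σ, τ, m, p, hσ, hτ, hT, hm, hp, A, B⟩ := exists_sides hS hSN hN h0 hn hne
  have hI := add_pos (A.nodesIn_pos hσ hm) (B.nodesIn_pos hτ hp)
  have hO := nodesOut_add_le hh.le hNπ.le hσ hτ hm hp A B
  have hF := flushGood_of_sides hh hπ3 hNπ.le hσ hτ hm hp (by omega) A B
  rw [lebesgueFun_eq hS hSN hN hσ hτ hT (fun _ _ => rfl) (fun _ _ => rfl) A B]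
  obtain ⟨σ₁, τ₁, m₁, p₁, y, hσ₁, hτ₁, hT₁, hm₁, hp₁, A₁, B₁, hE⟩ := hF
  rw [hT] at hT₁
  have A₂ := side_id (N := N) A₁ hh (by omega) hσ₁
  have B₂ := side_id (N := N) B₁ hh (by omega) hτ₁
  obtain ⟨L, hL⟩ : ∃ L, 2 * m₁ + σ₁ = L + 1 := ⟨2 * m₁ + σ₁ - 1, by omega⟩
  have hLs : L + s ≤ N := by omega
  have hl : ∀ i < 2 * m₁ + σ₁, id i = nodeIndex (range (L + 1) ∪ Icc (L + s + 1) N) i := by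
    intro i hi
    rw [nodeIndex_gap L hLs (by omega), if_pos (by omega), id]
  have hr : ∀ i < 2 * p₁ + τ₁,
      id i = N - nodeIndex (range (L + 1) ∪ Icc (L + s + 1) N) (N - s - i) := by
    intro i hi
    rw [nodeIndex_gap L hLs (by omega), if_neg (by omega), id]
    omega
  have hI₁ := add_pos (A₂.nodesIn_pos hσ₁ hm₁) (B₂.nodesIn_pos hτ₁ hp₁)
  have hO₁ := nodesOut_add_le hh.le hNπ.le hσ₁ hτ₁ hm₁ hp₁ A₂ B₂
  have hSk := gap_subset L hLs
  refine ⟨L, by omega, y, ⟨?_, ?_, fun i hi => ?_⟩, ?_⟩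
  · rw [chebNode_eq, nodeIndex_gap L hLs le_rfl, if_neg (by omega),
      Nat.sub_add_cancel (by omega), hNπ, cos_pi]
    linarith [B₁.lt_one]
  · rw [chebNode_eq, nodeIndex_gap L hLs (by omega), if_pos (by omega)]
    simpa using A₁.lt_one
  · rw [chebNode_eq]
    by_cases hiL : i < 2 * m₁ + σ₁
    · rw [← hl i hiL]
      exact (A₂.vis i hiL).ne
    · have h1 := B₂.vis (N - s - i) (by omega)
      rw [hr (N - s - i) (by omega), cos_reflect hN (nodeIndex_le (card_gap L hLs) hSk
        (Nat.sub_le _ _)), show N - s - (N - s - i) = i by omega] at h1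
      exact (neg_lt_neg_iff.1 h1).ne'
  · rw [lebesgueFun_eq (card_gap L hLs) hSk hN hσ₁ hτ₁ hT₁ hl hr A₂ B₂]
    refine ratio_le hI (by nlinarith) (by nlinarith) ?_
    rw [sideE_eq, sideE_eq] at hE
    rw [nodesIn_id, nodesIn_id, nodesOut_id, nodesOut_id]
    linarith

end

end Berrut

/-- The Lebesgue constant of Berrut's interpolant over `(n+1)`-element subsets of the
Chebyshev points of the second kind is maximized when the `s` removed points are
consecutive. -/
theorem berrut_lebesgue_worst_case_consecutive
    (N s : ℕ) (hs1 : 1 ≤ s) (hs2 : s + 2 ≤ N) (n : ℕ) (hn : n = N - s) :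
    ∀ S : Finset ℕ, S ⊆ Finset.range (N + 1) → S.card = n + 1 →
      ∃ kbar : ℕ, kbar ≤ N - s - 1 ∧
        berrutLebesgueConst N n S ≤
          berrutLebesgueConst N n (Finset.range (kbar + 1) ∪ Finset.Icc (kbar + s + 1) N) := by
  intro S hSN hS
  subst hn
  obtain ⟨kbar, hk, hmax⟩ := Finset.exists_max_image (range (N - s))
    (fun k => berrutLebesgueConst N (N - s) (range (k + 1) ∪ Icc (k + s + 1) N))
    ⟨0, by simp; omega⟩
  have hk := mem_range.1 hk
  refine ⟨kbar, by omega, ?_⟩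
  rw [Berrut.berrutLebesgueConst_eq S]
  refine Real.sSup_le ?_ (Berrut.berrutLebesgueConst_nonneg _)
  rintro _ ⟨x, hx, rfl⟩
  obtain ⟨k, hkn, y, hy, hle⟩ := Berrut.exists_gap_le hs1 hs2 hS hSN hx
  refine (hle.trans ?_).trans (hmax k (mem_range.2 hkn))
  rw [Berrut.berrutLebesgueConst_eq]
  exact le_csSup (Berrut.bddAbove_lebesgueFun (Berrut.card_gap k (by omega))
    (Berrut.gap_subset k (by omega)) (by omega)) ⟨y, hy, rfl⟩
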